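/- arXiv:1203.2238 — 5 statements merged into one kernel-verified Lean document; each statement's English description precedes it below -/
import Mathlib

section
/- Equality case of the mixed anisoperimetric inequality: for anisotropy functions σ, μ and a closed curve Γ, equality L_σ(Γ)·L_μ(Γ) = (2√(|W_σ|·|W_μ|) + L_σ(∂W_μ))·A(Γ) holds if and only if Γ is homothetically similar to the boundary ∂W_{σ̃} of the Wulff shape of the mixed anisotropy σ̃ = √|W_μ|·σ + √|W_σ|·μ, i.e. there exist c > 0 and v ∈ ℝ² such that the image of x equals {c·w_{σ̃}(ν) + v : ν ∈ ℝ}, where w_{σ̃}(ν) = −σ̃(ν)(−sin ν, cos ν) + σ̃'(ν)(cos ν, sin ν). -/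
open Real


/-- The Wulff area `|W_σ| = (1/2)∫₀^{2π} σ(ν)(σ(ν)+σ''(ν)) dν`. -/
noncomputable def wulffArea (σ : ℝ → ℝ) : ℝ :=
  (1 / 2) * ∫ ν in (0:ℝ)..(2 * π), σ ν * (σ ν + deriv (deriv σ) ν)

/-- The mixed Wulff energy `L_σ(∂W_μ) = ∫₀^{2π} σ(ν)(μ(ν)+μ''(ν)) dν`. -/
noncomputable def mixedWulffEnergy (σ μ : ℝ → ℝ) : ℝ :=
  ∫ ν in (0:ℝ)..(2 * π), σ ν * (μ ν + deriv (deriv μ) ν)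

/-- The standard parameterization of the Wulff boundary `∂W_σ`:
`w_σ(ν) = −σ(ν)(−sin ν, cos ν) + σ'(ν)(cos ν, sin ν)`. -/
noncomputable def wulffPoint (σ : ℝ → ℝ) (t : ℝ) : ℝ × ℝ :=
  (-σ t) • ((-Real.sin t, Real.cos t) : ℝ × ℝ) +
    (deriv σ t) • ((Real.cos t, Real.sin t) : ℝ × ℝ)




/-- support-function data -/
structure SupD (φ p q : ℝ → ℝ) : Prop where
  dφ : ∀ t, HasDerivAt φ (p t) t
  dp : ∀ t, HasDerivAt p (q t) t
  cq : Continuous q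
  perφ : ∀ t, φ (t + 2 * π) = φ t
  perp : ∀ t, p (t + 2 * π) = p t
  perq : ∀ t, q (t + 2 * π) = q t
  conv : ∀ t, 0 < φ t + q t

/-- closed curve data -/
structure CrvD (X Y g ν : ℝ → ℝ) : Prop where
  dX : ∀ u, HasDerivAt X (g u * cos (ν u)) u
  dY : ∀ u, HasDerivAt Y (g u * sin (ν u)) u
  perX : ∀ u, X (u + 1) = X u
  perY : ∀ u, Y (u + 1) = Y u
  cg : Continuous g
  cν : Continuous ν
  gpos : ∀ u, 0 < g u
  perν : ∀ u, ν (u + 1) = ν u + 2 * π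

noncomputable def w1 (φ p : ℝ → ℝ) (t : ℝ) : ℝ := φ t * sin t + p t * cos t
noncomputable def w2 (φ p : ℝ → ℝ) (t : ℝ) : ℝ := - φ t * cos t + p t * sin t

namespace SupD
variable {φ p q : ℝ → ℝ}

lemma cφ (h : SupD φ p q) : Continuous φ :=
  continuous_iff_continuousAt.2 fun t => (h.dφ t).continuousAt
lemma cp (h : SupD φ p q) : Continuous p :=
  continuous_iff_continuousAt.2 fun t => (h.dp t).continuousAt

lemma dw1 (h : SupD φ p q) (t : ℝ) : HasDerivAt (w1 φ p) ((φ t + q t) * cos t) t := by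
  have := ((h.dφ t).mul (hasDerivAt_sin t)).add ((h.dp t).mul (hasDerivAt_cos t))
  refine this.congr_deriv ?_
  ring

lemma dw2 (h : SupD φ p q) (t : ℝ) : HasDerivAt (w2 φ p) ((φ t + q t) * sin t) t := by
  have := ((h.dφ t).neg.mul (hasDerivAt_cos t)).add ((h.dp t).mul (hasDerivAt_sin t))
  refine this.congr_deriv ?_
  simp only [Pi.neg_apply]
  ring

lemma cw1 (h : SupD φ p q) : Continuous (w1 φ p) :=
  continuous_iff_continuousAt.2 fun t => (h.dw1 t).continuousAt
lemma cw2 (h : SupD φ p q) : Continuous (w2 φ p) :=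
  continuous_iff_continuousAt.2 fun t => (h.dw2 t).continuousAt

lemma perw1 (h : SupD φ p q) (t : ℝ) : w1 φ p (t + 2 * π) = w1 φ p t := by
  simp [w1, h.perφ, h.perp]
lemma perw2 (h : SupD φ p q) (t : ℝ) : w2 φ p (t + 2 * π) = w2 φ p t := by
  simp [w2, h.perφ, h.perp]

/-- support inequality with equality, near range -/
lemma supp_aux (h : SupD φ p q) (s t : ℝ) (h1 : s - π ≤ t) (h2 : t ≤ s + π) :
    w1 φ p t * sin s - w2 φ p t * cos s ≤ φ s ∧
    (w1 φ p t * sin s - w2 φ p t * cos s = φ s → t = s) := by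
  set F : ℝ → ℝ := fun t => w1 φ p t * sin s - w2 φ p t * cos s with hF
  have dF : ∀ t, HasDerivAt F ((φ t + q t) * sin (s - t)) t := by
    intro t
    refine (((h.dw1 t).mul_const _).sub ((h.dw2 t).mul_const _)).congr_deriv ?_
    rw [sin_sub]; ring
  have cF : Continuous F := continuous_iff_continuousAt.2 fun t => (dF t).continuousAt
  have hFs : F s = φ s := by
    simp only [hF, w1, w2]
    linear_combination (φ s) * (sin_sq_add_cos_sq s)
  have hmono : StrictMonoOn F (Set.Icc (s - π) s) := by
    refine strictMonoOn_of_deriv_pos (convex_Icc _ _) cF.continuousOn ?_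
    intro t ht
    rw [interior_Icc] at ht
    rw [(dF t).deriv]
    exact mul_pos (h.conv t) (sin_pos_of_pos_of_lt_pi (by linarith [ht.2]) (by linarith [ht.1]))
  have hanti : StrictAntiOn F (Set.Icc s (s + π)) := by
    refine strictAntiOn_of_deriv_neg (convex_Icc _ _) cF.continuousOn ?_
    intro t ht
    rw [interior_Icc] at ht
    rw [(dF t).deriv]
    exact mul_neg_of_pos_of_neg (h.conv t)
      (sin_neg_of_neg_of_neg_pi_lt (by linarith [ht.1]) (by linarith [ht.2]))
  change F t ≤ φ s ∧ (F t = φ s → t = s)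
  rw [← hFs]
  have hpi := pi_pos
  rcases lt_trichotomy t s with hlt | heq | hgt
  · have := hmono ⟨h1, hlt.le⟩ ⟨by linarith, le_rfl⟩ hlt
    exact ⟨this.le, fun e => absurd e this.ne⟩
  · subst heq; simp
  · have := hanti ⟨le_rfl, by linarith⟩ ⟨hgt.le, h2⟩ hgt
    exact ⟨this.le, fun e => absurd e this.ne⟩

lemma supp (h : SupD φ p q) (s t : ℝ) :
    w1 φ p t * sin s - w2 φ p t * cos s ≤ φ s ∧
    (w1 φ p t * sin s - w2 φ p t * cos s = φ s → w1 φ p t = w1 φ p s ∧ w2 φ p t = w2 φ p s) := by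
  have P1 : Function.Periodic (w1 φ p) (2 * π) := h.perw1
  have P2 : Function.Periodic (w2 φ p) (2 * π) := h.perw2
  have e1 := P1.sub_zsmul_eq (x := t) (toIcoDiv two_pi_pos (s - π) t)
  have e2 := P2.sub_zsmul_eq (x := t) (toIcoDiv two_pi_pos (s - π) t)
  have hm := sub_toIcoDiv_zsmul_mem_Ico two_pi_pos (s - π) t
  set t' := t - toIcoDiv two_pi_pos (s - π) t • (2 * π) with ht'
  have := h.supp_aux s t' hm.1 (by linarith [hm.2])
  rw [e1, e2] at this
  refine ⟨this.1, fun e => ?_⟩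
  have := this.2 e
  rw [← e1, ← e2, this]; simp

lemma area_int (h : SupD φ p q) :
    ∫ t in (-(π/2))..(3*π/2), w2 φ p t * ((φ t + q t) * cos t) =
      - (1/2) * ∫ t in (0:ℝ)..(2*π), φ t * (φ t + q t) := by
  have c1 := h.cw1; have c2 := h.cw2; have cφ := h.cφ; have cp := h.cp; have cq := h.cq
  have hper : Function.Periodic (fun t => φ t * (φ t + q t)) (2 * π) := by
    intro t; simp [h.perφ, h.perq]
  have e := hper.intervalIntegral_add_eq (-(π/2)) 0
  rw [show -(π/2) + 2 * π = 3*π/2 by ring, zero_add] at e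
  rw [← e]
  have f : ∫ t in (-(π/2))..(3*π/2), (w1 φ p t * ((φ t + q t) * sin t)
      + w2 φ p t * ((φ t + q t) * cos t)) = 0 := by
    rw [intervalIntegral.integral_eq_sub_of_hasDerivAt (f := fun t => w1 φ p t * w2 φ p t)]
    · rw [show 3*π/2 = -(π/2) + 2 * π by ring, h.perw1, h.perw2]; ring
    · intro t _
      refine ((h.dw1 t).mul (h.dw2 t)).congr_deriv ?_
      ring
    · exact Continuous.intervalIntegrable (by fun_prop) _ _
  have g : ∫ t in (-(π/2))..(3*π/2), φ t * (φ t + q t) =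
      ∫ t in (-(π/2))..(3*π/2), ((w1 φ p t * ((φ t + q t) * sin t)
      + w2 φ p t * ((φ t + q t) * cos t)) - 2 * (w2 φ p t * ((φ t + q t) * cos t))) := by
    congr 1; ext t
    simp only [w1, w2]
    linear_combination -(φ t * (φ t + q t)) * (sin_sq_add_cos_sq t)
  rw [g, intervalIntegral.integral_sub, f, intervalIntegral.integral_const_mul]
  · ring
  · exact Continuous.intervalIntegrable (by fun_prop) _ _
  · exact Continuous.intervalIntegrable (by fun_prop) _ _

end SupD

lemma exists_inv {f : ℝ → ℝ} {a b : ℝ} (hab : a ≤ b) (hf : Continuous f)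
    (hm : StrictMonoOn f (Set.Icc a b)) :
    ∃ h : ℝ → ℝ, Continuous h ∧ (∀ s ∈ Set.Icc (f a) (f b), f (h s) = s) ∧
      ∀ t ∈ Set.Icc a b, h (f t) = t := by
  set k : ℝ → ℝ := fun t => max a (min b t) with hk
  have kmem : ∀ t, k t ∈ Set.Icc a b := fun t => ⟨le_max_left _ _, max_le hab (min_le_left _ _)⟩
  have kid : ∀ t ∈ Set.Icc a b, k t = t := by
    intro t ht; simp [hk, ht.1, ht.2]
  set F : ℝ → ℝ := fun t => f (k t) + (t - k t) with hF
  have ck : Continuous k := by fun_prop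
  have cF : Continuous F := by fun_prop
  have kmono : Monotone k := by
    intro s t hst; simp only [hk]; gcongr
  have ksub : ∀ s t, s ≤ t → k t - k s ≤ t - s := by
    intro s t hst
    simp only [hk]
    rcases max_cases a (min b t) with h | h <;> rcases max_cases a (min b s) with h' | h' <;>
    rcases min_cases b t with h'' | h'' <;> rcases min_cases b s with h3 | h3 <;> linarith
  have hFm : StrictMono F := by
    intro s t hst
    simp only [hF]
    rcases (kmono hst.le).lt_or_eq with h | h
    · have := hm (kmem s) (kmem t) h
      have := ksub s t hst.le
      linarith
    · rw [h]; linarith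
  have hFs : Function.Surjective F := by
    apply cF.surjective
    · refine Filter.tendsto_atTop_mono' _ ?_ (Filter.tendsto_atTop_add_const_right _ (f b - b) Filter.tendsto_id)
      filter_upwards [Filter.eventually_ge_atTop b] with t ht
      simp [hF, hk, ht, hab]
      linarith
    · refine Filter.tendsto_atBot_mono' _ ?_ (Filter.tendsto_atBot_add_const_right _ (f a - a) Filter.tendsto_id)
      filter_upwards [Filter.eventually_le_atBot a] with t ht
      simp [hF, hk, ht, ht.trans hab]
      linarith
  let e := hFm.orderIsoOfSurjective F hFs
  have heF : ∀ t, e t = F t := fun t => rfl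
  have hFid : ∀ t ∈ Set.Icc a b, F t = f t := by
    intro t ht; simp [hF, kid t ht]
  refine ⟨e.symm, e.symm.continuous, ?_, ?_⟩
  · intro s hs
    obtain ⟨t, ht, rfl⟩ := intermediate_value_Icc hab hf.continuousOn hs
    rw [← hFid t ht, ← heF, e.symm_apply_apply, heF, hFid t ht]
  · intro t ht
    rw [← hFid t ht, ← heF, e.symm_apply_apply]

namespace CrvD
variable {X Y g ν φ p q : ℝ → ℝ}

lemma cX (h : CrvD X Y g ν) : Continuous X :=
  continuous_iff_continuousAt.2 fun t => (h.dX t).continuousAt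
lemma cY (h : CrvD X Y g ν) : Continuous Y :=
  continuous_iff_continuousAt.2 fun t => (h.dY t).continuousAt

/-- nonnegative gap on an arc, with its integral -/
lemma arc (H : SupD φ p q) (h : CrvD X Y g ν) (k : ℝ → ℝ) (ck : Continuous k) {α β m M r c : ℝ}
    (hr : 0 < r)
    (hk1 : ∀ s ∈ Set.Icc m M, w1 φ p (k s) = s)
    (hk2 : ∀ t ∈ Set.uIcc α β, k (w1 φ p t) = t)
    (hX : ∀ u, (X u - c) / r ∈ Set.Icc m M) {a b : ℝ} (hab : a < b)
    (ha : (X a - c) / r = w1 φ p α) (hb : (X b - c) / r = w1 φ p β) :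
    (∫ u in a..b, (X u - c) * (g u * sin (ν u))) - r ^ 2 * (∫ t in α..β, w2 φ p t * ((φ t + q t) * cos t))
      ≤ r * (∫ u in a..b, φ (ν u) * g u) ∧
    ((∫ u in a..b, (X u - c) * (g u * sin (ν u))) - r ^ 2 * (∫ t in α..β, w2 φ p t * ((φ t + q t) * cos t))
      = r * (∫ u in a..b, φ (ν u) * g u) → ∀ u ∈ Set.Icc a b, X u = r * w1 φ p (ν u) + c) := by
  have c1 := H.cw1; have c2 := H.cw2; have cφ := H.cφ; have cp := H.cp; have cq := H.cq
  have cX := h.cX; have cg := h.cg; have cν := h.cν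
  set ξ : ℝ → ℝ := fun u => (X u - c) / r with hξ
  have cξ : Continuous ξ := by fun_prop
  have hXξ : ∀ u, X u - c = r * ξ u := by intro u; simp only [hξ]; field_simp
  have dξ : ∀ u, HasDerivAt ξ ((g u * cos (ν u)) / r) u := fun u => ((h.dX u).sub_const c).div_const r
  set F : ℝ → ℝ := fun u => φ (ν u) * g u -
    (ξ u * (g u * sin (ν u)) - w2 φ p (k (ξ u)) * (g u * cos (ν u))) with hF
  have cF : Continuous F := by fun_prop
  have Fform : ∀ u, F u = g u * (φ (ν u) -
      (w1 φ p (k (ξ u)) * sin (ν u) - w2 φ p (k (ξ u)) * cos (ν u))) := by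
    intro u; rw [hk1 _ (hX u)]; simp only [hF]; ring
  have Fnn : ∀ u, 0 ≤ F u := by
    intro u; rw [Fform]
    exact mul_nonneg (h.gpos u).le (sub_nonneg.2 (H.supp _ _).1)
  have sub1 : ∫ u in a..b, w2 φ p (k (ξ u)) * ((g u * cos (ν u)) / r) =
      ∫ t in α..β, w2 φ p t * ((φ t + q t) * cos t) := by
    have e1 := intervalIntegral.integral_comp_mul_deriv (a := a) (b := b) (f := ξ)
      (f' := fun u => (g u * cos (ν u)) / r) (g := fun s => w2 φ p (k s))
      (fun u _ => dξ u) (by fun_prop) (by fun_prop)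
    have e2 := intervalIntegral.integral_comp_mul_deriv (a := α) (b := β) (f := w1 φ p)
      (f' := fun t => (φ t + q t) * cos t) (g := fun s => w2 φ p (k s))
      (fun u _ => H.dw1 u) (by fun_prop) (by fun_prop)
    simp only [Function.comp_def] at e1 e2
    rw [e1, show ξ a = w1 φ p α from ha, show ξ b = w1 φ p β from hb, ← e2]
    apply intervalIntegral.integral_congr
    intro t ht
    simp only [hk2 t ht]
  have intF : r * ∫ u in a..b, F u = r * (∫ u in a..b, φ (ν u) * g u) -
      ((∫ u in a..b, (X u - c) * (g u * sin (ν u))) -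
        r ^ 2 * (∫ t in α..β, w2 φ p t * ((φ t + q t) * cos t))) := by
    rw [← sub1, ← intervalIntegral.integral_const_mul, ← intervalIntegral.integral_const_mul,
      ← intervalIntegral.integral_const_mul, ← intervalIntegral.integral_sub,
      ← intervalIntegral.integral_sub]
    · congr 1; ext u
      rw [hXξ]; simp only [hF]; field_simp
    all_goals exact Continuous.intervalIntegrable (by fun_prop) _ _
  have intnn : 0 ≤ ∫ u in a..b, F u := intervalIntegral.integral_nonneg hab.le fun u _ => Fnn u
  refine ⟨by nlinarith [mul_nonneg hr.le intnn], fun e => ?_⟩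
  have F0 : ∫ u in a..b, F u = 0 := by
    have : r * ∫ u in a..b, F u = 0 := by rw [intF]; linarith
    rcases mul_eq_zero.1 this with h | h
    · exact absurd h hr.ne'
    · exact h
  have conc : ∀ u, F u = 0 → X u = r * w1 φ p (ν u) + c := by
    intro u hu
    rw [Fform] at hu
    rcases mul_eq_zero.1 hu with h' | h'
    · exact absurd h' (h.gpos u).ne'
    · have := ((H.supp (ν u) (k (ξ u))).2 (by linarith)).1
      rw [hk1 _ (hX u)] at this
      have h3 := hXξ u
      rw [show ξ u = w1 φ p (ν u) from this] at h3; linarith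
  intro u hu
  apply conc
  · by_contra hne
    have hpos : 0 < F u := lt_of_le_of_ne (Fnn u) (Ne.symm hne)
    have := intervalIntegral.integral_pos hab cF.continuousOn (fun u _ => Fnn u) ⟨u, hu, hpos⟩
    linarith

lemma wulff (H : SupD φ p q) (h : CrvD X Y g ν) :
    ∃ r : ℝ, 0 < r ∧ ∃ c : ℝ,
      (∫ u in (0:ℝ)..1, (X u * (g u * sin (ν u)) - Y u * (g u * cos (ν u)))) +
        r ^ 2 * (∫ t in (0:ℝ)..(2*π), φ t * (φ t + q t)) ≤ 2 * r * (∫ u in (0:ℝ)..1, φ (ν u) * g u) ∧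
      ((∫ u in (0:ℝ)..1, (X u * (g u * sin (ν u)) - Y u * (g u * cos (ν u)))) +
        r ^ 2 * (∫ t in (0:ℝ)..(2*π), φ t * (φ t + q t)) = 2 * r * (∫ u in (0:ℝ)..1, φ (ν u) * g u) →
        ∀ u, X u = r * w1 φ p (ν u) + c) := by
  have c1 := H.cw1; have c2 := H.cw2; have cφ := H.cφ; have cp := H.cp; have cq := H.cq
  have cX := h.cX; have cY := h.cY; have cg := h.cg; have cν := h.cν
  have hpi := pi_pos
  have pX : Function.Periodic X 1 := h.perX
  have pg : ∀ u, g (u + 1) = g u := by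
    intro u
    have hX1 : HasDerivAt X (g (u+1) * cos (ν (u+1))) u := by
      have := (h.dX (u+1)).comp_add_const u 1
      exact this.congr_of_eventuallyEq (Filter.Eventually.of_forall fun v => (h.perX v).symm)
    have hY1 : HasDerivAt Y (g (u+1) * sin (ν (u+1))) u := by
      have := (h.dY (u+1)).comp_add_const u 1
      exact this.congr_of_eventuallyEq (Filter.Eventually.of_forall fun v => (h.perY v).symm)
    have e1 := hX1.unique (h.dX u)
    have e2 := hY1.unique (h.dY u)
    rw [h.perν, cos_add_two_pi] at e1
    rw [h.perν, sin_add_two_pi] at e2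
    linear_combination cos (ν u) * e1 + sin (ν u) * e2
      - (g (u+1) - g u) * sin_sq_add_cos_sq (ν u)
  -- extrema
  obtain ⟨u0, -, hu0⟩ := isCompact_Icc.exists_isMinOn (s := Set.Icc (0:ℝ) 1) ⟨0, by simp⟩ cX.continuousOn
  have hmin : ∀ u, X u0 ≤ X u := by
    intro u
    obtain ⟨v, hv, e⟩ := pX.exists_mem_Ico₀ one_pos u
    rw [e]; exact hu0 (Set.Ico_subset_Icc_self hv)
  obtain ⟨u1', -, hu1'⟩ := isCompact_Icc.exists_isMaxOn (s := Set.Icc (0:ℝ) 1) ⟨0, by simp⟩ cX.continuousOn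
  have hmax' : ∀ u, X u ≤ X u1' := by
    intro u
    obtain ⟨v, hv, e⟩ := pX.exists_mem_Ico₀ one_pos u
    rw [e]; exact hu1' (Set.Ico_subset_Icc_self hv)
  obtain ⟨u1, hu1, e⟩ := pX.exists_mem_Ico one_pos u1' u0
  have hmax : ∀ u, X u ≤ X u1 := by rw [← e]; exact hmax'
  have hlt : X u0 < X u1 := by
    refine lt_of_le_of_ne (hmin _) fun he => ?_
    have hconst : ∀ u, X u = X u0 := fun u => le_antisymm ((hmax u).trans he.ge) (hmin u)
    have hcos : ∀ u, cos (ν u) = 0 := by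
      intro u
      have h0 : HasDerivAt X 0 u := by
        have : X = fun _ => X u0 := funext hconst
        rw [this]; exact hasDerivAt_const _ _
      have := h0.unique (h.dX u)
      rcases mul_eq_zero.1 this.symm with h' | h'
      · exact absurd h' (h.gpos u).ne'
      · exact h'
    have h1 := h.perν 0
    -- the continuous function `ν` takes the value of a multiple of `2π`
    obtain ⟨n, hn, -⟩ := existsUnique_add_zsmul_mem_Ico two_pi_pos 0 (ν 0)
    have hmem : n • (2 * π) ∈ Set.Icc (ν 0) (ν 1) := by
      rw [zero_add] at h1
      rw [h1]
      simp only [zsmul_eq_mul, zero_add, Set.mem_Ico, Set.mem_Icc] at hn ⊢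
      constructor <;> linarith [hn.1, hn.2]
    obtain ⟨u, -, hu⟩ := intermediate_value_Icc zero_le_one cν.continuousOn hmem
    have := hcos u
    rw [hu, zsmul_eq_mul, cos_int_mul_two_pi] at this
    exact one_ne_zero this
  have hu01 : u0 < u1 := lt_of_le_of_ne hu1.1 (by rintro rfl; exact lt_irrefl _ hlt)
  -- inverses
  have hm1 : StrictMonoOn (w1 φ p) (Set.Icc (-(π/2)) (π/2)) := by
    refine strictMonoOn_of_deriv_pos (convex_Icc _ _) c1.continuousOn ?_
    intro t ht
    rw [interior_Icc] at ht
    rw [(H.dw1 t).deriv]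
    exact mul_pos (H.conv t) (cos_pos_of_mem_Ioo ht)
  have hm2 : StrictMonoOn (fun t => w1 φ p (-t)) (Set.Icc (-(3*π/2)) (-(π/2))) := by
    have : StrictAntiOn (w1 φ p) (Set.Icc (π/2) (3*π/2)) := by
      refine strictAntiOn_of_deriv_neg (convex_Icc _ _) c1.continuousOn ?_
      intro t ht
      rw [interior_Icc] at ht
      rw [(H.dw1 t).deriv]
      exact mul_neg_of_pos_of_neg (H.conv t)
        (cos_neg_of_pi_div_two_lt_of_lt ht.1 (by linarith [ht.2]))
    intro s hs t ht hst
    exact this ⟨by linarith [ht.2], by linarith [ht.1]⟩ ⟨by linarith [hs.2], by linarith [hs.1]⟩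
      (by linarith)
  obtain ⟨k1, ck1, hk1, hk1'⟩ := exists_inv (by linarith) c1 hm1
  obtain ⟨k2, ck2, hk2, hk2'⟩ := exists_inv (by linarith) (by fun_prop) hm2
  simp only [neg_neg] at hk2
  have hper : w1 φ p (3*π/2) = w1 φ p (-(π/2)) := by
    rw [← H.perw1 (-(π/2))]; congr 1; ring
  rw [hper] at hk2
  set m := w1 φ p (-(π/2)) with hm
  set M := w1 φ p (π/2) with hM
  have hmM : m < M := hm1 ⟨le_rfl, by linarith⟩ ⟨by linarith, le_rfl⟩ (by linarith)
  have hmM' : 0 < M - m := by linarith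
  set r := (X u1 - X u0) / (M - m) with hr
  have hr0 : 0 < r := div_pos (by linarith) hmM'
  have hrM : r * (M - m) = X u1 - X u0 := by rw [hr]; field_simp
  set c := X u0 - r * m with hc
  have hξ0 : (X u0 - c) / r = m := by rw [hc]; field_simp; ring
  have hξ1 : (X u1 - c) / r = M := by
    rw [div_eq_iff hr0.ne', hc]; linarith
  have hξ : ∀ u, (X u - c) / r ∈ Set.Icc m M := by
    intro u
    rw [← hξ0, ← hξ1]
    exact ⟨by gcongr; exact hmin u, by gcongr; exact hmax u⟩
  have A1 := arc H h k1 ck1 (α := -(π/2)) (β := π/2) hr0 hk1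
    (by rw [Set.uIcc_of_le (by linarith)]; exact hk1') hξ hu01 hξ0 hξ1
  have A2 := arc H h (fun s => - k2 s) (by fun_prop) (α := π/2) (β := 3*π/2) hr0 hk2
    (by
      rw [Set.uIcc_of_le (by linarith)]
      intro t ht
      have := hk2' (-t) ⟨by linarith [ht.2], by linarith [ht.1]⟩
      rw [neg_neg] at this
      rw [this, neg_neg]) hξ (a := u1) (b := u0 + 1) hu1.2 hξ1 (by rw [h.perX, hξ0, hper])
  -- assemble the integrals
  have i1 : ∀ a b, IntervalIntegrable (fun u => (X u - c) * (g u * sin (ν u))) MeasureTheory.volume a b :=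
    fun a b => Continuous.intervalIntegrable (by fun_prop) _ _
  have i2 : ∀ a b, IntervalIntegrable (fun u => φ (ν u) * g u) MeasureTheory.volume a b :=
    fun a b => Continuous.intervalIntegrable (by fun_prop) _ _
  have i3 : ∀ a b, IntervalIntegrable (fun t => w2 φ p t * ((φ t + q t) * cos t)) MeasureTheory.volume a b :=
    fun a b => Continuous.intervalIntegrable (by fun_prop) _ _
  have s1 := intervalIntegral.integral_add_adjacent_intervals (i1 u0 u1) (i1 u1 (u0+1))
  have s2 := intervalIntegral.integral_add_adjacent_intervals (i2 u0 u1) (i2 u1 (u0+1))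
  have s3 := intervalIntegral.integral_add_adjacent_intervals (i3 (-(π/2)) (π/2)) (i3 (π/2) (3*π/2))
  rw [H.area_int] at s3
  have p2 : Function.Periodic (fun u => φ (ν u) * g u) 1 := by
    intro u; simp [h.perν, H.perφ, pg]
  have p1 : Function.Periodic (fun u => (X u - c) * (g u * sin (ν u))) 1 := by
    intro u; simp [h.perν, h.perX, pg]
  rw [p2.intervalIntegral_add_eq u0 0, zero_add] at s2
  rw [p1.intervalIntegral_add_eq u0 0, zero_add] at s1
  have hA : (∫ u in (0:ℝ)..1, (X u * (g u * sin (ν u)) - Y u * (g u * cos (ν u)))) =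
      2 * ∫ u in (0:ℝ)..1, (X u - c) * (g u * sin (ν u)) := by
    have f : ∫ u in (0:ℝ)..1, (X u * (g u * sin (ν u)) + Y u * (g u * cos (ν u))
        - 2 * c * (g u * sin (ν u))) = 0 := by
      rw [intervalIntegral.integral_eq_sub_of_hasDerivAt (f := fun u => X u * Y u - 2 * c * Y u)]
      · have a1 := h.perX 0
        have a2 := h.perY 0
        rw [zero_add] at a1 a2
        rw [a1, a2]; ring
      · intro u _
        refine (((h.dX u).mul (h.dY u)).sub ((h.dY u).const_mul (2 * c))).congr_deriv ?_
        ring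
      · exact Continuous.intervalIntegrable (by fun_prop) _ _
    rw [← intervalIntegral.integral_const_mul, ← sub_eq_zero, ← intervalIntegral.integral_sub]
    · rw [← neg_eq_zero, ← f, ← intervalIntegral.integral_neg]
      congr 1; ext u; ring
    all_goals exact Continuous.intervalIntegrable (by fun_prop) _ _
  refine ⟨r, hr0, c, ?_, ?_⟩
  · rw [hA, ← s1, ← s2]
    linear_combination 2 * A1.1 + 2 * A2.1 + 2 * r ^ 2 * s3
  · intro he
    rw [hA, ← s1, ← s2] at he
    have hs : ∀ u ∈ Set.Icc u0 (u0+1), X u = r * w1 φ p (ν u) + c := by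
      intro u hu
      rcases le_total u u1 with hle | hle
      · refine A1.2 ?_ u ⟨hu.1, hle⟩
        have k1 := A1.1
        have k2 := A2.1
        apply le_antisymm k1
        linear_combination k2 - he / 2 + r^2 * s3
      · refine A2.2 ?_ u ⟨hle, hu.2⟩
        have k1 := A1.1
        have k2 := A2.1
        apply le_antisymm k2
        linear_combination k1 - he / 2 + r^2 * s3
    have pD : Function.Periodic (fun u => X u - (r * w1 φ p (ν u) + c)) 1 := by
      intro u; simp [h.perX, h.perν, H.perw1]
    intro u
    obtain ⟨v, hv, e⟩ := pD.exists_mem_Ico one_pos u u0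
    have := hs v (Set.Ico_subset_Icc_self hv)
    linarith

end CrvD

namespace CrvD
variable {X Y g ν φ p q : ℝ → ℝ}

lemma rot (h : CrvD X Y g ν) : CrvD Y (fun u => - X u) g (fun u => ν u - π / 2) where
  dX u := by simpa [cos_sub_pi_div_two] using h.dY u
  dY u := by
    refine (h.dX u).neg.congr_deriv ?_
    rw [sin_sub_pi_div_two]; ring
  perX := h.perY
  perY u := by simp [h.perX u]
  cg := h.cg
  cν := by have := h.cν; fun_prop
  gpos := h.gpos
  perν u := by rw [h.perν]; ring

lemma _root_.SupD.rot (H : SupD φ p q) :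
    SupD (fun t => φ (t + π / 2)) (fun t => p (t + π / 2)) (fun t => q (t + π / 2)) where
  dφ t := (H.dφ (t + π/2)).comp_add_const t (π/2)
  dp t := (H.dp (t + π/2)).comp_add_const t (π/2)
  cq := by have := H.cq; fun_prop
  perφ t := by rw [← H.perφ (t + π/2)]; congr 1; ring
  perp t := by rw [← H.perp (t + π/2)]; congr 1; ring
  perq t := by rw [← H.perq (t + π/2)]; congr 1; ring
  conv t := H.conv _

lemma scale_aux {A W L r : ℝ} (hA : 0 < A) (hW : 0 < W) (h1 : A + r ^ 2 * W ≤ 2 * r * L) (hr : 0 < r) :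
    A * W ≤ L ^ 2 ∧ (L ^ 2 = A * W → A + r ^ 2 * W = 2 * r * L ∧ r ^ 2 = A / W) := by
  have h2 : (A + r ^ 2 * W) ^ 2 ≤ (2 * r * L) ^ 2 := by
    apply pow_le_pow_left₀ (by positivity) h1
  have hr2 : 0 < r ^ 2 := by positivity
  constructor
  · have : r ^ 2 * (A * W) ≤ r ^ 2 * L ^ 2 := by nlinarith [sq_nonneg (A - r ^ 2 * W)]
    exact le_of_mul_le_mul_left this hr2
  · intro e
    have h3 : (A - r ^ 2 * W) ^ 2 ≤ 0 := by nlinarith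
    have h4 : A - r ^ 2 * W = 0 := by
      have := le_antisymm h3 (sq_nonneg _)
      exact pow_eq_zero_iff (two_ne_zero) |>.1 this
    refine ⟨?_, ?_⟩
    · have h5 : (2 * r * L) ^ 2 = (A + r ^ 2 * W) ^ 2 := by
        have : (A + r^2*W)^2 = (A - r^2*W)^2 + 4 * r^2 * (A * W) := by ring
        rw [this, h4, ← e]; ring
      have hnn : 0 ≤ A + r ^ 2 * W := by positivity
      exact ((sq_eq_sq₀ (hnn.trans h1) hnn).1 h5).symm
    · rw [eq_div_iff hW.ne']; linarith

lemma wulff_full (H : SupD φ p q) (h : CrvD X Y g ν)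
    (hA : 0 < ∫ u in (0:ℝ)..1, (X u * (g u * sin (ν u)) - Y u * (g u * cos (ν u))))
    (hW : 0 < ∫ t in (0:ℝ)..(2*π), φ t * (φ t + q t)) :
    (∫ u in (0:ℝ)..1, (X u * (g u * sin (ν u)) - Y u * (g u * cos (ν u)))) *
      (∫ t in (0:ℝ)..(2*π), φ t * (φ t + q t)) ≤ (∫ u in (0:ℝ)..1, φ (ν u) * g u) ^ 2 ∧
    ((∫ u in (0:ℝ)..1, φ (ν u) * g u) ^ 2 =
      (∫ u in (0:ℝ)..1, (X u * (g u * sin (ν u)) - Y u * (g u * cos (ν u)))) *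
      (∫ t in (0:ℝ)..(2*π), φ t * (φ t + q t)) →
      ∃ r : ℝ, 0 < r ∧ ∃ c d : ℝ, ∀ u, X u = r * w1 φ p (ν u) + c ∧ Y u = r * w2 φ p (ν u) + d) := by
  obtain ⟨r, hr, c, h1, h2⟩ := wulff H h
  have k := scale_aux hA hW h1 hr
  refine ⟨k.1, fun e => ⟨r, hr, c, ?_⟩⟩
  obtain ⟨k1, k2⟩ := k.2 e
  obtain ⟨r', hr', d, h1', h2'⟩ := wulff H.rot h.rot
  have eA : (∫ u in (0:ℝ)..1, (Y u * (g u * sin (ν u - π/2)) - - X u * (g u * cos (ν u - π/2)))) =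
      ∫ u in (0:ℝ)..1, (X u * (g u * sin (ν u)) - Y u * (g u * cos (ν u))) := by
    congr 1; ext u
    rw [sin_sub_pi_div_two, cos_sub_pi_div_two]; ring
  have eW : ∫ t in (0:ℝ)..(2*π), φ (t + π/2) * (φ (t + π/2) + q (t + π/2)) =
      ∫ t in (0:ℝ)..(2*π), φ t * (φ t + q t) := by
    have hper : Function.Periodic (fun t => φ t * (φ t + q t)) (2 * π) := by
      intro t; simp [H.perφ, H.perq]
    rw [intervalIntegral.integral_comp_add_right (fun t => φ t * (φ t + q t)) (π/2)]
    rw [show 2 * π + π/2 = (0 + π/2) + 2 * π by ring, hper.intervalIntegral_add_eq _ 0, zero_add]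
  simp only [sub_add_cancel] at h1' h2'
  rw [eA, eW] at h1' h2'
  have k' := scale_aux hA hW h1' hr'
  obtain ⟨k1', k2'⟩ := k'.2 e
  have hrr : r' = r := (sq_eq_sq₀ hr'.le hr.le).1 (k2'.trans k2.symm)
  refine ⟨d, fun u => ⟨h2 k1 u, ?_⟩⟩
  rw [h2' k1' u, hrr]
  simp only [w1, w2, sub_add_cancel, sin_sub_pi_div_two, cos_sub_pi_div_two]
  ring

lemma area_shift (h : CrvD X Y g ν) (a b : ℝ) :
    (∫ u in (0:ℝ)..1, (X u * (g u * sin (ν u)) - Y u * (g u * cos (ν u)))) =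
    ∫ u in (0:ℝ)..1, ((X u - a) * sin (ν u) - (Y u - b) * cos (ν u)) * g u := by
  have cX := h.cX; have cY := h.cY; have cg := h.cg; have cν := h.cν
  have f : ∫ u in (0:ℝ)..1, (a * (g u * sin (ν u)) - b * (g u * cos (ν u))) = 0 := by
    rw [intervalIntegral.integral_eq_sub_of_hasDerivAt (f := fun u => a * Y u - b * X u)]
    · have a1 := h.perX 0
      have a2 := h.perY 0
      rw [zero_add] at a1 a2
      rw [a1, a2]; ring
    · intro u _
      exact ((h.dY u).const_mul a).sub ((h.dX u).const_mul b)
    · exact Continuous.intervalIntegrable (by fun_prop) _ _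
  rw [← sub_eq_zero, ← intervalIntegral.integral_sub, ← f]
  · congr 1; ext u; ring
  all_goals exact Continuous.intervalIntegrable (by fun_prop) _ _

lemma param (H : SupD φ p q) (hφ : ∀ t, 0 < φ t) (h : CrvD X Y g ν)
    (hA : 0 < ∫ u in (0:ℝ)..1, (X u * (g u * sin (ν u)) - Y u * (g u * cos (ν u))))
    {c a b : ℝ} (hc : 0 < c)
    (hr : ∀ u, ∃ t, X u = c * w1 φ p t + a ∧ Y u = c * w2 φ p t + b) :
    ∀ u, X u = c * w1 φ p (ν u) + a ∧ Y u = c * w2 φ p (ν u) + b := by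
  have cX := h.cX; have cY := h.cY; have cg := h.cg; have cν := h.cν
  have val : ∀ t, w1 φ p t * sin t - w2 φ p t * cos t = φ t := by
    intro t; simp only [w1, w2]; linear_combination φ t * sin_sq_add_cos_sq t
  have P1 : Function.Periodic (w1 φ p) (2 * π) := H.perw1
  have P2 : Function.Periodic (w2 φ p) (2 * π) := H.perw2
  have shift : ∀ s t, cos (s - t) = 1 → w1 φ p s = w1 φ p t ∧ w2 φ p s = w2 φ p t := by
    intro s t hst
    obtain ⟨n, hn⟩ := (cos_eq_one_iff _).1 hst
    have : s = t + n • (2 * π) := by rw [zsmul_eq_mul]; linarith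
    rw [this]
    exact ⟨(P1.zsmul n) t, (P2.zsmul n) t⟩
  have alt : ∀ u, (X u = c * w1 φ p (ν u) + a ∧ Y u = c * w2 φ p (ν u) + b) ∨
      (X u = c * w1 φ p (ν u + π) + a ∧ Y u = c * w2 φ p (ν u + π) + b) := by
    intro u
    obtain ⟨t, hX, hY⟩ := hr u
    have hmax : IsLocalMax (fun s => X s * sin t - Y s * cos t) u := by
      refine Filter.Eventually.of_forall fun s => ?_
      obtain ⟨t', hX', hY'⟩ := hr s
      simp only [hX, hY, hX', hY']
      have := mul_le_mul_of_nonneg_left (H.supp t t').1 hc.le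
      rw [← val t] at this
      linarith
    have hd := hmax.hasDerivAt_eq_zero (((h.dX u).mul_const (sin t)).sub ((h.dY u).mul_const (cos t)))
    have hs : sin (t - ν u) = 0 := by
      have : g u * sin (t - ν u) = 0 := by rw [sin_sub, ← hd]; ring
      exact (mul_eq_zero.1 this).resolve_left (h.gpos u).ne'
    have hcos : cos (t - ν u) = 1 ∨ cos (t - ν u) = -1 := by
      have := sin_sq_add_cos_sq (t - ν u)
      rw [hs] at this
      have h2 : (cos (t - ν u)) ^ 2 = 1 := by linarith
      exact (sq_eq_sq_iff_eq_or_eq_neg.1 (h2.trans (one_pow 2).symm))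
    rcases hcos with e | e
    · left
      obtain ⟨e1, e2⟩ := shift _ _ e
      rw [← e1, ← e2]; exact ⟨hX, hY⟩
    · right
      have : cos (t - (ν u + π)) = 1 := by
        rw [← sub_sub, cos_sub_pi, e, neg_neg]
      obtain ⟨e1, e2⟩ := shift _ _ this
      rw [← e1, ← e2]; exact ⟨hX, hY⟩
  set E : ℝ → ℝ := fun u => (X u - a) * sin (ν u) - (Y u - b) * cos (ν u) with hE
  have cE : Continuous E := by fun_prop
  have E1 : ∀ u, X u = c * w1 φ p (ν u) + a ∧ Y u = c * w2 φ p (ν u) + b → 0 < E u := by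
    rintro u ⟨e1, e2⟩
    have : E u = c * φ (ν u) := by
      rw [← val (ν u)]; simp only [hE, e1, e2]; ring
    rw [this]; exact mul_pos hc (hφ _)
  have E2 : ∀ u, X u = c * w1 φ p (ν u + π) + a ∧ Y u = c * w2 φ p (ν u + π) + b → E u < 0 := by
    rintro u ⟨e1, e2⟩
    have : E u = - (c * φ (ν u + π)) := by
      rw [← val (ν u + π), sin_add_pi, cos_add_pi]; simp only [hE, e1, e2]; ring
    rw [this]; exact neg_neg_of_pos (mul_pos hc (hφ _))
  have Ene : ∀ u, E u ≠ 0 := fun u => (alt u).elim (fun e => (E1 u e).ne') (fun e => (E2 u e).ne)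
  have hex : ∃ u, 0 < E u := by
    by_contra hcon
    push Not at hcon
    rw [h.area_shift a b] at hA
    have : 0 ≤ ∫ u in (0:ℝ)..1, - (E u * g u) :=
      intervalIntegral.integral_nonneg zero_le_one fun u _ =>
        neg_nonneg.2 (mul_nonpos_of_nonpos_of_nonneg (hcon u) (h.gpos u).le)
    rw [intervalIntegral.integral_neg] at this
    linarith
  obtain ⟨u0, hu0⟩ := hex
  intro u
  refine (alt u).resolve_right fun e => ?_
  obtain ⟨v, hv⟩ := mem_range_of_exists_le_of_exists_ge cE ⟨u, (E2 u e).le⟩ ⟨u0, hu0.le⟩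
  exact Ene v hv

lemma dν (H : SupD φ p q) (h : CrvD X Y g ν) {c a b : ℝ} (hc : 0 < c)
    (hr : ∀ u, X u = c * w1 φ p (ν u) + a ∧ Y u = c * w2 φ p (ν u) + b) (u : ℝ) :
    HasDerivAt ν (g u / (c * (φ (ν u) + q (ν u)))) u := by
  have cφ := H.cφ; have cq := H.cq
  set C := cos (ν u) with hC
  set S := sin (ν u) with hS
  have hP : ∀ t, HasDerivAt (fun t => w1 φ p t * C + w2 φ p t * S)
      ((φ t + q t) * cos t * C + (φ t + q t) * sin t * S) t := fun t =>
    ((H.dw1 t).mul_const C).add ((H.dw2 t).mul_const S)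
  have hP' : HasStrictDerivAt (fun t => w1 φ p t * C + w2 φ p t * S)
      ((φ (ν u) + q (ν u)) * cos (ν u) * C + (φ (ν u) + q (ν u)) * sin (ν u) * S) (ν u) :=
    hasStrictDerivAt_of_hasDerivAt_of_continuousAt (Filter.Eventually.of_forall hP)
      (Continuous.continuousAt (by fun_prop))
  have hval : (φ (ν u) + q (ν u)) * cos (ν u) * C + (φ (ν u) + q (ν u)) * sin (ν u) * S
      = φ (ν u) + q (ν u) := by
    rw [hC, hS]; linear_combination (φ (ν u) + q (ν u)) * sin_sq_add_cos_sq (ν u)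
  rw [hval] at hP'
  have hne := (H.conv (ν u)).ne'
  have hinv := hP'.to_localInverse hne
  have hleft : ∀ᶠ t in nhds (ν u), hP'.localInverse _ _ _ hne (w1 φ p t * C + w2 φ p t * S) = t :=
    HasStrictFDerivAt.eventually_left_inverse _
  have hev : ∀ᶠ s in nhds u, hP'.localInverse _ _ _ hne (w1 φ p (ν s) * C + w2 φ p (ν s) * S) = ν s :=
    h.cν.continuousAt.eventually hleft
  have hQ : HasDerivAt (fun s => w1 φ p (ν s) * C + w2 φ p (ν s) * S) (g u / c) u := by
    have e : (fun s => w1 φ p (ν s) * C + w2 φ p (ν s) * S) =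
        fun s => ((X s - a) * C + (Y s - b) * S) / c := by
      ext s; rw [(hr s).1, (hr s).2]; field_simp; ring
    rw [e]
    refine (((((h.dX u).sub_const a).mul_const C).add
      (((h.dY u).sub_const b).mul_const S)).div_const c).congr_deriv ?_
    congr 1
    rw [hC, hS]; linear_combination g u * sin_sq_add_cos_sq (ν u)
  have := (HasDerivAt.comp u hinv.hasDerivAt hQ).congr_of_eventuallyEq
    (hev.mono fun s hs => hs.symm)
  refine this.congr_deriv ?_
  field_simp

lemma length_eq (H : SupD φ p q) (h : CrvD X Y g ν) {c a b : ℝ} (hc : 0 < c)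
    (hr : ∀ u, X u = c * w1 φ p (ν u) + a ∧ Y u = c * w2 φ p (ν u) + b)
    {σ : ℝ → ℝ} (cσ : Continuous σ) (hσ : ∀ t, σ (t + 2 * π) = σ t) :
    ∫ u in (0:ℝ)..1, σ (ν u) * g u = c * ∫ t in (0:ℝ)..(2*π), σ t * (φ t + q t) := by
  have cφ := H.cφ; have cq := H.cq; have cg := h.cg; have cν := h.cν
  have hne : ∀ u, c * (φ (ν u) + q (ν u)) ≠ 0 := fun u => (mul_pos hc (H.conv _)).ne'
  have e1 := intervalIntegral.integral_comp_mul_deriv (a := 0) (b := 1) (f := ν)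
    (f' := fun u => g u / (c * (φ (ν u) + q (ν u)))) (g := fun t => σ t * (φ t + q t))
    (fun u _ => h.dν H hc hr u)
    (Continuous.continuousOn (cg.div (by fun_prop) hne)) (by fun_prop)
  have hper : Function.Periodic (fun t => σ t * (φ t + q t)) (2 * π) := by
    intro t; simp [hσ, H.perφ, H.perq]
  have hν := h.perν 0
  rw [zero_add] at hν
  rw [hν, hper.intervalIntegral_add_eq _ 0, zero_add] at e1
  rw [← e1, ← intervalIntegral.integral_const_mul]
  congr 1; ext u
  have := (H.conv (ν u)).ne'
  simp only [Function.comp_def]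
  field_simp

end CrvD
lemma deriv_per {f : ℝ → ℝ} (hf : ∀ t, f (t + 2 * π) = f t) (t : ℝ) :
    deriv f (t + 2 * π) = deriv f t := by
  rw [← deriv_comp_add_const]
  congr 1
  ext s
  exact hf s

lemma supD_of {σ : ℝ → ℝ} (hσs : ContDiff ℝ (⊤ : ℕ∞) σ) (hσper : ∀ ν, σ (ν + 2 * π) = σ ν)
    (hσconv : ∀ ν, 0 < σ ν + deriv (deriv σ) ν) : SupD σ (deriv σ) (deriv (deriv σ)) := by
  have h1 : ContDiff ℝ (⊤ : ℕ∞) (deriv σ) := ((contDiff_infty_iff_deriv (𝕜 := ℝ)).1 hσs).2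
  have h2 : ContDiff ℝ (⊤ : ℕ∞) (deriv (deriv σ)) := ((contDiff_infty_iff_deriv (𝕜 := ℝ)).1 h1).2
  exact ⟨fun t => (hσs.differentiable (by simp) t).hasDerivAt,
    fun t => (h1.differentiable (by simp) t).hasDerivAt, h2.continuous, hσper,
    deriv_per hσper, deriv_per (deriv_per hσper), hσconv⟩

lemma supD_comb {φ p q φ' p' q' : ℝ → ℝ} (H : SupD φ p q) (H' : SupD φ' p' q') {s t : ℝ}
    (hs : 0 < s) (ht : 0 < t) :
    SupD (fun v => s * φ v + t * φ' v) (fun v => s * p v + t * p' v)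
      (fun v => s * q v + t * q' v) where
  dφ v := ((H.dφ v).const_mul s).add ((H'.dφ v).const_mul t)
  dp v := ((H.dp v).const_mul s).add ((H'.dp v).const_mul t)
  cq := by have := H.cq; have := H'.cq; fun_prop
  perφ v := by simp only [H.perφ, H'.perφ]
  perp v := by simp only [H.perp, H'.perp]
  perq v := by simp only [H.perq, H'.perq]
  conv v := by
    have := mul_pos hs (H.conv v)
    have := mul_pos ht (H'.conv v)
    linarith

lemma mixed_pos {σ μ : ℝ → ℝ} (cσ : Continuous σ) (hσ : ∀ t, 0 < σ t)
    (H : SupD μ (deriv μ) (deriv (deriv μ))) : 0 < mixedWulffEnergy σ μ := by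
  have := H.cφ
  have := H.cq
  exact intervalIntegral.intervalIntegral_pos_of_pos
    (Continuous.intervalIntegrable (by fun_prop) _ _) (fun t => mul_pos (hσ t) (H.conv t)) two_pi_pos

lemma wulff_pos {σ : ℝ → ℝ} (H : SupD σ (deriv σ) (deriv (deriv σ))) (hσ : ∀ t, 0 < σ t) :
    0 < wulffArea σ := by
  have := mixed_pos H.cφ hσ H
  rw [mixedWulffEnergy] at this
  rw [wulffArea]
  linarith

lemma mixed_symm {σ μ : ℝ → ℝ} (H : SupD σ (deriv σ) (deriv (deriv σ)))
    (H' : SupD μ (deriv μ) (deriv (deriv μ))) : mixedWulffEnergy σ μ = mixedWulffEnergy μ σ := by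
  have c1 := H.cφ
  have c2 := H.cq
  have c3 := H'.cφ
  have c4 := H'.cq
  rw [mixedWulffEnergy, mixedWulffEnergy, ← sub_eq_zero, ← intervalIntegral.integral_sub]
  · rw [intervalIntegral.integral_eq_sub_of_hasDerivAt
      (f := fun t => σ t * deriv μ t - μ t * deriv σ t)]
    · have a1 := H.perφ 0
      have a2 := H.perp 0
      have a3 := H'.perφ 0
      have a4 := H'.perp 0
      rw [zero_add] at a1 a2 a3 a4
      rw [a1, a2, a3, a4]; ring
    · intro t _
      refine (((H.dφ t).mul (H'.dp t)).sub ((H'.dφ t).mul (H.dp t))).congr_deriv ?_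
      ring
    · exact Continuous.intervalIntegrable (by fun_prop) _ _
  all_goals exact Continuous.intervalIntegrable (by fun_prop) _ _

/-- Equality case of the mixed anisoperimetric inequality:
`L_σ(Γ)·L_μ(Γ) = (2√(|W_σ|·|W_μ|) + L_σ(∂W_μ))·A(Γ)` holds iff `Γ` is homothetically
similar to the Wulff boundary `∂W_{σ̃}` with `σ̃ = √|W_μ|·σ + √|W_σ|·μ`. -/
theorem mixed_anisoperimetric_equality_case
    (σ μ : ℝ → ℝ)
    (hσs : ContDiff ℝ (⊤ : ℕ∞) σ) (hσper : ∀ ν, σ (ν + 2 * π) = σ ν)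
    (hσpos : ∀ ν, 0 < σ ν) (hσconv : ∀ ν, 0 < σ ν + deriv (deriv σ) ν)
    (hμs : ContDiff ℝ (⊤ : ℕ∞) μ) (hμper : ∀ ν, μ (ν + 2 * π) = μ ν)
    (hμpos : ∀ ν, 0 < μ ν) (hμconv : ∀ ν, 0 < μ ν + deriv (deriv μ) ν)
    -- a closed curve `x` with speed `g` and tangent-angle lift `ν`
    (x : ℝ → ℝ × ℝ) (g ν : ℝ → ℝ)
    (hx : ContDiff ℝ 2 x)
    (hxper : ∀ u, x (u + 1) = x u)
    (hg : ∀ u, 0 < g u)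
    (htang : ∀ u, HasDerivAt x (g u • ((Real.cos (ν u), Real.sin (ν u)) : ℝ × ℝ)) u)
    (hνc : Continuous ν)
    (hνper : ∀ u, ν (u + 1) = ν u + 2 * π)
    (hinj : Set.InjOn x (Set.Ico 0 1))
    -- positive enclosed area
    (hA : 0 < (1 / 2) * ∫ u in (0:ℝ)..1,
        ((x u).1 * (g u * Real.sin (ν u)) - (x u).2 * (g u * Real.cos (ν u)))) :
    ((∫ u in (0:ℝ)..1, σ (ν u) * g u) * (∫ u in (0:ℝ)..1, μ (ν u) * g u) =
      (2 * Real.sqrt (wulffArea σ * wulffArea μ) + mixedWulffEnergy σ μ) *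
        ((1 / 2) * ∫ u in (0:ℝ)..1,
          ((x u).1 * (g u * Real.sin (ν u)) - (x u).2 * (g u * Real.cos (ν u)))))
    ↔ (∃ c : ℝ, 0 < c ∧ ∃ v : ℝ × ℝ,
        Set.range x = Set.range (fun t : ℝ =>
          c • wulffPoint
            (fun s => Real.sqrt (wulffArea μ) * σ s + Real.sqrt (wulffArea σ) * μ s) t + v)) := by
  have Hσ := supD_of hσs hσper hσconv
  have Hμ := supD_of hμs hμper hμconv
  have hcurve : CrvD (fun u => (x u).1) (fun u => (x u).2) g ν := by
    have dX : ∀ u, HasDerivAt (fun u => (x u).1) (g u * cos (ν u)) u := fun u => by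
      refine ((hasFDerivAt_fst (𝕜 := ℝ) (p := x u)).comp_hasDerivAt u (htang u)).congr_deriv ?_
      simp
    have dY : ∀ u, HasDerivAt (fun u => (x u).2) (g u * sin (ν u)) u := fun u => by
      refine ((hasFDerivAt_snd (𝕜 := ℝ) (p := x u)).comp_hasDerivAt u (htang u)).congr_deriv ?_
      simp
    refine ⟨dX, dY, fun u => by simp [hxper], fun u => by simp [hxper], ?_, hνc, hg, hνper⟩
    have cd : Continuous (deriv x) := hx.continuous_deriv (by norm_num)
    have : g = fun u => (deriv x u).1 * cos (ν u) + (deriv x u).2 * sin (ν u) := by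
      ext u
      rw [(htang u).deriv]
      simp only [Prod.smul_mk, smul_eq_mul]
      linear_combination -(g u) * sin_sq_add_cos_sq (ν u)
    rw [this]
    fun_prop
  have cσ := Hσ.cφ
  have cμ := Hμ.cφ
  have cg := hcurve.cg
  have hWσ := wulff_pos Hσ hσpos
  have hWμ := wulff_pos Hμ hμpos
  set a := Real.sqrt (wulffArea σ) with ha
  set b := Real.sqrt (wulffArea μ) with hb
  set M := mixedWulffEnergy σ μ with hM
  have ha0 : 0 < a := Real.sqrt_pos.2 hWσ
  have hb0 : 0 < b := Real.sqrt_pos.2 hWμ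
  have hab : Real.sqrt (wulffArea σ * wulffArea μ) = a * b := Real.sqrt_mul hWσ.le _
  have ha2 : mixedWulffEnergy σ σ = 2 * a ^ 2 := by
    rw [ha, Real.sq_sqrt hWσ.le, wulffArea, mixedWulffEnergy]; ring
  have hb2 : mixedWulffEnergy μ μ = 2 * b ^ 2 := by
    rw [hb, Real.sq_sqrt hWμ.le, wulffArea, mixedWulffEnergy]; ring
  have hsym : mixedWulffEnergy μ σ = M := mixed_symm Hμ Hσ
  have hMpos : 0 < M := mixed_pos cσ hσpos Hμ
  rw [hab]
  have hA2 : 0 < ∫ u in (0:ℝ)..1,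
        ((x u).1 * (g u * Real.sin (ν u)) - (x u).2 * (g u * Real.cos (ν u))) := by linarith
  set A := ∫ u in (0:ℝ)..1,
        ((x u).1 * (g u * Real.sin (ν u)) - (x u).2 * (g u * Real.cos (ν u))) with hAdef
  set Lσ := ∫ u in (0:ℝ)..1, σ (ν u) * g u with hLσ
  set Lμ := ∫ u in (0:ℝ)..1, μ (ν u) * g u with hLμ
  have hLσ0 : 0 < Lσ := intervalIntegral.intervalIntegral_pos_of_pos
    (Continuous.intervalIntegrable (by fun_prop) _ _) (fun u => mul_pos (hσpos _) (hg u)) one_pos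
  have hLμ0 : 0 < Lμ := intervalIntegral.intervalIntegral_pos_of_pos
    (Continuous.intervalIntegrable (by fun_prop) _ _) (fun u => mul_pos (hμpos _) (hg u)) one_pos
  -- length and area of a combination
  have hL : ∀ s t : ℝ, ∫ u in (0:ℝ)..1, (s * σ (ν u) + t * μ (ν u)) * g u = s * Lσ + t * Lμ := by
    intro s t
    rw [hLσ, hLμ, ← intervalIntegral.integral_const_mul, ← intervalIntegral.integral_const_mul,
      ← intervalIntegral.integral_add]
    · congr 1; ext u; ring
    all_goals exact Continuous.intervalIntegrable (by fun_prop) _ _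
  have hmix : ∀ (ψ : ℝ → ℝ), Continuous ψ → ∀ s t : ℝ, ∫ v in (0:ℝ)..(2*π), ψ v *
      ((s * σ v + t * μ v) + (s * deriv (deriv σ) v + t * deriv (deriv μ) v)) =
      s * mixedWulffEnergy ψ σ + t * mixedWulffEnergy ψ μ := by
    intro ψ cψ s t
    have c1 := Hσ.cq
    have c2 := Hμ.cq
    rw [mixedWulffEnergy, mixedWulffEnergy, ← intervalIntegral.integral_const_mul,
      ← intervalIntegral.integral_const_mul, ← intervalIntegral.integral_add]
    · congr 1; ext u; ring
    all_goals exact Continuous.intervalIntegrable (by fun_prop) _ _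
  have hW : ∀ s t : ℝ, ∫ v in (0:ℝ)..(2*π), (s * σ v + t * μ v) *
      ((s * σ v + t * μ v) + (s * deriv (deriv σ) v + t * deriv (deriv μ) v)) =
      2 * (s ^ 2 * a ^ 2 + s * t * M + t ^ 2 * b ^ 2) := by
    intro s t
    have c1 := Hσ.cq
    have c2 := Hμ.cq
    have e1 := hmix σ cσ s t
    have e2 := hmix μ cμ s t
    rw [ha2] at e1
    rw [hsym, hb2] at e2
    have : ∫ v in (0:ℝ)..(2*π), (s * σ v + t * μ v) *
      ((s * σ v + t * μ v) + (s * deriv (deriv σ) v + t * deriv (deriv μ) v)) =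
      s * (s * (2 * a ^ 2) + t * M) + t * (s * M + t * (2 * b ^ 2)) := by
      rw [← e1, ← e2, ← intervalIntegral.integral_const_mul,
        ← intervalIntegral.integral_const_mul, ← intervalIntegral.integral_add]
      · congr 1; ext u; ring
      all_goals exact Continuous.intervalIntegrable (by fun_prop) _ _
    rw [this]; ring
  have Htil := supD_comb Hσ Hμ hb0 ha0
  have hpt : ∀ t, wulffPoint (fun s => b * σ s + a * μ s) t =
      (w1 (fun t => b * σ t + a * μ t) (fun t => b * deriv σ t + a * deriv μ t) t,
       w2 (fun t => b * σ t + a * μ t) (fun t => b * deriv σ t + a * deriv μ t) t) := by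
    intro t
    rw [wulffPoint, (Htil.dφ t).deriv]
    simp [w1, w2]
    ring
  constructor
  · intro heq
    have Hhat := supD_comb Hσ Hμ hLμ0 hLσ0
    have k := (CrvD.wulff_full Hhat hcurve hA2 (by rw [hW]; positivity)).1
    rw [hW, hL] at k
    have hbal : a * Lμ = b * Lσ := by
      have k2 : A * (a * Lμ - b * Lσ) ^ 2 ≤ 0 := by
        have : (Lμ * Lσ + Lσ * Lμ) ^ 2 = 2 * Lσ * Lμ * ((2 * (a * b) + M) * A) := by
          linear_combination 4 * Lσ * Lμ * heq
        rw [this] at k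
        linear_combination k / 2
      have k3 : (a * Lμ - b * Lσ) ^ 2 ≤ 0 := by
        by_contra hh
        push Not at hh
        have := mul_pos hA2 hh
        linarith
      have k4 := pow_eq_zero_iff two_ne_zero |>.1 (le_antisymm k3 (sq_nonneg _))
      linarith
    have kk := (CrvD.wulff_full Htil hcurve hA2 (by rw [hW]; positivity)).2
    rw [hW, hL] at kk
    obtain ⟨r, hr, c, d, hrep⟩ := kk (by
      linear_combination 4 * a * b * heq + (b * Lσ - a * Lμ) * (-hbal))
    refine ⟨r, hr, (c, d), ?_⟩
    have hx' : ∀ u, x u = r • wulffPoint (fun s => b * σ s + a * μ s) (ν u) + (c, d) := by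
      intro u
      rw [hpt]
      exact Prod.ext (hrep u).1 (hrep u).2
    have hsurj : Function.Surjective ν := by
      have hint : ∀ n : ℕ, ν n = ν 0 + n * (2 * π) ∧ ν (-n) = ν 0 - n * (2 * π) := by
        intro n
        induction n with
        | zero => simp
        | succ n ih =>
          refine ⟨?_, ?_⟩
          · push_cast; rw [hνper, ih.1]; ring
          · have := hνper (-((n + 1 : ℕ) : ℝ))
            rw [show -((n + 1 : ℕ) : ℝ) + 1 = -(n : ℝ) by push_cast; ring, ih.2] at this
            push_cast at this ⊢
            linarith
      intro t
      have hpi := two_pi_pos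
      obtain ⟨n, hn⟩ := exists_nat_ge (|t - ν 0| / (2 * π))
      rw [div_le_iff₀ hpi] at hn
      exact mem_range_of_exists_le_of_exists_ge hνc
        ⟨-n, by rw [(hint n).2]; linarith [neg_abs_le (t - ν 0)]⟩
        ⟨n, by rw [(hint n).1]; linarith [le_abs_self (t - ν 0)]⟩
    ext z
    constructor
    · rintro ⟨u, rfl⟩
      exact ⟨ν u, (hx' u).symm⟩
    · rintro ⟨t, rfl⟩
      obtain ⟨u, rfl⟩ := hsurj t
      exact ⟨u, hx' u⟩
  · rintro ⟨c, hc, v, hrange⟩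
    have hr0 : ∀ u, ∃ t, (x u).1 =
        c * w1 (fun t => b * σ t + a * μ t) (fun t => b * deriv σ t + a * deriv μ t) t + v.1 ∧
        (x u).2 =
        c * w2 (fun t => b * σ t + a * μ t) (fun t => b * deriv σ t + a * deriv μ t) t + v.2 := by
      intro u
      obtain ⟨t, ht⟩ := hrange ▸ Set.mem_range_self (f := x) u
      refine ⟨t, ?_⟩
      simp only [hpt] at ht
      rw [← ht]
      simp
    have hpos : ∀ t, 0 < b * σ t + a * μ t := fun t =>
      add_pos (mul_pos hb0 (hσpos t)) (mul_pos ha0 (hμpos t))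
    have hrep := CrvD.param Htil hpos hcurve hA2 hc hr0
    have l1 := CrvD.length_eq Htil hcurve hc hrep cσ hσper
    have l2 := CrvD.length_eq Htil hcurve hc hrep cμ hμper
    rw [hmix σ cσ, ha2] at l1
    rw [hmix μ cμ, hsym, hb2] at l2
    have hAe : A = c * (b * Lσ + a * Lμ) := by
      rw [← hL, ← intervalIntegral.integral_const_mul]
      refine (hcurve.area_shift v.1 v.2).trans ?_
      congr 1; ext u
      rw [(hrep u).1, (hrep u).2]
      simp only [w1, w2]
      linear_combination c * (b * σ (ν u) + a * μ (ν u)) * g u * sin_sq_add_cos_sq (ν u)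
    rw [hAe]
    change Lσ = _ at l1
    change Lμ = _ at l2
    rw [l1, l2]
    ring
end

section
/- Anisoperimetric inequality: for any anisotropy function σ and any closed curve Γ, L_σ(Γ)² ≥ 4|W_σ|·A(Γ). -/
open Real

namespace AnisoAux

lemma support_ineq (σ p q : ℝ → ℝ) (hσ : ∀ t, HasDerivAt σ (p t) t) (hp : ∀ t, HasDerivAt p (q t) t)
    (hper : ∀ t, σ (t + 2 * π) = σ t) (hpper : ∀ t, p (t + 2 * π) = p t)
    (hk : ∀ t, 0 < σ t + q t) (φ ν : ℝ) :
    (σ φ * sin φ + p φ * cos φ) * sin ν - (p φ * sin φ - σ φ * cos φ) * cos ν ≤ σ ν := by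
  set H : ℝ → ℝ := fun s => σ s * cos (ν - s) + p s * sin (ν - s) with hH
  have hd : ∀ s, HasDerivAt H ((σ s + q s) * sin (ν - s)) s := by
    intro s
    have h0 : HasDerivAt (fun s : ℝ => ν - s) (-1) s := by
      simpa using (hasDerivAt_id s).const_sub ν
    have h1 := ((hσ s).mul h0.cos).add ((hp s).mul h0.sin)
    exact h1.congr_deriv (by ring)
  have hc : Continuous H := continuous_iff_continuousAt.2 fun s => (hd s).continuousAt
  have hHper : Function.Periodic H (2 * π) := by
    intro s
    have e : ν - (s + 2 * π) = (ν - s) - 2 * π := by ring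
    simp only [hH, hper, hpper, e, cos_sub_two_pi, sin_sub_two_pi]
  have hφ : H φ ≤ H ν := by
    obtain ⟨φ', hφ', e⟩ := hHper.exists_mem_Ico (by positivity) φ (ν - π)
    rw [e]
    rcases le_total φ' ν with h | h
    · have : MonotoneOn H (Set.Icc (ν - π) ν) := by
        refine monotoneOn_of_deriv_nonneg (convex_Icc _ _) hc.continuousOn
          (fun s _ => (hd s).differentiableAt.differentiableWithinAt) ?_
        intro s hs
        rw [interior_Icc] at hs
        rw [(hd s).deriv]
        exact mul_nonneg (hk s).le (sin_nonneg_of_nonneg_of_le_pi (by linarith [hs.2]) (by linarith [hs.1]))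
      exact this ⟨hφ'.1, h⟩ ⟨by linarith [pi_pos], le_rfl⟩ h
    · have : AntitoneOn H (Set.Icc ν (ν + π)) := by
        refine antitoneOn_of_deriv_nonpos (convex_Icc _ _) hc.continuousOn
          (fun s _ => (hd s).differentiableAt.differentiableWithinAt) ?_
        intro s hs
        rw [interior_Icc] at hs
        rw [(hd s).deriv]
        exact mul_nonpos_of_nonneg_of_nonpos (hk s).le
          (sin_nonpos_of_nonpos_of_neg_pi_le (by linarith [hs.1]) (by linarith [hs.2]))
      exact this ⟨le_rfl, by linarith [pi_pos]⟩ ⟨h, by linarith [hφ'.2]⟩ h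
  have e1 : H ν = σ ν := by simp [hH]
  have e2 : H φ = (σ φ * sin φ + p φ * cos φ) * sin ν - (p φ * sin φ - σ φ * cos φ) * cos ν := by
    simp only [hH, cos_sub, sin_sub]; ring
  linarith

lemma exists_inv (m : ℝ → ℝ) (α β : ℝ) (h : α ≤ β) (hc : Continuous m)
    (hm : StrictMonoOn m (Set.Icc α β)) :
    ∃ θ : ℝ → ℝ, Continuous θ ∧ (∀ t ∈ Set.Icc (m α) (m β), m (θ t) = t) ∧
      ∀ s ∈ Set.Icc α β, θ (m s) = s := by
  have hαβ : m α ≤ m β := hm.monotoneOn ⟨le_rfl, h⟩ ⟨h, le_rfl⟩ h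
  let F : Set.Icc α β → Set.Icc (m α) (m β) := fun s =>
    ⟨m s, hm.monotoneOn ⟨le_rfl, h⟩ s.2 s.2.1, hm.monotoneOn s.2 ⟨h, le_rfl⟩ s.2.2⟩
  have hF : StrictMono F := fun a b hab => hm a.2 b.2 hab
  have hs : Function.Surjective F := by
    rintro ⟨t, ht⟩
    obtain ⟨s, hs, e⟩ := intermediate_value_Icc h hc.continuousOn ht
    exact ⟨⟨s, hs⟩, Subtype.ext e⟩
  let I := StrictMono.orderIsoOfSurjective F hF hs
  have hI : ∀ s, I s = F s := fun s => rfl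
  refine ⟨fun t => (I.symm (Set.projIcc (m α) (m β) hαβ t) : ℝ), ?_, ?_, ?_⟩
  · exact continuous_subtype_val.comp (I.symm.continuous.comp continuous_projIcc)
  · intro t ht
    have h1 : I (I.symm ⟨t, ht⟩) = ⟨t, ht⟩ := I.apply_symm_apply _
    rw [hI] at h1
    have h2 := congrArg Subtype.val h1
    simpa [F, Set.projIcc_of_mem hαβ ht] using h2
  · intro s hs'
    have h1 : I.symm (I ⟨s, hs'⟩) = ⟨s, hs'⟩ := I.symm_apply_apply _
    have h2 := congrArg Subtype.val h1
    have h3 : Set.projIcc (m α) (m β) hαβ (m s) = I ⟨s, hs'⟩ :=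
      Set.projIcc_of_mem hαβ (F ⟨s, hs'⟩).2
    simp only [h3, h2]

/-- One half of the Schmidt argument; `ε` is `1` or `-1`. -/
lemma half (ε : ℝ) (hε : ε * ε = 1) (σ w1 w2 k : ℝ → ℝ) (α β : ℝ) (hαβ : α ≤ β)
    (hσ : Continuous σ) (hw1 : ∀ t, HasDerivAt w1 (k t) t) (hk : Continuous k) (hw2 : Continuous w2)
    (hmono : StrictMonoOn (fun t => ε * w1 t) (Set.Icc α β))
    (hsup : ∀ φ ν, w1 φ * sin ν - w2 φ * cos ν ≤ σ ν)
    (y g ν : ℝ → ℝ) (hg : ∀ u, 0 ≤ g u) (hgc : Continuous g) (hν : Continuous ν)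
    (hy : ∀ u, HasDerivAt y (g u * cos (ν u)) u) (a b : ℝ) (hab : a ≤ b)
    (ha : y a = w1 α) (hb : y b = w1 β)
    (hr : ∀ u ∈ Set.Icc a b, ε * y u ∈ Set.Icc (ε * w1 α) (ε * w1 β)) :
    (∫ u in a..b, y u * (g u * sin (ν u))) - (∫ s in α..β, w2 s * k s) ≤
      ∫ u in a..b, σ (ν u) * g u := by
  have hw1c : Continuous w1 := continuous_iff_continuousAt.2 fun s => (hw1 s).continuousAt
  have hyc : Continuous y := continuous_iff_continuousAt.2 fun s => (hy s).continuousAt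
  obtain ⟨θ, hθ, hθ1, hθ2⟩ := exists_inv (fun t => ε * w1 t) α β hαβ (by fun_prop) hmono
  have hε0 : ε ≠ 0 := by rintro rfl; simp at hε
  have i1 : ∫ u in a..b, w2 (θ (ε * y u)) * (ε * (g u * cos (ν u))) =
      ∫ t in (ε * y a)..(ε * y b), w2 (θ t) :=
    intervalIntegral.integral_comp_mul_deriv (f := fun u => ε * y u) (g := fun t => w2 (θ t))
      (fun u _ => (hy u).const_mul ε) (by fun_prop) (by fun_prop)
  have i2 : ∫ s in α..β, w2 (θ (ε * w1 s)) * (ε * k s) =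
      ∫ t in (ε * w1 α)..(ε * w1 β), w2 (θ t) :=
    intervalIntegral.integral_comp_mul_deriv (f := fun u => ε * w1 u) (g := fun t => w2 (θ t))
      (fun u _ => (hw1 u).const_mul ε) (by fun_prop) (by fun_prop)
  have i3 : ∫ s in α..β, w2 (θ (ε * w1 s)) * (ε * k s) = ∫ s in α..β, ε * (w2 s * k s) := by
    apply intervalIntegral.integral_congr
    intro s hs
    rw [Set.uIcc_of_le hαβ] at hs
    have := hθ2 s hs
    simp only at this ⊢
    rw [this]; ring
  have i4 : ∫ u in a..b, w2 (θ (ε * y u)) * (ε * (g u * cos (ν u))) =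
      ∫ u in a..b, ε * (w2 (θ (ε * y u)) * (g u * cos (ν u))) := by
    congr 1; ext u; ring
  rw [ha, hb, ← i2, i3, i4, intervalIntegral.integral_const_mul,
    intervalIntegral.integral_const_mul] at i1
  have i5 := mul_left_cancel₀ hε0 i1
  rw [← i5, ← intervalIntegral.integral_sub]
  · apply intervalIntegral.integral_mono_on hab
    · apply Continuous.intervalIntegrable; fun_prop
    · apply Continuous.intervalIntegrable; fun_prop
    · intro u hu
      have h1 : ε * w1 (θ (ε * y u)) = ε * y u := hθ1 _ (hr u hu)
      have h2 := mul_left_cancel₀ hε0 h1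
      have h3 := mul_le_mul_of_nonneg_right (hsup (θ (ε * y u)) (ν u)) (hg u)
      rw [h2] at h3
      linarith
  · apply Continuous.intervalIntegrable; fun_prop
  · apply Continuous.intervalIntegrable; fun_prop

/-- Facts about the Wulff shape. -/
lemma wulff (σ p q : ℝ → ℝ) (hσ : ∀ t, HasDerivAt σ (p t) t) (hp : ∀ t, HasDerivAt p (q t) t)
    (hq : Continuous q)
    (hper : ∀ t, σ (t + 2 * π) = σ t) (hpper : ∀ t, p (t + 2 * π) = p t)
    (hqper : ∀ t, q (t + 2 * π) = q t) :
    -(∫ s in (-(π / 2))..(π / 2 + π), (p s * sin s - σ s * cos s) * ((σ s + q s) * cos s)) =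
      (1 / 2) * ∫ s in (0:ℝ)..(2 * π), σ s * (σ s + q s) := by
  have hσc : Continuous σ := continuous_iff_continuousAt.2 fun s => (hσ s).continuousAt
  have hpc : Continuous p := continuous_iff_continuousAt.2 fun s => (hp s).continuousAt
  have hP : Function.Periodic (fun s => σ s * (σ s + q s)) (2 * π) := by
    intro s; simp only [hper, hqper]
  have e1 := hP.intervalIntegral_add_eq 0 (-(π / 2))
  rw [zero_add, show -(π / 2) + 2 * π = π / 2 + π by ring] at e1
  rw [e1]
  have hD : ∀ s, HasDerivAt (fun s => (σ s * sin s + p s * cos s) * (p s * sin s - σ s * cos s))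
      (((σ s + q s) * cos s) * (p s * sin s - σ s * cos s) +
        (σ s * sin s + p s * cos s) * ((σ s + q s) * sin s)) s := by
    intro s
    have h1 := ((hσ s).mul (hasDerivAt_sin s)).add ((hp s).mul (hasDerivAt_cos s))
    have h2 := ((hp s).mul (hasDerivAt_sin s)).sub ((hσ s).mul (hasDerivAt_cos s))
    refine (h1.mul h2).congr_deriv ?_
    simp only [Pi.add_apply, Pi.sub_apply, Pi.mul_apply]
    ring
  have e2 := intervalIntegral.integral_eq_sub_of_hasDerivAt (a := -(π / 2)) (b := π / 2 + π)
    (fun s _ => hD s) (by apply Continuous.intervalIntegrable; fun_prop)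
  have e3 : (fun s => (σ s * sin s + p s * cos s) * (p s * sin s - σ s * cos s)) (π / 2 + π) =
      (fun s => (σ s * sin s + p s * cos s) * (p s * sin s - σ s * cos s)) (-(π / 2)) := by
    have : π / 2 + π = -(π / 2) + 2 * π := by ring
    simp only [this, hper, hpper, sin_add_two_pi, cos_add_two_pi]
  have e2 := e2.trans (sub_eq_zero.2 e3)
  have e4 : ∀ s, σ s * (σ s + q s) = (((σ s + q s) * cos s) * (p s * sin s - σ s * cos s) +
        (σ s * sin s + p s * cos s) * ((σ s + q s) * sin s)) -
        2 * ((p s * sin s - σ s * cos s) * ((σ s + q s) * cos s)) := by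
    intro s
    linear_combination (-(σ s * (σ s + q s))) * sin_sq_add_cos_sq s
  simp only [e4]
  rw [intervalIntegral.integral_sub, e2, intervalIntegral.integral_const_mul]
  · ring
  · apply Continuous.intervalIntegrable; fun_prop
  · apply Continuous.intervalIntegrable; fun_prop

lemma deriv_per (f f' : ℝ → ℝ) (T : ℝ) (hf : ∀ t, HasDerivAt f (f' t) t)
    (hper : ∀ t, f (t + T) = f t) (t : ℝ) : f' (t + T) = f' t := by
  have h1 := (hf (t + T)).comp_add_const t T
  simp only [hper] at h1
  exact h1.unique (hf t)

set_option maxHeartbeats 1000000 in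
lemma main (σ p q : ℝ → ℝ) (hσ : ∀ t, HasDerivAt σ (p t) t) (hp : ∀ t, HasDerivAt p (q t) t)
    (hq : Continuous q) (hσpos : ∀ t, 0 < σ t)
    (hper : ∀ t, σ (t + 2 * π) = σ t) (hk : ∀ t, 0 < σ t + q t)
    (x y g ν : ℝ → ℝ) (hg : ∀ u, 0 < g u) (hgc : Continuous g) (hν : Continuous ν)
    (hx : ∀ u, HasDerivAt x (g u * cos (ν u)) u) (hy : ∀ u, HasDerivAt y (g u * sin (ν u)) u)
    (hxper : ∀ u, x (u + 1) = x u) (hyper : ∀ u, y (u + 1) = y u)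
    (hνper : ∀ u, ν (u + 1) = ν u + 2 * π)
    (hA : 0 < (1 / 2) * ∫ u in (0:ℝ)..1, (x u * (g u * sin (ν u)) - y u * (g u * cos (ν u)))) :
    4 * ((1 / 2) * ∫ s in (0:ℝ)..(2 * π), σ s * (σ s + q s)) *
      ((1 / 2) * ∫ u in (0:ℝ)..1, (x u * (g u * sin (ν u)) - y u * (g u * cos (ν u)))) ≤
    (∫ u in (0:ℝ)..1, σ (ν u) * g u) ^ 2 := by
  have hσc : Continuous σ := continuous_iff_continuousAt.2 fun s => (hσ s).continuousAt
  have hpc : Continuous p := continuous_iff_continuousAt.2 fun s => (hp s).continuousAt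
  have hxc : Continuous x := continuous_iff_continuousAt.2 fun s => (hx s).continuousAt
  have hyc : Continuous y := continuous_iff_continuousAt.2 fun s => (hy s).continuousAt
  have hpper := deriv_per σ p _ hσ hper
  have hqper := deriv_per p q _ hp hpper
  have hx'per := deriv_per x _ _ hx hxper
  have hy'per := deriv_per y _ _ hy hyper
  have hgper : ∀ u, g (u + 1) = g u := by
    intro u
    have h1 := hx'per u
    have h2 := hy'per u
    simp only [hνper, cos_add_two_pi, sin_add_two_pi] at h1 h2
    linear_combination (cos (ν u)) * h1 + (sin (ν u)) * h2 -
      (g (u + 1) - g u) * sin_sq_add_cos_sq (ν u)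
  have hW := wulff σ p q hσ hp hq hper hpper hqper
  have hWpos : 0 < (1 / 2) * ∫ s in (0:ℝ)..(2 * π), σ s * (σ s + q s) := by
    apply mul_pos (by norm_num)
    apply intervalIntegral.intervalIntegral_pos_of_pos
    · apply Continuous.intervalIntegrable; fun_prop
    · intro s; exact mul_pos (hσpos s) (hk s)
    · positivity
  set W := (1 / 2) * ∫ s in (0:ℝ)..(2 * π), σ s * (σ s + q s)
  set A := (1 / 2) * ∫ u in (0:ℝ)..1, (x u * (g u * sin (ν u)) - y u * (g u * cos (ν u))) with hAdef
  -- minimum and maximum of the first coordinate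
  obtain ⟨a, -, ha⟩ := isCompact_Icc.exists_isMinOn (Set.nonempty_Icc.2 (zero_le_one (α := ℝ)))
    hxc.continuousOn
  have hamin : ∀ u, x a ≤ x u := by
    intro u
    obtain ⟨v, hv, e⟩ := (show Function.Periodic x 1 from hxper).exists_mem_Ico₀ one_pos u
    rw [e]
    exact ha ⟨hv.1, hv.2.le⟩
  obtain ⟨b, hb, hbm⟩ := isCompact_Icc.exists_isMaxOn
    (Set.nonempty_Icc.2 (show a ≤ a + 1 by linarith)) hxc.continuousOn
  have hbmax : ∀ u ∈ Set.Icc a (a + 1), x u ≤ x b := fun u hu => hbm hu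
  -- area formula
  have hL : ∫ u in (0:ℝ)..1, σ (ν u) * g u = ∫ u in a..(a + 1), σ (ν u) * g u := by
    have hP : Function.Periodic (fun u => σ (ν u) * g u) 1 := by
      intro u; simp only [hνper, hper, hgper]
    simpa using hP.intervalIntegral_add_eq 0 a
  have hAa : A = (1 / 2) * ∫ u in a..(a + 1),
      (x u * (g u * sin (ν u)) - y u * (g u * cos (ν u))) := by
    have hP : Function.Periodic
        (fun u => x u * (g u * sin (ν u)) - y u * (g u * cos (ν u))) 1 := by
      intro u; simp only [hνper, hgper, hxper, hyper, sin_add_two_pi, cos_add_two_pi]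
    have := hP.intervalIntegral_add_eq 0 a
    rw [zero_add] at this
    rw [hAdef, this]
  have hAc : ∀ c, A = ∫ u in a..(a + 1), (x u - c) * (g u * sin (ν u)) := by
    intro c
    have hD : ∀ u, HasDerivAt (fun u => (x u - 2 * c) * y u)
        (g u * cos (ν u) * y u + (x u - 2 * c) * (g u * sin (ν u))) u := fun u =>
      ((hx u).sub_const (2 * c)).mul (hy u)
    have e2 := intervalIntegral.integral_eq_sub_of_hasDerivAt (a := a) (b := a + 1)
      (fun s _ => hD s) (by apply Continuous.intervalIntegrable; fun_prop)
    simp only [hxper, hyper, sub_self] at e2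
    have e4 : ∀ u, x u * (g u * sin (ν u)) - y u * (g u * cos (ν u)) =
        2 * ((x u - c) * (g u * sin (ν u))) -
          (g u * cos (ν u) * y u + (x u - 2 * c) * (g u * sin (ν u))) := by
      intro u; ring
    rw [hAa]
    simp only [e4]
    rw [intervalIntegral.integral_sub, e2, intervalIntegral.integral_const_mul]
    · ring
    · apply Continuous.intervalIntegrable; fun_prop
    · apply Continuous.intervalIntegrable; fun_prop
  have hlt : x a < x b := by
    by_contra hcon
    have : A = 0 := by
      rw [hAc (x a)]
      rw [intervalIntegral.integral_congr (g := fun _ => (0:ℝ))]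
      · simp
      · intro u hu
        rw [Set.uIcc_of_le (by linarith)] at hu
        have : x u = x a := le_antisymm ((hbmax u hu).trans (not_lt.1 hcon)) (hamin u)
        simp [this]
    linarith
  -- Wulff shape parametrisation
  set w1 : ℝ → ℝ := fun s => σ s * sin s + p s * cos s with hw1
  set w2 : ℝ → ℝ := fun s => p s * sin s - σ s * cos s with hw2
  set k : ℝ → ℝ := fun s => (σ s + q s) * cos s with hkdef
  have hw1d : ∀ s, HasDerivAt w1 (k s) s := by
    intro s
    have h1 := ((hσ s).mul (hasDerivAt_sin s)).add ((hp s).mul (hasDerivAt_cos s))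
    refine h1.congr_deriv ?_
    simp only [hkdef]
    ring
  have hw1c : Continuous w1 := by fun_prop
  have hw2c : Continuous w2 := by fun_prop
  have hkc : Continuous k := by fun_prop
  have hsup : ∀ φ ν, w1 φ * sin ν - w2 φ * cos ν ≤ σ ν :=
    support_ineq σ p q hσ hp hper hpper hk
  have hm1 : StrictMonoOn (fun t => 1 * w1 t) (Set.Icc (-(π / 2)) (π / 2)) := by
    apply strictMonoOn_of_deriv_pos (convex_Icc _ _) (by fun_prop)
    intro s hs
    rw [interior_Icc] at hs
    rw [((hw1d s).const_mul 1).deriv, one_mul]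
    exact mul_pos (hk s) (cos_pos_of_mem_Ioo hs)
  have hm2 : StrictMonoOn (fun t => (-1) * w1 t) (Set.Icc (π / 2) (π / 2 + π)) := by
    apply strictMonoOn_of_deriv_pos (convex_Icc _ _) (by fun_prop)
    intro s hs
    rw [interior_Icc] at hs
    rw [((hw1d s).const_mul (-1)).deriv]
    have : cos s < 0 := cos_neg_of_pi_div_two_lt_of_lt hs.1 (by linarith [hs.2])
    have := mul_neg_of_pos_of_neg (hk s) this
    simp only [hkdef]; linarith
  have hwper : w1 (π / 2 + π) = w1 (-(π / 2)) := by
    have : π / 2 + π = -(π / 2) + 2 * π := by ring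
    simp only [hw1, this, hper, hpper, sin_add_two_pi, cos_add_two_pi]
  have hwlt : w1 (-(π / 2)) < w1 (π / 2) := by
    have h := hm1 (a := -(π / 2)) (b := π / 2) ⟨le_rfl, by linarith [pi_pos]⟩
      ⟨by linarith [pi_pos], le_rfl⟩ (by linarith [pi_pos])
    simpa using h
  -- normalisation
  set α := w1 (-(π / 2)) with hα
  set β := w1 (π / 2) with hβ
  set r := (x b - x a) / (β - α) with hr
  have hrpos : 0 < r := div_pos (by linarith) (by linarith)
  set z : ℝ → ℝ := fun u => (x u - x a) / r + α with hz
  have hzd : ∀ u, HasDerivAt z (g u / r * cos (ν u)) u := by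
    intro u
    have := (((hx u).sub_const (x a)).div_const r).add_const α
    exact this.congr_deriv (by ring)
  have hza : z a = α := by simp [hz]
  have hza1 : z (a + 1) = α := by simp [hz, hxper]
  have hzb : z b = β := by
    have h1 : x b - x a ≠ 0 := by linarith
    have h2 : β - α ≠ 0 := by linarith
    simp only [hz, hr]
    field_simp
    ring
  have hzr : ∀ u ∈ Set.Icc a (a + 1), α ≤ z u ∧ z u ≤ β := by
    intro u hu
    constructor
    · have : 0 ≤ (x u - x a) / r := div_nonneg (by linarith [hamin u]) hrpos.le
      simp only [hz]; linarith
    · rw [← hzb]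
      have := hbmax u hu
      simp only [hz]
      gcongr
  have hzc : Continuous z := by fun_prop
  have h1 := half 1 (by norm_num) σ w1 w2 k (-(π / 2)) (π / 2) (by linarith [pi_pos]) hσc hw1d hkc hw2c
    hm1 hsup z (fun u => g u / r) ν (fun u => (div_pos (hg u) hrpos).le) (by fun_prop) hν hzd a b hb.1
    hza hzb (by
      intro u hu
      have := hzr u ⟨hu.1, hu.2.trans hb.2⟩
      simpa using this)
  have h2 := half (-1) (by norm_num) σ w1 w2 k (π / 2) (π / 2 + π) (by linarith [pi_pos]) hσc hw1d hkc
    hw2c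
    hm2 hsup z (fun u => g u / r) ν (fun u => (div_pos (hg u) hrpos).le) (by fun_prop) hν hzd b (a + 1)
    hb.2 hzb (by rw [hwper]; exact hza1) (by
      intro u hu
      have := hzr u ⟨hb.1.trans hu.1, hu.2⟩
      rw [hwper]
      constructor <;> linarith [this.1, this.2])
  have s1 := intervalIntegral.integral_add_adjacent_intervals (a := a) (b := b) (c := a + 1)
    (f := fun u => z u * (g u / r * sin (ν u))) (μ := MeasureTheory.volume)
    (by apply Continuous.intervalIntegrable; fun_prop)
    (by apply Continuous.intervalIntegrable; fun_prop)
  have s2 := intervalIntegral.integral_add_adjacent_intervals (a := -(π / 2)) (b := π / 2)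
    (c := π / 2 + π)
    (f := fun s => w2 s * k s) (μ := MeasureTheory.volume)
    (by apply Continuous.intervalIntegrable; fun_prop)
    (by apply Continuous.intervalIntegrable; fun_prop)
  have s3 := intervalIntegral.integral_add_adjacent_intervals (a := a) (b := b) (c := a + 1)
    (f := fun u => σ (ν u) * (g u / r)) (μ := MeasureTheory.volume)
    (by apply Continuous.intervalIntegrable; fun_prop)
    (by apply Continuous.intervalIntegrable; fun_prop)
  have t1 : ∫ u in a..(a + 1), z u * (g u / r * sin (ν u)) = A / r ^ 2 := by
    rw [hAc (x a - r * α), ← intervalIntegral.integral_div]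
    congr 1; ext u
    simp only [hz]
    field_simp
    ring
  have t3 : ∫ u in a..(a + 1), σ (ν u) * (g u / r) = (∫ u in a..(a + 1), σ (ν u) * g u) / r := by
    rw [← intervalIntegral.integral_div]
    congr 1; ext u
    ring
  have hmain : A / r ^ 2 + W ≤ (∫ u in a..(a + 1), σ (ν u) * g u) / r := by
    rw [← t1, ← t3, ← hW]
    linarith
  rw [hL]
  set L := ∫ u in a..(a + 1), σ (ν u) * g u
  have h3 : A + W * r ^ 2 ≤ L * r := by
    clear_value A W L r
    have h := mul_le_mul_of_nonneg_right hmain (sq_nonneg r)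
    have e1 : (A / r ^ 2 + W) * r ^ 2 = A + W * r ^ 2 := by field_simp
    have e2 : L / r * r ^ 2 = L * r := by field_simp
    rwa [e1, e2] at h
  have h4 : 0 < A + W * r ^ 2 := by positivity
  have h5 : (A + W * r ^ 2) ^ 2 ≤ (L * r) ^ 2 := pow_le_pow_left₀ h4.le h3 2
  have h6 : (4 * W * A) * r ^ 2 ≤ L ^ 2 * r ^ 2 := by
    nlinarith [sq_nonneg (A - W * r ^ 2)]
  exact le_of_mul_le_mul_right h6 (by positivity)

end AnisoAux

/-- Anisoperimetric inequality: `L_σ(Γ)² ≥ 4|W_σ|·A(Γ)` for any closed curve `Γ`. -/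
theorem anisoperimetric_inequality
    (σ : ℝ → ℝ)
    (hσs : ContDiff ℝ (⊤ : ℕ∞) σ) (hσper : ∀ ν, σ (ν + 2 * π) = σ ν)
    (hσpos : ∀ ν, 0 < σ ν) (hσconv : ∀ ν, 0 < σ ν + deriv (deriv σ) ν)
    -- a closed curve `x` with speed `g` and tangent-angle lift `ν`
    (x : ℝ → ℝ × ℝ) (g ν : ℝ → ℝ)
    (hx : ContDiff ℝ 2 x)
    (hxper : ∀ u, x (u + 1) = x u)
    (hg : ∀ u, 0 < g u)
    (htang : ∀ u, HasDerivAt x (g u • ((Real.cos (ν u), Real.sin (ν u)) : ℝ × ℝ)) u)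
    (hνc : Continuous ν)
    (hνper : ∀ u, ν (u + 1) = ν u + 2 * π)
    (hinj : Set.InjOn x (Set.Ico 0 1))
    -- positive enclosed area
    (hA : 0 < (1 / 2) * ∫ u in (0:ℝ)..1,
        ((x u).1 * (g u * Real.sin (ν u)) - (x u).2 * (g u * Real.cos (ν u)))) :
    (∫ u in (0:ℝ)..1, σ (ν u) * g u) ^ 2 ≥
      4 * wulffArea σ *
        ((1 / 2) * ∫ u in (0:ℝ)..1,
          ((x u).1 * (g u * Real.sin (ν u)) - (x u).2 * (g u * Real.cos (ν u)))) := by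
  have h1 : ContDiff ℝ 1 (deriv σ) := by
    have : ContDiff ℝ (1 + 1) σ := hσs.of_le (by norm_cast)
    exact (contDiff_succ_iff_deriv.1 this).2.2
  have hd1 : ∀ u, HasDerivAt (fun u => (x u).1) (g u * cos (ν u)) u := by
    intro u
    exact ((hasFDerivAt_fst (p := x u)).comp_hasDerivAt u (htang u)).congr_deriv (by simp)
  have hd2 : ∀ u, HasDerivAt (fun u => (x u).2) (g u * sin (ν u)) u := by
    intro u
    exact ((hasFDerivAt_snd (p := x u)).comp_hasDerivAt u (htang u)).congr_deriv (by simp)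
  have hx' : Continuous (deriv x) := hx.continuous_deriv (by norm_num)
  have hgc : Continuous g := by
    have e : g = fun u => (deriv x u).1 * cos (ν u) + (deriv x u).2 * sin (ν u) := by
      ext u
      rw [(htang u).deriv]
      simp only [Prod.smul_mk, smul_eq_mul]
      linear_combination (-(g u)) * sin_sq_add_cos_sq (ν u)
    rw [e]
    fun_prop
  have := AnisoAux.main σ (deriv σ) (deriv (deriv σ))
    (fun t => (hσs.differentiable (by simp) t).hasDerivAt)
    (fun t => (h1.differentiable (by simp) t).hasDerivAt)
    (h1.continuous_deriv le_rfl) hσpos hσper hσconv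
    (fun u => (x u).1) (fun u => (x u).2) g ν hg hgc hνc hd1 hd2
    (fun u => by simp only [hxper]) (fun u => by simp only [hxper]) hνper hA
  exact this
end

section
/- Mixed anisoperimetric inequality with μ ≡ 1: for any anisotropy function σ and any closed curve Γ, L_σ(Γ)·L(Γ) ≥ (2√(π·|W_σ|) + L(∂W_σ))·A(Γ), where L(Γ) = ∫₀¹ |x'(u)| du is the total length of Γ. -/
open Real

/-- The Wulff perimeter `L(∂W_σ) = ∫₀^{2π} σ(ν) dν`. -/
noncomputable def wulffPerimeter (σ : ℝ → ℝ) : ℝ :=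
  ∫ ν in (0:ℝ)..(2 * π), σ ν

/-- Support inequality for the Wulff shape. -/
lemma aux_support (σ s1 s2 : ℝ → ℝ) (h1 : ∀ t, HasDerivAt σ (s1 t) t)
    (h2 : ∀ t, HasDerivAt s1 (s2 t) t) (hper : ∀ t, σ (t + 2 * π) = σ t)
    (hper1 : ∀ t, s1 (t + 2 * π) = s1 t) (hconv : ∀ t, 0 < σ t + s2 t) (θ ν : ℝ) :
    (σ θ * sin θ + s1 θ * cos θ) * sin ν - (-(σ θ * cos θ) + s1 θ * sin θ) * cos ν ≤ σ ν := by
  set q : ℝ → ℝ := fun θ =>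
    (σ θ * sin θ + s1 θ * cos θ) * sin ν - (-(σ θ * cos θ) + s1 θ * sin θ) * cos ν with hq
  have hqper : Function.Periodic q (2 * π) := by
    intro t
    simp only [hq, hper, hper1, sin_add_two_pi, cos_add_two_pi]
  have hd : ∀ t, HasDerivAt q ((σ t + s2 t) * sin (ν - t)) t := by
    intro t
    have := ((((h1 t).mul (hasDerivAt_sin t)).add ((h2 t).mul (hasDerivAt_cos t))).mul_const
      (sin ν)).sub (((((h1 t).mul (hasDerivAt_cos t)).neg).add
        ((h2 t).mul (hasDerivAt_sin t))).mul_const (cos ν))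
    refine this.congr_deriv ?_
    rw [sin_sub]
    ring
  have hqc : Continuous q := continuous_iff_continuousAt.2 fun t => (hd t).continuousAt
  have hqν : q ν = σ ν := by
    simp only [hq]
    have := sin_sq_add_cos_sq ν
    linear_combination (σ ν) * this
  obtain ⟨y, hy, hyq⟩ := hqper.exists_mem_Ico (by positivity : (0:ℝ) < 2 * π) θ (ν - π)
  change q θ ≤ σ ν
  rw [hyq, ← hqν]
  have hpi := pi_pos
  rcases le_total y ν with hyν | hyν
  · have hm : MonotoneOn q (Set.Icc (ν - π) ν) := by
      apply monotoneOn_of_deriv_nonneg (convex_Icc _ _) hqc.continuousOn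
      · exact fun t _ => (hd t).differentiableAt.differentiableWithinAt
      · intro t ht
        rw [interior_Icc] at ht
        rw [(hd t).deriv]
        exact mul_nonneg (hconv t).le
          (sin_nonneg_of_nonneg_of_le_pi (by linarith [ht.2]) (by linarith [ht.1]))
    exact hm ⟨hy.1, hyν⟩ ⟨by linarith, le_rfl⟩ hyν
  · have hm : AntitoneOn q (Set.Icc ν (ν + π)) := by
      apply antitoneOn_of_deriv_nonpos (convex_Icc _ _) hqc.continuousOn
      · exact fun t _ => (hd t).differentiableAt.differentiableWithinAt
      · intro t ht
        rw [interior_Icc] at ht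
        rw [(hd t).deriv]
        exact mul_nonpos_of_nonneg_of_nonpos (hconv t).le
          (sin_nonpos_of_nonpos_of_neg_pi_le (by linarith [ht.1]) (by linarith [ht.2]))
    exact hm ⟨le_rfl, by linarith⟩ ⟨hyν, by linarith [hy.2]⟩ hyν

/-- A function factoring through an injective continuous function on a compact interval. -/
lemma aux_factor (X Y : ℝ → ℝ) (α β : ℝ) (hX : Continuous X) (hY : Continuous Y)
    (hinj : Set.InjOn X (Set.Icc α β)) :
    ∃ f : ℝ → ℝ, Continuous f ∧ ∀ θ ∈ Set.Icc α β, f (X θ) = Y θ := by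
  have he : Topology.IsClosedEmbedding (fun t : Set.Icc α β => X t) :=
    (hX.comp continuous_subtype_val).isClosedEmbedding
      (fun a b hab => Subtype.ext (hinj a.2 b.2 hab))
  obtain ⟨f, hf⟩ := ContinuousMap.exists_extension he
    (⟨fun t : Set.Icc α β => Y t, hY.comp continuous_subtype_val⟩ : C(Set.Icc α β, ℝ))
  refine ⟨f, f.continuous, fun θ hθ => ?_⟩
  exact DFunLike.congr_fun hf ⟨θ, hθ⟩

/-- One arc of the curve against one arc of the Wulff shape. -/
lemma aux_arc (σ X Y X' : ℝ → ℝ) (α β : ℝ) (hαβ : α ≤ β) (hσ : Continuous σ)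
    (hX : ∀ t, HasDerivAt X (X' t) t) (hX' : Continuous X') (hY : Continuous Y)
    (hinj : Set.InjOn X (Set.Icc α β))
    (hsup : ∀ θ ν, X θ * sin ν - Y θ * cos ν ≤ σ ν)
    (a g ν : ℝ → ℝ) (hg : Continuous g) (hν : Continuous ν) (hgpos : ∀ u, 0 < g u)
    (ha : ∀ u, HasDerivAt a (g u * cos (ν u)) u) (u₀ u₁ : ℝ) (hu : u₀ ≤ u₁)
    (h0 : a u₀ = X α) (h1 : a u₁ = X β) (hrange : ∀ u, a u ∈ Set.uIcc (X α) (X β)) :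
    (∫ u in u₀..u₁, a u * (g u * sin (ν u))) - ∫ θ in α..β, Y θ * X' θ
      ≤ ∫ u in u₀..u₁, σ (ν u) * g u := by
  have hXc : Continuous X := continuous_iff_continuousAt.2 fun t => (hX t).continuousAt
  have hac : Continuous a := continuous_iff_continuousAt.2 fun t => (ha t).continuousAt
  obtain ⟨f, hf, hfX⟩ := aux_factor X Y α β hXc hY hinj
  have e1 : ∫ u in u₀..u₁, f (a u) * (g u * cos (ν u)) = ∫ z in (X α)..(X β), f z := by
    have := intervalIntegral.integral_comp_mul_deriv (a := u₀) (b := u₁) (f := a)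
      (f' := fun u => g u * cos (ν u)) (g := f) (fun u _ => ha u)
      (by fun_prop) hf
    rw [h0, h1] at this
    simpa using this
  have e2 : ∫ θ in α..β, Y θ * X' θ = ∫ z in (X α)..(X β), f z := by
    have := intervalIntegral.integral_comp_mul_deriv (a := α) (b := β) (f := X)
      (f' := X') (g := f) (fun u _ => hX u) hX'.continuousOn hf
    rw [← this]
    apply intervalIntegral.integral_congr
    intro θ hθ
    rw [Set.uIcc_of_le hαβ] at hθ
    simp [hfX θ hθ]
  rw [e2, ← e1, ← intervalIntegral.integral_sub]
  · apply intervalIntegral.integral_mono_on hu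
    · apply Continuous.intervalIntegrable; fun_prop
    · apply Continuous.intervalIntegrable; fun_prop
    · intro u _
      obtain ⟨θ, hθ, hθa⟩ := intermediate_value_uIcc hXc.continuousOn (hrange u)
      rw [Set.uIcc_of_le hαβ] at hθ
      have h := hsup θ (ν u)
      rw [← hfX θ hθ, hθa] at h
      have := mul_le_mul_of_nonneg_right h (hgpos u).le
      linarith
  · apply Continuous.intervalIntegrable; fun_prop
  · apply Continuous.intervalIntegrable; fun_prop

lemma aux_inj_cos (X X' : ℝ → ℝ) (hX : ∀ t, HasDerivAt X (X' t) t) (α β : ℝ)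
    (h : (∀ t ∈ Set.Ioo α β, 0 < X' t) ∨ (∀ t ∈ Set.Ioo α β, X' t < 0)) :
    Set.InjOn X (Set.Icc α β) := by
  have hXc : Continuous X := continuous_iff_continuousAt.2 fun t => (hX t).continuousAt
  rcases h with h | h
  · apply StrictMonoOn.injOn
    apply strictMonoOn_of_deriv_pos (convex_Icc _ _) hXc.continuousOn
    intro t ht
    rw [interior_Icc] at ht
    rw [(hX t).deriv]; exact h t ht
  · apply StrictAntiOn.injOn
    apply strictAntiOn_of_deriv_neg (convex_Icc _ _) hXc.continuousOn
    intro t ht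
    rw [interior_Icc] at ht
    rw [(hX t).deriv]; exact h t ht

/-- Anisoperimetric (Wulff) inequality, for closed curves. -/
lemma aux_wulff (σ s1 s2 : ℝ → ℝ) (h1 : ∀ t, HasDerivAt σ (s1 t) t)
    (h2 : ∀ t, HasDerivAt s1 (s2 t) t) (hs2 : Continuous s2)
    (hper : ∀ t, σ (t + 2 * π) = σ t)
    (hper1 : ∀ t, s1 (t + 2 * π) = s1 t) (hper2 : ∀ t, s2 (t + 2 * π) = s2 t)
    (hpos : ∀ t, 0 < σ t) (hconv : ∀ t, 0 < σ t + s2 t)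
    (x y g ν : ℝ → ℝ) (hg : Continuous g) (hν : Continuous ν) (hgpos : ∀ u, 0 < g u)
    (hx : ∀ u, HasDerivAt x (g u * cos (ν u)) u)
    (hy : ∀ u, HasDerivAt y (g u * sin (ν u)) u)
    (hxper : ∀ u, x (u + 1) = x u) (hyper : ∀ u, y (u + 1) = y u)
    (hgper : ∀ u, g (u + 1) = g u) (hνper : ∀ u, ν (u + 1) = ν u + 2 * π)
    (hA : 0 < ∫ u in (0:ℝ)..1, x u * (g u * sin (ν u))) :
    4 * ((1 / 2) * ∫ t in (0:ℝ)..(2 * π), σ t * (σ t + s2 t)) *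
      (∫ u in (0:ℝ)..1, x u * (g u * sin (ν u))) ≤ (∫ u in (0:ℝ)..1, σ (ν u) * g u) ^ 2 := by
  have hpi := pi_pos
  have hσc : Continuous σ := continuous_iff_continuousAt.2 fun t => (h1 t).continuousAt
  have hs1c : Continuous s1 := continuous_iff_continuousAt.2 fun t => (h2 t).continuousAt
  have hxc : Continuous x := continuous_iff_continuousAt.2 fun t => (hx t).continuousAt
  set A := ∫ u in (0:ℝ)..1, x u * (g u * sin (ν u)) with hAdef
  set L := ∫ u in (0:ℝ)..1, σ (ν u) * g u with hLdef
  set X : ℝ → ℝ := fun θ => σ θ * sin θ + s1 θ * cos θ with hXdef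
  set Y : ℝ → ℝ := fun θ => -(σ θ * cos θ) + s1 θ * sin θ with hYdef
  set X' : ℝ → ℝ := fun θ => (σ θ + s2 θ) * cos θ with hX'def
  set Y' : ℝ → ℝ := fun θ => (σ θ + s2 θ) * sin θ with hY'def
  have hX : ∀ t, HasDerivAt X (X' t) t := fun t =>
    (((h1 t).mul (hasDerivAt_sin t)).add ((h2 t).mul (hasDerivAt_cos t))).congr_deriv
      (by simp only [hX'def]; ring)
  have hY : ∀ t, HasDerivAt Y (Y' t) t := fun t =>
    (((h1 t).mul (hasDerivAt_cos t)).neg.add ((h2 t).mul (hasDerivAt_sin t))).congr_deriv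
      (by simp only [hY'def]; ring)
  have hX'c : Continuous X' := by fun_prop
  have hY'c : Continuous Y' := by fun_prop
  have hXc : Continuous X := by fun_prop
  have hYc : Continuous Y := by fun_prop
  have hXper : ∀ t, X (t + 2 * π) = X t := by
    intro t; simp only [hXdef, hper, hper1, sin_add_two_pi, cos_add_two_pi]
  have hYper : ∀ t, Y (t + 2 * π) = Y t := by
    intro t; simp only [hYdef, hper, hper1, sin_add_two_pi, cos_add_two_pi]
  have hX'per : ∀ t, X' (t + 2 * π) = X' t := by
    intro t; simp only [hX'def, hper, hper2, cos_add_two_pi]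
  have hsup : ∀ θ ν, X θ * sin ν - Y θ * cos ν ≤ σ ν :=
    aux_support σ s1 s2 h1 h2 hper hper1 hconv
  -- Wulff area
  set W := (1 / 2) * ∫ t in (0:ℝ)..(2 * π), σ t * (σ t + s2 t) with hWdef
  have hW : W = - ∫ θ in (0:ℝ)..(2 * π), Y θ * X' θ := by
    have e1 : ∫ θ in (0:ℝ)..(2 * π), (X' θ * Y θ + X θ * Y' θ) = 0 := by
      rw [intervalIntegral.integral_eq_sub_of_hasDerivAt (f := fun t => X t * Y t)
        (fun t _ => (hX t).mul (hY t))
        (by apply Continuous.intervalIntegrable; fun_prop)]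
      have hx0 := hXper 0
      have hy0 := hYper 0
      rw [zero_add] at hx0 hy0
      rw [hx0, hy0, sub_self]
    have e2 : ∫ t in (0:ℝ)..(2 * π), σ t * (σ t + s2 t) =
        (∫ θ in (0:ℝ)..(2 * π), (X' θ * Y θ + X θ * Y' θ)) -
          2 * ∫ θ in (0:ℝ)..(2 * π), Y θ * X' θ := by
      rw [← intervalIntegral.integral_const_mul, ← intervalIntegral.integral_sub]
      · apply intervalIntegral.integral_congr
        intro t _
        simp only [hXdef, hYdef, hX'def, hY'def]
        have := sin_sq_add_cos_sq t
        linear_combination (-(σ t * (σ t + s2 t))) * this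
      · apply Continuous.intervalIntegrable; fun_prop
      · apply Continuous.intervalIntegrable; fun_prop
    rw [hWdef, e2, e1]; ring
  have hWpos : 0 ≤ W := by
    apply mul_nonneg (by norm_num)
    apply intervalIntegral.integral_nonneg (by positivity)
    intro t _
    exact (mul_pos (hpos t) (hconv t)).le
  have hWsplit : (∫ θ in (-(π/2))..(π/2), Y θ * X' θ) +
      (∫ θ in (π/2)..(-(π/2) + 2 * π), Y θ * X' θ) = -W := by
    rw [intervalIntegral.integral_add_adjacent_intervals]
    · rw [hW, neg_neg]
      have hp : Function.Periodic (fun θ => Y θ * X' θ) (2 * π) := fun t => by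
        simp only [hYper, hX'per]
      have := hp.intervalIntegral_add_eq (-(π/2)) 0
      rw [zero_add] at this
      exact this
    · apply Continuous.intervalIntegrable; fun_prop
    · apply Continuous.intervalIntegrable; fun_prop
  have inj1 : Set.InjOn X (Set.Icc (-(π/2)) (π/2)) :=
    aux_inj_cos X X' hX _ _ (Or.inl fun t ht => mul_pos (hconv t) (cos_pos_of_mem_Ioo ht))
  have inj2 : Set.InjOn X (Set.Icc (π/2) (-(π/2) + 2 * π)) :=
    aux_inj_cos X X' hX _ _ (Or.inr fun t ht => mul_neg_of_pos_of_neg (hconv t)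
      (cos_neg_of_pi_div_two_lt_of_lt ht.1 (by linarith [ht.2])))
  have hXend : X (-(π/2) + 2 * π) = X (-(π/2)) := hXper _
  have hXm : X (-(π/2)) < 0 := by
    simp only [hXdef, sin_neg, cos_neg, sin_pi_div_two, cos_pi_div_two]
    linarith [hpos (-(π/2))]
  have hXM : 0 < X (π/2) := by
    simp only [hXdef, sin_pi_div_two, cos_pi_div_two]
    linarith [hpos (π/2)]
  -- extremal points
  have hxP : Function.Periodic x 1 := hxper
  obtain ⟨u₀, -, hu₀⟩ := isCompact_Icc.exists_isMinOn
    (Set.nonempty_Icc.2 (zero_le_one' ℝ)) hxc.continuousOn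
  have hmin : ∀ u, x u₀ ≤ x u := by
    intro u
    obtain ⟨v, hv, hvq⟩ := hxP.exists_mem_Ico zero_lt_one u 0
    rw [hvq]
    exact hu₀ ⟨hv.1, by linarith [hv.2]⟩
  obtain ⟨u₁, hu₁m, hu₁⟩ := isCompact_Icc.exists_isMaxOn
    (Set.nonempty_Icc.2 (by linarith : u₀ ≤ u₀ + 1)) hxc.continuousOn
  have hmax : ∀ u, x u ≤ x u₁ := by
    intro u
    obtain ⟨v, hv, hvq⟩ := hxP.exists_mem_Ico zero_lt_one u u₀
    rw [hvq]
    exact hu₁ ⟨hv.1, hv.2.le⟩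
  have hgs : ∫ u in (0:ℝ)..1, g u * sin (ν u) = 0 := by
    rw [intervalIntegral.integral_eq_sub_of_hasDerivAt (fun t _ => hy t)
      (by apply Continuous.intervalIntegrable; fun_prop)]
    have := hyper 0
    rw [zero_add] at this
    rw [this, sub_self]
  have hlt : x u₀ < x u₁ := by
    by_contra hcon
    have hconst : ∀ u, x u = x u₀ := fun u =>
      le_antisymm ((hmax u).trans (not_lt.1 hcon)) (hmin u)
    apply hA.ne'
    rw [hAdef]
    simp only [hconst]
    rw [intervalIntegral.integral_const_mul, hgs, mul_zero]
  -- normalisation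
  set r := (x u₁ - x u₀) / (X (π/2) - X (-(π/2))) with hr
  have hden : 0 < X (π/2) - X (-(π/2)) := by linarith
  have hrpos : 0 < r := div_pos (by linarith) hden
  have hrmul : r * (X (π/2) - X (-(π/2))) = x u₁ - x u₀ := div_mul_cancel₀ _ hden.ne'
  set a : ℝ → ℝ := fun u => X (-(π/2)) + (x u - x u₀) / r with hadef
  have ha : ∀ u, HasDerivAt a ((g u / r) * cos (ν u)) u := fun u =>
    ((((hx u).sub_const (x u₀)).div_const r).const_add (X (-(π/2)))).congr_deriv (by ring)
  have ha0 : a u₀ = X (-(π/2)) := by simp [hadef]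
  have ha1 : a u₁ = X (π/2) := by
    simp only [hadef]
    rw [← hrmul]; field_simp; ring
  have hrange : ∀ u, a u ∈ Set.Icc (X (-(π/2))) (X (π/2)) := by
    intro u
    rw [← ha1]
    constructor
    · simp only [hadef]
      have : 0 ≤ (x u - x u₀) / r := div_nonneg (by linarith [hmin u]) hrpos.le
      linarith
    · simp only [hadef]
      have := hmax u
      gcongr
  have arc1 := aux_arc σ X Y X' (-(π/2)) (π/2) (by linarith) hσc hX hX'c hYc inj1 hsup
    a (fun u => g u / r) ν (by fun_prop) hν (fun u => div_pos (hgpos u) hrpos) ha u₀ u₁ hu₁m.1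
    ha0 ha1 (fun u => by rw [Set.uIcc_of_le (by linarith)]; exact hrange u)
  have arc2 := aux_arc σ X Y X' (π/2) (-(π/2) + 2 * π) (by linarith) hσc hX hX'c hYc inj2 hsup
    a (fun u => g u / r) ν (by fun_prop) hν (fun u => div_pos (hgpos u) hrpos) ha u₁ (u₀ + 1)
    hu₁m.2 ha1 (by rw [hXend, ← ha0]; simp only [hadef, hxper])
    (fun u => by rw [hXend, Set.uIcc_of_ge (by linarith)]; exact hrange u)
  have hac : Continuous a := by fun_prop
  have s1' : (∫ u in u₀..u₁, a u * (g u / r * sin (ν u))) +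
      (∫ u in u₁..(u₀+1), a u * (g u / r * sin (ν u))) =
      ∫ u in (0:ℝ)..1, a u * (g u / r * sin (ν u)) := by
    rw [intervalIntegral.integral_add_adjacent_intervals]
    · have hp : Function.Periodic (fun u => a u * (g u / r * sin (ν u))) 1 := fun t => by
        simp only [hadef, hxper, hgper, hνper, sin_add_two_pi]
      have := hp.intervalIntegral_add_eq u₀ 0
      rw [zero_add] at this
      exact this
    · apply Continuous.intervalIntegrable; fun_prop
    · apply Continuous.intervalIntegrable; fun_prop
  have s2' : (∫ u in u₀..u₁, σ (ν u) * (g u / r)) +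
      (∫ u in u₁..(u₀+1), σ (ν u) * (g u / r)) =
      ∫ u in (0:ℝ)..1, σ (ν u) * (g u / r) := by
    rw [intervalIntegral.integral_add_adjacent_intervals]
    · have hp : Function.Periodic (fun u => σ (ν u) * (g u / r)) 1 := fun t => by
        simp only [hgper, hνper, hper]
      have := hp.intervalIntegral_add_eq u₀ 0
      rw [zero_add] at this
      exact this
    · apply Continuous.intervalIntegrable; fun_prop
    · apply Continuous.intervalIntegrable; fun_prop
  have t1 : ∫ u in (0:ℝ)..1, a u * (g u / r * sin (ν u)) = A / r ^ 2 := by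
    have : ∀ u, a u * (g u / r * sin (ν u)) = (1 / r ^ 2) * (x u * (g u * sin (ν u))) +
        ((X (-(π/2)) - x u₀ / r) / r) * (g u * sin (ν u)) := by
      intro u
      simp only [hadef]
      field_simp
      ring
    simp only [this]
    rw [intervalIntegral.integral_add, intervalIntegral.integral_const_mul,
      intervalIntegral.integral_const_mul, hgs, ← hAdef]
    · ring
    · apply Continuous.intervalIntegrable; fun_prop
    · apply Continuous.intervalIntegrable; fun_prop
  have t2 : ∫ u in (0:ℝ)..1, σ (ν u) * (g u / r) = L / r := by
    have : ∀ u, σ (ν u) * (g u / r) = (σ (ν u) * g u) / r := fun u => by ring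
    simp only [this]
    rw [intervalIntegral.integral_div]
  have key : A / r ^ 2 + W ≤ L / r := by
    rw [← t1, ← t2, ← s1', ← s2']
    linarith
  have key2 : A / r + r * W ≤ L := by
    have := mul_le_mul_of_nonneg_left key hrpos.le
    have e1 : r * (A / r ^ 2 + W) = A / r + r * W := by field_simp
    have e2 : r * (L / r) = L := by field_simp
    rwa [e1, e2] at this
  have hAr : 0 < A / r := div_pos hA hrpos
  have e3 : (A / r) * (r * W) = A * W := by field_simp
  have hrW : 0 ≤ r * W := mul_nonneg hrpos.le hWpos
  have := pow_le_pow_left₀ (by positivity) key2 2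
  nlinarith [sq_nonneg (A / r - r * W)]

/-- Mixed anisoperimetric inequality with `μ ≡ 1`:
`L_σ(Γ)·L(Γ) ≥ (2√(π·|W_σ|) + L(∂W_σ))·A(Γ)` for any closed curve `Γ`. -/
theorem mixed_anisoperimetric_inequality_with_length
    (σ : ℝ → ℝ)
    (hσs : ContDiff ℝ (⊤ : ℕ∞) σ) (hσper : ∀ ν, σ (ν + 2 * π) = σ ν)
    (hσpos : ∀ ν, 0 < σ ν) (hσconv : ∀ ν, 0 < σ ν + deriv (deriv σ) ν)
    -- a closed curve `x` with speed `g` and tangent-angle lift `ν`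
    (x : ℝ → ℝ × ℝ) (g ν : ℝ → ℝ)
    (hx : ContDiff ℝ 2 x)
    (hxper : ∀ u, x (u + 1) = x u)
    (hg : ∀ u, 0 < g u)
    (htang : ∀ u, HasDerivAt x (g u • ((Real.cos (ν u), Real.sin (ν u)) : ℝ × ℝ)) u)
    (hνc : Continuous ν)
    (hνper : ∀ u, ν (u + 1) = ν u + 2 * π)
    (hinj : Set.InjOn x (Set.Ico 0 1))
    -- positive enclosed area
    (hA : 0 < (1 / 2) * ∫ u in (0:ℝ)..1,
        ((x u).1 * (g u * Real.sin (ν u)) - (x u).2 * (g u * Real.cos (ν u)))) :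
    (∫ u in (0:ℝ)..1, σ (ν u) * g u) * (∫ u in (0:ℝ)..1, g u) ≥
      (2 * Real.sqrt (π * wulffArea σ) + wulffPerimeter σ) *
        ((1 / 2) * ∫ u in (0:ℝ)..1,
          ((x u).1 * (g u * Real.sin (ν u)) - (x u).2 * (g u * Real.cos (ν u)))) := by
  have hpi := pi_pos
  have hσ0 : ∀ t, HasDerivAt σ (deriv σ t) t := fun t =>
    (hσs.differentiable (by simp)).differentiableAt.hasDerivAt
  have hσ1s : ContDiff ℝ (⊤ : ℕ∞) (deriv σ) := (contDiff_infty_iff_deriv.1 hσs).2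
  have hσ2s : ContDiff ℝ (⊤ : ℕ∞) (deriv (deriv σ)) := (contDiff_infty_iff_deriv.1 hσ1s).2
  have hσ1 : ∀ t, HasDerivAt (deriv σ) (deriv (deriv σ) t) t := fun t =>
    (hσ1s.differentiable (by simp)).differentiableAt.hasDerivAt
  have hper1 : ∀ t, deriv σ (t + 2 * π) = deriv σ t := by
    intro t
    rw [← deriv_comp_add_const]
    simp only [hσper]
  have hper2 : ∀ t, deriv (deriv σ) (t + 2 * π) = deriv (deriv σ) t := by
    intro t
    rw [← deriv_comp_add_const]
    simp only [hper1]
  have hσc := hσs.continuous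
  have hs2c := hσ2s.continuous
  set x1 : ℝ → ℝ := fun u => (x u).1 with hx1
  set x2 : ℝ → ℝ := fun u => (x u).2 with hx2
  have hd1 : ∀ u, HasDerivAt x1 (g u * cos (ν u)) u := fun u => by
    have h := (hasFDerivAt_fst (𝕜 := ℝ) (p := x u)).comp_hasDerivAt u (htang u)
    exact h
  have hd2 : ∀ u, HasDerivAt x2 (g u * sin (ν u)) u := fun u => by
    have h := (hasFDerivAt_snd (𝕜 := ℝ) (p := x u)).comp_hasDerivAt u (htang u)
    exact h
  have hx1c : Continuous x1 := continuous_iff_continuousAt.2 fun t => (hd1 t).continuousAt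
  have hx2c : Continuous x2 := continuous_iff_continuousAt.2 fun t => (hd2 t).continuousAt
  have hxp1 : ∀ u, x1 (u + 1) = x1 u := fun u => by simp only [hx1, hxper]
  have hxp2 : ∀ u, x2 (u + 1) = x2 u := fun u => by simp only [hx2, hxper]
  have hdx : ∀ u, deriv x u = g u • ((cos (ν u), sin (ν u)) : ℝ × ℝ) := fun u => (htang u).deriv
  have hgeq : ∀ u, g u = (deriv x u).1 * cos (ν u) + (deriv x u).2 * sin (ν u) := by
    intro u
    rw [hdx]
    simp only [Prod.smul_mk, smul_eq_mul]
    have := sin_sq_add_cos_sq (ν u)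
    linear_combination (-(g u)) * this
  have hdxc : Continuous (deriv x) := hx.continuous_deriv (by norm_num)
  have hgc : Continuous g := by
    rw [show g = _ from funext hgeq]
    fun_prop
  have hgper : ∀ u, g (u + 1) = g u := by
    intro u
    rw [hgeq, hgeq u, hνper, cos_add_two_pi, sin_add_two_pi, ← deriv_comp_add_const]
    simp only [hxper]
  set L := ∫ u in (0:ℝ)..1, g u with hL
  set S := ∫ u in (0:ℝ)..1, σ (ν u) * g u with hS
  have hAeq : (1 / 2) * ∫ u in (0:ℝ)..1,
        ((x u).1 * (g u * Real.sin (ν u)) - (x u).2 * (g u * Real.cos (ν u))) =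
      ∫ u in (0:ℝ)..1, x1 u * (g u * sin (ν u)) := by
    have e1 : ∫ u in (0:ℝ)..1, ((g u * cos (ν u)) * x2 u + x1 u * (g u * sin (ν u))) = 0 := by
      rw [intervalIntegral.integral_eq_sub_of_hasDerivAt (f := fun t => x1 t * x2 t)
        (fun t _ => (hd1 t).mul (hd2 t))
        (by apply Continuous.intervalIntegrable; fun_prop)]
      have h1 := hxp1 0
      have h2 := hxp2 0
      rw [zero_add] at h1 h2
      rw [h1, h2, sub_self]
    have e2 : ∫ u in (0:ℝ)..1,
        ((x u).1 * (g u * Real.sin (ν u)) - (x u).2 * (g u * Real.cos (ν u))) =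
        2 * (∫ u in (0:ℝ)..1, x1 u * (g u * sin (ν u))) -
        ∫ u in (0:ℝ)..1, ((g u * cos (ν u)) * x2 u + x1 u * (g u * sin (ν u))) := by
      rw [← intervalIntegral.integral_const_mul, ← intervalIntegral.integral_sub]
      · apply intervalIntegral.integral_congr
        intro t _
        simp only [hx1, hx2]
        ring
      · apply Continuous.intervalIntegrable; fun_prop
      · apply Continuous.intervalIntegrable; fun_prop
    rw [e2, e1]; ring
  rw [hAeq] at hA ⊢
  set A := ∫ u in (0:ℝ)..1, x1 u * (g u * sin (ν u)) with hAdef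
  have hLpos : 0 < L :=
    intervalIntegral.intervalIntegral_pos_of_pos (hgc.intervalIntegrable _ _) hg zero_lt_one
  have hSpos : 0 < S :=
    intervalIntegral.intervalIntegral_pos_of_pos
      (Continuous.intervalIntegrable (by fun_prop) _ _)
      (fun u => mul_pos (hσpos _) (hg u)) zero_lt_one
  have hWpos : 0 ≤ wulffArea σ := by
    apply mul_nonneg (by norm_num)
    apply intervalIntegral.integral_nonneg (by positivity)
    intro t _
    exact (mul_pos (hσpos t) (hσconv t)).le
  set t := S / L with ht
  have htpos : 0 < t := div_pos hSpos hLpos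
  have hw := aux_wulff (fun s => σ s + t) (deriv σ) (deriv (deriv σ))
    (fun s => (hσ0 s).add_const t) hσ1 hs2c (fun s => by simp only [hσper]) hper1 hper2
    (fun s => add_pos (hσpos s) htpos) (fun s => by linarith [hσconv s])
    x1 x2 g ν hgc hνc hg hd1 hd2 hxp1 hxp2 hgper hνper hA
  have hs2int : ∫ s in (0:ℝ)..(2 * π), deriv (deriv σ) s = 0 := by
    rw [intervalIntegral.integral_eq_sub_of_hasDerivAt (fun s _ => hσ1 s)
      (hs2c.intervalIntegrable _ _)]
    have := hper1 0
    rw [zero_add] at this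
    rw [this, sub_self]
  have hWt : (1 / 2) * ∫ s in (0:ℝ)..(2 * π), (σ s + t) * (σ s + t + deriv (deriv σ) s) =
      wulffArea σ + t * wulffPerimeter σ + π * t ^ 2 := by
    have e : ∀ s, (σ s + t) * (σ s + t + deriv (deriv σ) s) =
        σ s * (σ s + deriv (deriv σ) s) + ((2 * t) * σ s + (t * deriv (deriv σ) s + t ^ 2)) :=
      fun s => by ring
    simp only [e]
    rw [intervalIntegral.integral_add (Continuous.intervalIntegrable (by fun_prop) _ _)
      (Continuous.intervalIntegrable (by fun_prop) _ _),
      intervalIntegral.integral_add (Continuous.intervalIntegrable (by fun_prop) _ _)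
      (Continuous.intervalIntegrable (by fun_prop) _ _),
      intervalIntegral.integral_add (Continuous.intervalIntegrable (by fun_prop) _ _)
      (Continuous.intervalIntegrable (by fun_prop) _ _),
      intervalIntegral.integral_const_mul, intervalIntegral.integral_const_mul, hs2int,
      intervalIntegral.integral_const, wulffArea, wulffPerimeter, smul_eq_mul]
    ring
  have hSt : ∫ u in (0:ℝ)..1, (σ (ν u) + t) * g u = 2 * S := by
    have e : ∀ u, (σ (ν u) + t) * g u = σ (ν u) * g u + t * g u := fun u => by ring
    simp only [e]
    rw [intervalIntegral.integral_add (Continuous.intervalIntegrable (by fun_prop) _ _)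
      (Continuous.intervalIntegrable (by fun_prop) _ _),
      intervalIntegral.integral_const_mul, ← hS, ← hL, ht, div_mul_cancel₀ _ hLpos.ne']
    ring
  rw [hWt, hSt] at hw
  have hSL : S = t * L := (div_mul_cancel₀ _ hLpos.ne').symm
  set R := Real.sqrt (π * wulffArea σ) with hR
  have hR2 : R ^ 2 = π * wulffArea σ := Real.sq_sqrt (mul_nonneg hpi.le hWpos)
  have hamgm : 2 * R * t ≤ wulffArea σ + π * t ^ 2 := by
    have h : 0 ≤ (R - π * t) ^ 2 := sq_nonneg _
    have h2 : 0 ≤ π * (wulffArea σ + π * t ^ 2 - 2 * R * t) := by nlinarith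
    have := nonneg_of_mul_nonneg_right h2 hpi
    linarith
  have h3 : (2 * R * t + t * wulffPerimeter σ) * A ≤ S ^ 2 := by
    have := mul_le_mul_of_nonneg_right hamgm hA.le
    nlinarith
  have h4 : t * ((2 * R + wulffPerimeter σ) * A) ≤ t * (S * L) := by
    calc _ = (2 * R * t + t * wulffPerimeter σ) * A := by ring
      _ ≤ S ^ 2 := h3
      _ = t * (S * L) := by rw [sq]; nth_rewrite 2 [hSL]; ring
  exact le_of_mul_le_mul_left h4 htpos
end

section
/- Convexity preservation for the anisoperimetric ratio gradient flow: let σ be an anisotropy function and let x : ℝ × [0,T) → ℝ² be a smooth family of closed curves evolving by the anisoperimetric ratio gradient flow ∂_t x = β N with β = k_σ − L_σ(t)/(2A(t)), and assume that for every t* < T, inf_{0 ≤ t ≤ t*} L_σ(t) > 0. If k(u, t₀) > 0 for all u at some time t₀ ∈ [0,T), then k(u, t) > 0 for all u and all t ∈ [t₀, T). -/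
open Real

/-- Anisotropic length `L_σ(t) = ∫₀¹ σ(ν(u,t))|∂_u x(u,t)| du` of the curve `x(·,t)`
with speed `g(·,t)` and tangent-angle lift `νf(·,t)`. -/
noncomputable def aLenF (σ : ℝ → ℝ) (g νf : ℝ → ℝ → ℝ) (t : ℝ) : ℝ :=
  ∫ u in (0:ℝ)..1, σ (νf u t) * g u t

/-- Enclosed area `A(t) = (1/2)∫₀¹ det(x(u,t), ∂_u x(u,t)) du`, with
`∂_u x = g·(cos νf, sin νf)`. -/
noncomputable def areaF (x : ℝ → ℝ → ℝ × ℝ) (g νf : ℝ → ℝ → ℝ) (t : ℝ) : ℝ :=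
  (1 / 2) * ∫ u in (0:ℝ)..1,
    ((x u t).1 * (g u t * Real.sin (νf u t)) - (x u t).2 * (g u t * Real.cos (νf u t)))


lemma second_deriv_nonneg_of_localMin (f f' : ℝ → ℝ) (f'' a : ℝ)
    (hf : ∀ u, HasDerivAt f (f' u) u) (hf' : HasDerivAt f' f'' a) (hm : IsLocalMin f a) :
    0 ≤ f'' := by
  by_contra hneg
  push Not at hneg
  have hd : deriv f = f' := funext fun u => (hf u).deriv
  have hmax : IsLocalMax f a := by
    apply isLocalMax_of_deriv_deriv_neg
    · rw [hd, hf'.deriv]; exact hneg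
    · exact hm.deriv_eq_zero
    · exact (hf a).continuousAt
  have hconst : f =ᶠ[nhds a] fun _ => f a := by
    filter_upwards [hm, hmax] with y h1 h2
    exact le_antisymm h2 h1
  have h1 : deriv f =ᶠ[nhds a] deriv (fun _ => f a) := hconst.deriv
  have h2 := h1.deriv_eq
  rw [hd, hf'.deriv] at h2
  simp at h2
  linarith

lemma min_principle (h C : ℝ → ℝ → ℝ) (t0 t1 : ℝ)
    (hc : ContinuousOn (fun p : ℝ × ℝ => h p.1 p.2) (Set.univ ×ˢ Set.Icc t0 t1))
    (hC : ContinuousOn (fun p : ℝ × ℝ => C p.1 p.2) (Set.univ ×ˢ Set.Icc t0 t1))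
    (hper : ∀ u, ∀ t ∈ Set.Icc t0 t1, h (u + 1) t = h u t)
    (hpos : ∀ u, 0 < h u t0)
    (step : ∀ t ∈ Set.Ioc t0 t1, ∀ u, IsLocalMin (fun u' => h u' t) u →
      ∃ d, HasDerivAt (fun t' => h u t') d t ∧ C u t * h u t ≤ d) :
    ∀ t ∈ Set.Icc t0 t1, ∀ u, 0 < h u t := by
  intro s hs v
  have h01 : t0 ≤ t1 := hs.1.trans hs.2
  have hK : IsCompact (Set.Icc (0:ℝ) 1 ×ˢ Set.Icc t0 t1) := isCompact_Icc.prod isCompact_Icc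
  have hsub : (Set.Icc (0:ℝ) 1 ×ˢ Set.Icc t0 t1) ⊆ Set.univ ×ˢ Set.Icc t0 t1 :=
    Set.prod_mono (Set.subset_univ _) subset_rfl
  obtain ⟨M, hM⟩ := hK.exists_bound_of_continuousOn (hC.mono hsub)
  have ht00 : t0 ∈ Set.Icc t0 t1 := ⟨le_rfl, h01⟩
  have hslice : ∀ t ∈ Set.Icc t0 t1, Continuous (fun u => h u t) := by
    intro t ht
    rw [← continuousOn_univ]
    exact hc.comp (f := fun u : ℝ => (u, t)) (by fun_prop) (fun u _ => ⟨trivial, ht⟩)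
  have hred : ∀ t ∈ Set.Icc t0 t1, ∀ u, h (Int.fract u) t = h u t := by
    intro t ht u
    have hp : Function.Periodic (fun u => h u t) 1 := fun u => hper u t ht
    have := hp.sub_int_mul_eq (x := u) ⌊u⌋
    rw [mul_one] at this
    exact this
  have hfr : ∀ u : ℝ, Int.fract u ∈ Set.Icc (0:ℝ) 1 :=
    fun u => ⟨Int.fract_nonneg u, (Int.fract_lt_one u).le⟩
  obtain ⟨um, -, hum⟩ := isCompact_Icc.exists_isMinOn (s := Set.Icc (0:ℝ) 1) ⟨0, by simp⟩
    (hslice t0 ht00).continuousOn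
  obtain ⟨ε, hε, hεm⟩ := exists_between (hpos um)
  obtain ⟨lam, hlam⟩ := exists_gt M
  set b : ℝ → ℝ := fun t => ε * exp (-lam * (t - t0)) with hb
  have hbpos : ∀ t, 0 < b t := fun t => mul_pos hε (exp_pos _)
  have hbcont : Continuous b := by fun_prop
  have hbd : ∀ t, HasDerivAt b (-lam * b t) t := by
    intro t
    have h1 : HasDerivAt (fun t => -lam * (t - t0)) (-lam) t := by
      simpa using ((hasDerivAt_id t).sub_const t0).const_mul (-lam)
    have h2 := h1.exp.const_mul ε
    refine h2.congr_deriv ?_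
    change _ = -lam * (ε * exp (-lam * (t - t0)))
    ring
  suffices hmain : ∀ p ∈ Set.Icc (0:ℝ) 1 ×ˢ Set.Icc t0 t1, b p.2 < h p.1 p.2 by
    have := hmain (Int.fract v, s) ⟨hfr v, hs⟩
    simp only [hred s hs] at this
    exact (hbpos s).trans this
  by_contra hcon
  push Not at hcon
  obtain ⟨q, hq, hq2⟩ := hcon
  set S := (Set.Icc (0:ℝ) 1 ×ˢ Set.Icc t0 t1) ∩
    (fun p : ℝ × ℝ => h p.1 p.2 - b p.2) ⁻¹' Set.Iic 0 with hS
  have hSc : IsCompact S := by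
    have : IsClosed S := by
      apply ContinuousOn.preimage_isClosed_of_isClosed _ hK.isClosed isClosed_Iic
      exact (hc.mono hsub).sub (by fun_prop)
    exact hK.of_isClosed_subset this Set.inter_subset_left
  obtain ⟨⟨us, ts⟩, hmem, hmin⟩ := hSc.exists_isMinOn (f := fun p : ℝ × ℝ => p.2)
    ⟨q, hq, by simpa using hq2⟩ (by fun_prop)
  obtain ⟨⟨hus, hts⟩, hle⟩ := hmem
  simp only at hus hts
  replace hle : h us ts ≤ b ts := by simpa using hle
  have hbefore : ∀ t, t0 ≤ t → t < ts → ∀ u, b t < h u t := by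
    intro t h1 h2 u
    by_contra hn
    push Not at hn
    have ht : t ∈ Set.Icc t0 t1 := ⟨h1, h2.le.trans hts.2⟩
    have hin : ((Int.fract u, t) : ℝ × ℝ) ∈ S := by
      refine ⟨⟨hfr u, ht⟩, ?_⟩
      simpa [hred t ht] using hn
    have := hmin hin
    simp at this
    linarith
  have hts0 : t0 < ts := by
    rcases hts.1.eq_or_lt with he | hl
    · exfalso
      have h1 : h um t0 ≤ h us t0 := hum hus
      rw [← he] at hle
      have : b t0 = ε := by simp [hb]
      linarith
    · exact hl
  have hge : ∀ u, b ts ≤ h u ts := by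
    intro u
    have hcu : ContinuousWithinAt (fun t => h u t) (Set.Ico t0 ts) ts := by
      have : ContinuousOn (fun t => h u t) (Set.Icc t0 t1) :=
        hc.comp (f := fun t : ℝ => (u, t)) (by fun_prop) (fun t ht => ⟨trivial, ht⟩)
      exact (this ts hts).mono fun t ht => ⟨ht.1, ht.2.le.trans hts.2⟩
    have hne : (nhdsWithin ts (Set.Ico t0 ts)).NeBot := by
      rw [← mem_closure_iff_nhdsWithin_neBot, closure_Ico hts0.ne]
      exact ⟨hts0.le, le_rfl⟩
    refine le_of_tendsto_of_tendsto hbcont.continuousWithinAt hcu ?_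
    filter_upwards [self_mem_nhdsWithin] with t ht
    exact (hbefore t ht.1 ht.2 u).le
  have heq : h us ts = b ts := le_antisymm hle (hge us)
  have hlm : IsLocalMin (fun u' => h u' ts) us := by
    refine Filter.Eventually.of_forall fun u => ?_
    simp only [heq]; exact hge u
  obtain ⟨d, hd, hCd⟩ := step ts ⟨hts0, hts.2⟩ us hlm
  have hdd := hd.sub (hbd ts)
  have hnonpos : d - -lam * b ts ≤ 0 := by
    have hw := hdd.hasDerivWithinAt (s := Set.Iio ts)
    have hne : (nhdsWithin ts (Set.Iio ts)).NeBot := inferInstance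
    rw [hasDerivWithinAt_iff_tendsto_slope' (by simp)] at hw
    refine le_of_tendsto hw ?_
    filter_upwards [Ioo_mem_nhdsLT hts0] with t ht
    have h1 := hbefore t ht.1.le ht.2 us
    rw [slope_def_field]
    apply div_nonpos_of_nonneg_of_nonpos
    · simp only [Pi.sub_apply]; linarith
    · linarith [ht.2]
  have hMC := hM (us, ts) ⟨hus, hts⟩
  rw [Real.norm_eq_abs] at hMC
  have hl := (abs_le.mp hMC).1
  simp only at hl
  rw [heq] at hCd
  nlinarith [hbpos ts]

/-- first partial derivatives on a closed half strip are continuous -/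
lemma partial_continuousOn {T : ℝ} (hT : 0 < T) (f fu ft : ℝ → ℝ → ℝ)
    (hf : ContDiffOn ℝ (⊤ : ℕ∞) (fun p : ℝ × ℝ => f p.1 p.2) (Set.univ ×ˢ Set.Ico 0 T)) :
    ((∀ u, ∀ t ∈ Set.Ico 0 T, HasDerivAt (fun u' => f u' t) (fu u t) u) →
      ContDiffOn ℝ (⊤ : ℕ∞) (fun p : ℝ × ℝ => fu p.1 p.2) (Set.univ ×ˢ Set.Ico 0 T)) ∧
    ((∀ u, ∀ t ∈ Set.Ico 0 T, HasDerivWithinAt (fun t' => f u t') (ft u t) (Set.Ico 0 T) t) →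
      ContDiffOn ℝ (⊤ : ℕ∞) (fun p : ℝ × ℝ => ft p.1 p.2) (Set.univ ×ˢ Set.Ico 0 T)) := by
  set D := (Set.univ : Set ℝ) ×ˢ Set.Ico 0 T with hD
  have hI : UniqueDiffOn ℝ (Set.Ico 0 T) := uniqueDiffOn_Ico 0 T
  have hU : UniqueDiffOn ℝ D := uniqueDiffOn_univ.prod hI
  have hdf : ContDiffOn ℝ (⊤ : ℕ∞) (fderivWithin ℝ (fun p : ℝ × ℝ => f p.1 p.2) D) D :=
    hf.fderivWithin hU (by norm_num)
  have hdiff : ∀ p ∈ D, HasFDerivWithinAt (fun p : ℝ × ℝ => f p.1 p.2)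
      (fderivWithin ℝ (fun p : ℝ × ℝ => f p.1 p.2) D p) D p := fun p hp =>
    ((hf.differentiableOn (by norm_num)) p hp).hasFDerivWithinAt
  constructor
  · intro h
    refine (hdf.clm_apply (contDiffOn_const (c := ((1:ℝ), (0:ℝ))))).congr ?_
    rintro ⟨u, t⟩ hp
    have h1 : HasDerivWithinAt (fun u' : ℝ => (u', t)) ((1:ℝ), (0:ℝ)) Set.univ u :=
      (hasDerivWithinAt_id u _).prodMk (hasDerivWithinAt_const u _ t)
    have h2 := (hdiff (u, t) hp).comp_hasDerivWithinAt u h1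
      (fun u' _ => (⟨trivial, hp.2⟩ : (u', t) ∈ D))
    rw [hasDerivWithinAt_univ] at h2
    exact (h u t hp.2).unique h2
  · intro h
    refine (hdf.clm_apply (contDiffOn_const (c := ((0:ℝ), (1:ℝ))))).congr ?_
    rintro ⟨u, t⟩ hp
    have h1 : HasDerivWithinAt (fun t' : ℝ => (u, t')) ((0:ℝ), (1:ℝ)) (Set.Ico 0 T) t :=
      (hasDerivWithinAt_const t _ u).prodMk (hasDerivWithinAt_id t _)
    have h2 := (hdiff (u, t) hp).comp_hasDerivWithinAt t h1 
      (fun t' ht' => (⟨trivial, ht'⟩ : (u, t') ∈ D))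
    exact (hI t hp.2).eq_deriv _ (h u t hp.2) h2

/-- existence of partial derivatives at interior points -/
lemma partials_exist {T : ℝ} (f : ℝ → ℝ → ℝ)
    (hf : ContDiffOn ℝ (⊤ : ℕ∞) (fun p : ℝ × ℝ => f p.1 p.2) (Set.univ ×ˢ Set.Ioo 0 T)) :
    ∃ fu ft : ℝ → ℝ → ℝ,
      ContDiffOn ℝ (⊤ : ℕ∞) (fun p : ℝ × ℝ => fu p.1 p.2) (Set.univ ×ˢ Set.Ioo 0 T) ∧
      ContDiffOn ℝ (⊤ : ℕ∞) (fun p : ℝ × ℝ => ft p.1 p.2) (Set.univ ×ˢ Set.Ioo 0 T) ∧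
      (∀ u, ∀ t ∈ Set.Ioo 0 T, HasDerivAt (fun u' => f u' t) (fu u t) u) ∧
      (∀ u, ∀ t ∈ Set.Ioo 0 T, HasDerivAt (fun t' => f u t') (ft u t) t) ∧
      (∀ u, ∀ t ∈ Set.Ioo 0 T, ∃ m, HasDerivAt (fun t' => fu u t') m t ∧
        HasDerivAt (fun u' => ft u' t) m u) := by
  set D := (Set.univ : Set ℝ) ×ˢ Set.Ioo 0 T with hD
  have hO : IsOpen D := isOpen_univ.prod isOpen_Ioo
  set F := (fun p : ℝ × ℝ => f p.1 p.2) with hF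
  have hdf : ContDiffOn ℝ (⊤ : ℕ∞) (fderiv ℝ F) D := hf.fderiv_of_isOpen hO (by norm_num)
  have hcu : ∀ u t : ℝ, HasDerivAt (fun u' : ℝ => (u', t)) ((1:ℝ), (0:ℝ)) u := fun u t =>
      (hasDerivAt_id u).prodMk (hasDerivAt_const u t)
  have hct : ∀ u t : ℝ, HasDerivAt (fun t' : ℝ => (u, t')) ((0:ℝ), (1:ℝ)) t := fun u t =>
      (hasDerivAt_const t u).prodMk (hasDerivAt_id t)
  have hdiff : ∀ p ∈ D, HasFDerivAt F (fderiv ℝ F p) p := fun p hp =>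
    (((hf.contDiffAt (hO.mem_nhds hp)).differentiableAt (by norm_num))).hasFDerivAt
  have hdiff2 : ∀ p ∈ D, HasFDerivAt (fderiv ℝ F) (fderiv ℝ (fderiv ℝ F) p) p := fun p hp =>
    (((hdf.contDiffAt (hO.mem_nhds hp)).differentiableAt (by norm_num))).hasFDerivAt
  refine ⟨fun u t => fderiv ℝ F (u, t) (1, 0), fun u t => fderiv ℝ F (u, t) (0, 1),
    hdf.clm_apply contDiffOn_const, hdf.clm_apply contDiffOn_const, ?_, ?_, ?_⟩
  · intro u t ht
    exact (hdiff (u, t) ⟨trivial, ht⟩).comp_hasDerivAt u (hcu u t)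
  · intro u t ht
    exact (hdiff (u, t) ⟨trivial, ht⟩).comp_hasDerivAt t (hct u t)
  · intro u t ht
    have hp : (u, t) ∈ D := ⟨trivial, ht⟩
    have hsym : IsSymmSndFDerivAt ℝ F (u, t) :=
      (hf.contDiffAt (hO.mem_nhds hp)).isSymmSndFDerivAt (by
        rw [minSmoothness_of_isRCLikeNormedField]; exact WithTop.coe_le_coe.mpr (le_top : (2 : ℕ∞) ≤ ⊤))
    refine ⟨fderiv ℝ (fderiv ℝ F) (u, t) (0, 1) (1, 0), ?_, ?_⟩
    · have h1 := (hdiff2 (u, t) hp).comp_hasDerivAt t (hct u t)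
      simpa using h1.clm_apply (hasDerivAt_const t ((1:ℝ), (0:ℝ)))
    · have h1 := (hdiff2 (u, t) hp).comp_hasDerivAt u (hcu u t)
      rw [hsym (0,1) (1,0)]
      simpa using h1.clm_apply (hasDerivAt_const u ((0:ℝ), (1:ℝ)))

lemma mixed {T : ℝ} (f fu ft : ℝ → ℝ → ℝ)
    (hf : ContDiffOn ℝ (⊤ : ℕ∞) (fun p : ℝ × ℝ => f p.1 p.2) (Set.univ ×ˢ Set.Ioo 0 T))
    (hu : ∀ u, ∀ t ∈ Set.Ioo 0 T, HasDerivAt (fun u' => f u' t) (fu u t) u)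
    (ht : ∀ u, ∀ t ∈ Set.Ioo 0 T, HasDerivAt (fun t' => f u t') (ft u t) t) :
    ∀ u, ∀ t ∈ Set.Ioo 0 T, ∃ m, HasDerivAt (fun t' => fu u t') m t ∧
        HasDerivAt (fun u' => ft u' t) m u := by
  obtain ⟨fu', ft', -, -, h1, h2, h3⟩ := partials_exist f hf
  intro u t htt
  obtain ⟨m, hm1, hm2⟩ := h3 u t htt
  refine ⟨m, hm1.congr_of_eventuallyEq ?_, hm2.congr_of_eventuallyEq ?_⟩
  · filter_upwards [isOpen_Ioo.mem_nhds htt] with s hs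
    exact (hu u s hs).unique (h1 u s hs)
  · exact Filter.Eventually.of_forall fun v => (ht v t htt).unique (h2 v t htt)

/-- Convexity preservation for the anisoperimetric ratio gradient flow
`∂_t x = (k_σ − L_σ/(2A))·N`: if the curve is convex (`k > 0`) at time `t₀`,
it stays convex on `[t₀, T)`.  Here `k = νu/g` is the signed curvature. -/
theorem convexity_preservation_anisoperimetric_flow
    (σ : ℝ → ℝ)
    (hσs : ContDiff ℝ (⊤ : ℕ∞) σ) (hσper : ∀ ν, σ (ν + 2 * π) = σ ν)
    (hσpos : ∀ ν, 0 < σ ν) (hσconv : ∀ ν, 0 < σ ν + deriv (deriv σ) ν)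
    (T : ℝ) (x : ℝ → ℝ → ℝ × ℝ) (g νf νu : ℝ → ℝ → ℝ)
    (hxs : ContDiffOn ℝ (⊤ : ℕ∞) (fun p : ℝ × ℝ => x p.1 p.2)
      ((Set.univ : Set ℝ) ×ˢ Set.Ico (0:ℝ) T))
    (hνs : ContDiffOn ℝ (⊤ : ℕ∞) (fun p : ℝ × ℝ => νf p.1 p.2)
      ((Set.univ : Set ℝ) ×ˢ Set.Ico (0:ℝ) T))
    (hper : ∀ u, ∀ t ∈ Set.Ico (0:ℝ) T, x (u + 1) t = x u t)
    (hνper : ∀ u, ∀ t ∈ Set.Ico (0:ℝ) T, νf (u + 1) t = νf u t + 2 * π)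
    (hg : ∀ u, ∀ t ∈ Set.Ico (0:ℝ) T, 0 < g u t)
    (htang : ∀ u, ∀ t ∈ Set.Ico (0:ℝ) T,
      HasDerivAt (fun u' => x u' t)
        (g u t • ((Real.cos (νf u t), Real.sin (νf u t)) : ℝ × ℝ)) u)
    (hνu : ∀ u, ∀ t ∈ Set.Ico (0:ℝ) T, HasDerivAt (fun u' => νf u' t) (νu u t) u)
    (hinj : ∀ t ∈ Set.Ico (0:ℝ) T, Set.InjOn (fun u => x u t) (Set.Ico 0 1))
    (hA : ∀ t ∈ Set.Ico (0:ℝ) T, 0 < areaF x g νf t)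
    -- the anisoperimetric ratio gradient flow equation `∂_t x = (k_σ − L_σ/(2A))·N`
    (hflow : ∀ u, ∀ t ∈ Set.Ico (0:ℝ) T,
      HasDerivWithinAt (fun t' => x u t')
        ((((σ (νf u t) + deriv (deriv σ) (νf u t)) * (νu u t / g u t) -
            aLenF σ g νf t / (2 * areaF x g νf t)) •
          ((-Real.sin (νf u t), Real.cos (νf u t)) : ℝ × ℝ)))
        (Set.Ico 0 T) t)
    -- `inf_{0 ≤ t ≤ t*} L_σ(t) > 0` for every `t* < T`
    (hLσ : ∀ tstar : ℝ, 0 ≤ tstar → tstar < T →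
      ∃ c : ℝ, 0 < c ∧ ∀ t ∈ Set.Icc (0:ℝ) tstar, c ≤ aLenF σ g νf t)
    -- convexity at time `t₀`
    (t₀ : ℝ) (ht₀ : t₀ ∈ Set.Ico (0:ℝ) T)
    (hconv : ∀ u, 0 < νu u t₀ / g u t₀) :
    ∀ t ∈ Set.Ico t₀ T, ∀ u, 0 < νu u t / g u t := by
  have hT : 0 < T := ht₀.1.trans_lt ht₀.2
  obtain ⟨F, hF⟩ : ∃ F : ℝ → ℝ, ∀ t, F t = aLenF σ g νf t / (2 * areaF x g νf t) :=
    ⟨_, fun _ => rfl⟩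
  simp only [← hF] at hflow
  clear hF hA hLσ hinj hσpos
  obtain ⟨a, ha⟩ : ∃ a : ℝ → ℝ, a = fun ν => σ ν + deriv (deriv σ) ν := ⟨_, rfl⟩
  have ha' : ∀ ν, σ ν + deriv (deriv σ) ν = a ν := fun ν => by rw [ha]
  have has : ContDiff ℝ (⊤ : ℕ∞) a := by
    rw [ha]
    have h1 : ContDiff ℝ (⊤ : ℕ∞) (deriv σ) := (contDiff_infty_iff_deriv.mp hσs).2
    exact hσs.add (contDiff_infty_iff_deriv.mp h1).2
  have haper : ∀ ν, a (ν + 2 * π) = a ν := by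
    intro ν
    have e0 : (fun ν => σ (ν + 2 * π)) = σ := funext hσper
    have e1 : ∀ ν, deriv σ (ν + 2 * π) = deriv σ ν := by
      intro ν
      rw [← deriv_comp_add_const, e0]
    have e1' : (fun ν => deriv σ (ν + 2 * π)) = deriv σ := funext e1
    have e2 : deriv (deriv σ) (ν + 2 * π) = deriv (deriv σ) ν := by
      rw [← deriv_comp_add_const, e1']
    rw [ha]; simp only [hσper, e2]
  simp only [ha'] at hflow hσconv
  clear ha' ha hσs hσper
  obtain ⟨h, hh⟩ : ∃ h : ℝ → ℝ → ℝ, ∀ u t, h u t = a (νf u t) * (νu u t / g u t) :=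
    ⟨_, fun _ _ => rfl⟩
  obtain ⟨β, hβ⟩ : ∃ β : ℝ → ℝ → ℝ, ∀ u t, β u t = h u t - F t := ⟨_, fun _ _ => rfl⟩
  simp only [← hh, ← hβ] at hflow
  -- components
  have hx1s : ContDiffOn ℝ (⊤ : ℕ∞) (fun p : ℝ × ℝ => (x p.1 p.2).1)
      ((Set.univ : Set ℝ) ×ˢ Set.Ico (0:ℝ) T) := hxs.fst
  have hx2s : ContDiffOn ℝ (⊤ : ℕ∞) (fun p : ℝ × ℝ => (x p.1 p.2).2)
      ((Set.univ : Set ℝ) ×ˢ Set.Ico (0:ℝ) T) := hxs.snd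
  have hx1u : ∀ u, ∀ t ∈ Set.Ico (0:ℝ) T,
      HasDerivAt (fun u' => (x u' t).1) (g u t * cos (νf u t)) u := fun u t ht => by
    have := (hasFDerivAt_fst (𝕜 := ℝ) (p := x u t)).comp_hasDerivAt u (htang u t ht)
    exact this
  have hx2u : ∀ u, ∀ t ∈ Set.Ico (0:ℝ) T,
      HasDerivAt (fun u' => (x u' t).2) (g u t * sin (νf u t)) u := fun u t ht => by
    have := (hasFDerivAt_snd (𝕜 := ℝ) (p := x u t)).comp_hasDerivAt u (htang u t ht)
    exact this
  have hx1t : ∀ u, ∀ t ∈ Set.Ico (0:ℝ) T,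
      HasDerivWithinAt (fun t' => (x u t').1) (β u t * -sin (νf u t)) (Set.Ico 0 T) t :=
    fun u t ht => by
    have := (hasFDerivAt_fst (𝕜 := ℝ) (p := x u t)).comp_hasDerivWithinAt t (hflow u t ht)
    exact this
  have hx2t : ∀ u, ∀ t ∈ Set.Ico (0:ℝ) T,
      HasDerivWithinAt (fun t' => (x u t').2) (β u t * cos (νf u t)) (Set.Ico 0 T) t :=
    fun u t ht => by
    have := (hasFDerivAt_snd (𝕜 := ℝ) (p := x u t)).comp_hasDerivWithinAt t (hflow u t ht)
    exact this
  -- smoothness on the half-closed strip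
  have sx1u := (partial_continuousOn hT (fun u t => (x u t).1)
    (fun u t => g u t * cos (νf u t)) (fun u t => β u t * -sin (νf u t)) hx1s).1 hx1u
  have sx1t := (partial_continuousOn hT (fun u t => (x u t).1)
    (fun u t => g u t * cos (νf u t)) (fun u t => β u t * -sin (νf u t)) hx1s).2 hx1t
  have sx2u := (partial_continuousOn hT (fun u t => (x u t).2)
    (fun u t => g u t * sin (νf u t)) (fun u t => β u t * cos (νf u t)) hx2s).1 hx2u
  have sx2t := (partial_continuousOn hT (fun u t => (x u t).2)
    (fun u t => g u t * sin (νf u t)) (fun u t => β u t * cos (νf u t)) hx2s).2 hx2t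
  have sνu := (partial_continuousOn hT νf νu νu hνs).1 hνu
  have scos : ContDiffOn ℝ (⊤ : ℕ∞) (fun p : ℝ × ℝ => cos (νf p.1 p.2))
      ((Set.univ : Set ℝ) ×ˢ Set.Ico (0:ℝ) T) := hνs.cos
  have ssin : ContDiffOn ℝ (⊤ : ℕ∞) (fun p : ℝ × ℝ => sin (νf p.1 p.2))
      ((Set.univ : Set ℝ) ×ˢ Set.Ico (0:ℝ) T) := hνs.sin
  have sg : ContDiffOn ℝ (⊤ : ℕ∞) (fun p : ℝ × ℝ => g p.1 p.2)
      ((Set.univ : Set ℝ) ×ˢ Set.Ico (0:ℝ) T) := by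
    refine ((sx1u.mul scos).add (sx2u.mul ssin)).congr fun p _ => ?_
    linear_combination (-g p.1 p.2) * sin_sq_add_cos_sq (νf p.1 p.2)
  have sβ : ContDiffOn ℝ (⊤ : ℕ∞) (fun p : ℝ × ℝ => β p.1 p.2)
      ((Set.univ : Set ℝ) ×ˢ Set.Ico (0:ℝ) T) := by
    refine ((sx2t.mul scos).sub (sx1t.mul ssin)).congr fun p _ => ?_
    linear_combination (-β p.1 p.2) * sin_sq_add_cos_sq (νf p.1 p.2)
  have sh : ContDiffOn ℝ (⊤ : ℕ∞) (fun p : ℝ × ℝ => h p.1 p.2)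
      ((Set.univ : Set ℝ) ×ˢ Set.Ico (0:ℝ) T) := by
    simp only [hh]
    exact (has.comp_contDiffOn hνs).mul (sνu.div sg fun p hp => (hg p.1 p.2 hp.2).ne')
  have sC : ContDiffOn ℝ (⊤ : ℕ∞) (fun p : ℝ × ℝ => β p.1 p.2 * (νu p.1 p.2 / g p.1 p.2))
      ((Set.univ : Set ℝ) ×ˢ Set.Ico (0:ℝ) T) :=
    sβ.mul (sνu.div sg fun p hp => (hg p.1 p.2 hp.2).ne')
  -- periodicity
  have pνu : ∀ u, ∀ t ∈ Set.Ico (0:ℝ) T, νu (u + 1) t = νu u t := by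
    intro u t ht
    have h1 := (hνu (u + 1) t ht).comp_add_const u 1
    have h2 : HasDerivAt (fun u' => νf (u' + 1) t) (νu u t) u := by
      have e : (fun u' => νf (u' + 1) t) = fun u' => νf u' t + 2 * π :=
        funext fun u' => hνper u' t ht
      rw [e]; exact (hνu u t ht).add_const _
    exact h1.unique h2
  have pg : ∀ u, ∀ t ∈ Set.Ico (0:ℝ) T, g (u + 1) t = g u t := by
    intro u t ht
    have h1 := (hx1u (u + 1) t ht).comp_add_const u 1
    have h2 := (hx2u (u + 1) t ht).comp_add_const u 1
    simp only [hper _ t ht, hνper _ t ht, cos_add_two_pi, sin_add_two_pi] at h1 h2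
    have e1 := h1.unique (hx1u u t ht)
    have e2 := h2.unique (hx2u u t ht)
    linear_combination cos (νf u t) * e1 + sin (νf u t) * e2 +
      (g u t - g (u + 1) t) * sin_sq_add_cos_sq (νf u t)
  have ph : ∀ u, ∀ t ∈ Set.Ico (0:ℝ) T, h (u + 1) t = h u t := by
    intro u t ht
    rw [hh, hh, pνu u t ht, pg u t ht, hνper u t ht, haper]
  -- interior
  have hIoo : Set.Ioo (0:ℝ) T ⊆ Set.Ico 0 T := Set.Ioo_subset_Ico_self
  have hsub : ((Set.univ : Set ℝ) ×ˢ Set.Ioo (0:ℝ) T) ⊆ Set.univ ×ˢ Set.Ico (0:ℝ) T :=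
    Set.prod_mono subset_rfl hIoo
  have hnhds : ∀ t ∈ Set.Ioo (0:ℝ) T, Set.Ico 0 T ∈ nhds t := fun t ht =>
    Ico_mem_nhds ht.1 ht.2
  have m1 := mixed (fun u t => (x u t).1)
    (fun u t => g u t * cos (νf u t)) (fun u t => β u t * -sin (νf u t)) (hx1s.mono hsub)
    (fun u t ht => hx1u u t (hIoo ht)) (fun u t ht => (hx1t u t (hIoo ht)).hasDerivAt (hnhds t ht))
  have m2 := mixed (fun u t => (x u t).2)
    (fun u t => g u t * sin (νf u t)) (fun u t => β u t * cos (νf u t)) (hx2s.mono hsub)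
    (fun u t ht => hx2u u t (hIoo ht)) (fun u t ht => (hx2t u t (hIoo ht)).hasDerivAt (hnhds t ht))
  obtain ⟨hu, ht', shu, -, dhu, -, -⟩ := partials_exist h (sh.mono hsub)
  obtain ⟨huu, -, -, -, dhuu, -, -⟩ := partials_exist hu shu
  obtain ⟨gu, gt, -, -, dgu, dgt, -⟩ := partials_exist g (sg.mono hsub)
  obtain ⟨-, νt, -, -, -, dνt, -⟩ := partials_exist νf (hνs.mono hsub)
  have dβu : ∀ u, ∀ t ∈ Set.Ioo 0 T, HasDerivAt (fun u' => β u' t) (hu u t) u := by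
    intro u t ht
    simp only [hβ]
    exact (dhu u t ht).sub_const _
  have key : ∀ u, ∀ t ∈ Set.Ioo 0 T, gt u t = -(β u t * νu u t) ∧ g u t * νt u t = hu u t := by
    intro u t ht
    obtain ⟨p, hp1, hp2⟩ := m1 u t ht
    obtain ⟨q, hq1, hq2⟩ := m2 u t ht
    have a1 := hp1.unique ((dgt u t ht).mul (dνt u t ht).cos)
    have a2 := hp2.unique ((dβu u t ht).mul (hνu u t (hIoo ht)).sin.neg)
    have b1 := hq1.unique ((dgt u t ht).mul (dνt u t ht).sin)
    have b2 := hq2.unique ((dβu u t ht).mul (hνu u t (hIoo ht)).cos)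
    have E1 := a1.symm.trans a2
    have E2 := b1.symm.trans b2
    have tr := sin_sq_add_cos_sq (νf u t)
    constructor
    · linear_combination cos (νf u t) * E1 + sin (νf u t) * E2 -
        (gt u t + β u t * νu u t) * tr
    · linear_combination cos (νf u t) * E2 - sin (νf u t) * E1 -
        (g u t * νt u t - hu u t) * tr
  have mν := mixed νf νu νt (hνs.mono hsub) (fun u t ht => hνu u t (hIoo ht)) dνt
  have step : ∀ t ∈ Set.Ioo 0 T, ∀ u, IsLocalMin (fun u' => h u' t) u →
      ∃ d, HasDerivAt (fun t' => h u t') d t ∧ β u t * (νu u t / g u t) * h u t ≤ d := by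
    intro t ht u hmin
    have hg0 := hg u t (hIoo ht)
    have hu0 : hu u t = 0 := hmin.hasDerivAt_eq_zero (dhu u t ht)
    have huu0 : 0 ≤ huu u t := second_deriv_nonneg_of_localMin (fun u' => h u' t)
      (fun u' => hu u' t) _ u (fun v => dhu v t ht) (dhuu u t ht) hmin
    obtain ⟨m, hm1, hm2⟩ := mν u t ht
    have hm3 : HasDerivAt (fun u' => g u' t * νt u' t) (huu u t) u := by
      have e : (fun u' => g u' t * νt u' t) = fun u' => hu u' t :=
        funext fun v => (key v t ht).2
      rw [e]; exact dhuu u t ht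
    have hνt0 : νt u t = 0 := by
      have := (key u t ht).2
      rw [hu0] at this
      exact (mul_eq_zero.mp this).resolve_left hg0.ne'
    have hmm : g u t * m = huu u t := by
      have := hm3.unique ((dgu u t ht).mul hm2)
      rw [hνt0] at this
      linarith
    have hm0 : 0 ≤ m := by
      by_contra hc
      push Not at hc
      nlinarith
    have hda : HasDerivAt (fun t' => a (νf u t')) 0 t := by
      have h1 := ((has.differentiable (by norm_num)) (νf u t)).hasDerivAt.comp t (dνt u t ht)
      rw [hνt0, mul_zero] at h1
      exact h1
    have hdh := hda.mul (hm1.div (dgt u t ht) hg0.ne')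
    have e : (fun t' => h u t') = fun t' => a (νf u t') * (νu u t' / g u t') :=
      funext fun t' => hh u t'
    refine ⟨_, by rw [e]; exact hdh, ?_⟩
    rw [(key u t ht).1, hh]
    have hapos := hσconv (νf u t)
    have : 0 ≤ a (νf u t) * m / g u t := by positivity
    refine le_of_sub_nonneg (this.trans_eq ?_)
    simp only [Pi.div_apply]
    field_simp
    ring
  intro s hs u
  have hsubI : Set.Icc t₀ s ⊆ Set.Ico 0 T := fun r hr => ⟨ht₀.1.trans hr.1, hr.2.trans_lt hs.2⟩
  have hsub2 : ((Set.univ : Set ℝ) ×ˢ Set.Icc t₀ s) ⊆ Set.univ ×ˢ Set.Ico (0:ℝ) T :=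
    Set.prod_mono subset_rfl hsubI
  have hfin := min_principle h (fun u t => β u t * (νu u t / g u t)) t₀ s
    (sh.continuousOn.mono hsub2) (sC.continuousOn.mono hsub2)
    (fun u t ht => ph u t (hsubI ht))
    (fun u => by rw [hh]; exact mul_pos (hσconv _) (hconv u))
    (fun t ht u hm => step t ⟨ht₀.1.trans_lt ht.1, ht.2.trans_lt hs.2⟩ u hm)
    s ⟨hs.1, le_rfl⟩ u
  rw [hh] at hfin
  exact (mul_pos_iff_of_pos_left (hσconv _)).mp hfin
end

section
/- Gradient flow property of the anisoperimetric ratio: let σ be an anisotropy function with 1-homogeneous extension Φ(ρ cos θ, ρ sin θ) = ρσ(θ), let x be a smooth closed curve with A(x) > 0, and define the anisoperimetric ratio Π_σ(x) = L_σ(x)²/(4|W_σ|·A(x)) with L_σ(x) = ∫₀¹ Φ(x'(u)) du and A(x) = (1/2)∫₀¹ det(x(u), x'(u)) du. Then for any smooth 1-periodic variation y : ℝ → ℝ², (d/dε)|_{ε=0} Π_σ(x + εy) = −(L_σ/(2|W_σ|A))·∫₀¹ (k_σ(u) − L_σ/(2A))·(N(u)·y(u))·|x'(u)| du. In particular, if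 the normal component of y is N·y = k_σ − L_σ/(2A), then (d/dε)|_{ε=0} Π_σ(x + εy) = −(L_σ/(2|W_σ|A))·∫₀¹ (k_σ − L_σ/(2A))²·|x'| du ≤ 0, with equality if and only if k_σ ≡ L_σ/(2A) along the curve. -/
open Real

/-- Anisotropic length `L_σ(Γ) = ∫₀¹ σ(ν(u)) g(u) du` of a curve with speed `g` and
tangent-angle lift `ν`. -/
noncomputable def aLenC (σ : ℝ → ℝ) (g ν : ℝ → ℝ) : ℝ :=
  ∫ u in (0:ℝ)..1, σ (ν u) * g u

/-- Enclosed area `A = (1/2)∫₀¹ det(x, x') du`, with `x' = g·(cos ν, sin ν)`. -/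
noncomputable def areaC (x : ℝ → ℝ × ℝ) (g ν : ℝ → ℝ) : ℝ :=
  (1 / 2) * ∫ u in (0:ℝ)..1,
    ((x u).1 * (g u * Real.sin (ν u)) - (x u).2 * (g u * Real.cos (ν u)))

/-- The anisotropic curvature `k_σ = (σ(ν)+σ''(ν))·k` with `k = ν'/g`. -/
noncomputable def anisoCurv (σ : ℝ → ℝ) (g ν : ℝ → ℝ) (u : ℝ) : ℝ :=
  (σ (ν u) + deriv (deriv σ) (ν u)) * (deriv ν u / g u)

lemma aux_param (H D : ℝ → ℝ → ℝ) (δ : ℝ) (hδ : 0 < δ)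
    (hH : ContinuousOn (Function.uncurry H) (Set.Icc (-δ) δ ×ˢ Set.Icc 0 1))
    (hD : ContinuousOn (Function.uncurry D) (Set.Icc (-δ) δ ×ˢ Set.Icc 0 1))
    (hder : ∀ ε ∈ Set.Icc (-δ) δ, ∀ u ∈ Set.Icc (0:ℝ) 1,
      HasDerivAt (fun e => H e u) (D ε u) ε) :
    HasDerivAt (fun ε => ∫ u in (0:ℝ)..1, H ε u) (∫ u in (0:ℝ)..1, D 0 u) 0 := by
  obtain ⟨C, hC⟩ := (isCompact_Icc.prod isCompact_Icc).exists_bound_of_continuousOn hD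
  have hslice : ∀ F : ℝ → ℝ → ℝ,
      ContinuousOn (Function.uncurry F) (Set.Icc (-δ) δ ×ˢ Set.Icc 0 1) →
      ∀ ε ∈ Set.Icc (-δ) δ, IntervalIntegrable (F ε) MeasureTheory.volume 0 1 := by
    intro F hF ε hε
    apply ContinuousOn.intervalIntegrable
    rw [Set.uIcc_of_le zero_le_one]
    exact hF.comp (f := fun u => (ε, u)) (by fun_prop) (fun u hu => ⟨hε, hu⟩)
  have hsub : Set.Ioo (-δ) δ ⊆ Set.Icc (-δ) δ := Set.Ioo_subset_Icc_self
  have hnb : Set.Ioo (-δ) δ ∈ nhds (0:ℝ) := Ioo_mem_nhds (by linarith) hδ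
  have h0 : (0:ℝ) ∈ Set.Icc (-δ) δ := ⟨by linarith, hδ.le⟩
  have huI : Set.uIoc (0:ℝ) 1 ⊆ Set.Icc 0 1 := by
    rw [Set.uIoc_of_le zero_le_one]; exact Set.Ioc_subset_Icc_self
  refine (intervalIntegral.hasDerivAt_integral_of_dominated_loc_of_deriv_le
    (bound := fun _ => C) (F := H) (F' := D) hnb ?_ (hslice H hH 0 h0) ?_ ?_ ?_ ?_).2
  · filter_upwards [hnb] with ε hε
    have := (hslice H hH ε (hsub hε)).aestronglyMeasurable
    rwa [Set.uIoc_of_le zero_le_one]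
  · have := (hslice D hD 0 h0).aestronglyMeasurable
    rwa [Set.uIoc_of_le zero_le_one]
  · filter_upwards with u hu ε hε
    exact hC (ε, u) ⟨hsub hε, huI hu⟩
  · exact intervalIntegrable_const
  · filter_upwards with u hu ε hε
    exact hder ε (hsub hε) u (huI hu)

lemma aux_polar (a b : ℝ) (ha : 0 < a) :
    √(a ^ 2 + b ^ 2) * cos (arctan (b / a)) = a ∧
    √(a ^ 2 + b ^ 2) * sin (arctan (b / a)) = b := by
  have h : √(a ^ 2 + b ^ 2) = a * √(1 + (b / a) ^ 2) := by
    rw [show a ^ 2 + b ^ 2 = a ^ 2 * (1 + (b / a) ^ 2) by field_simp,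
      Real.sqrt_mul (by positivity), Real.sqrt_sq ha.le]
  have h1 : √(1 + (b / a) ^ 2) ≠ 0 := by positivity
  rw [h, Real.cos_arctan, Real.sin_arctan]
  constructor <;> field_simp

lemma aux_phi (σ : ℝ → ℝ) (Φ : ℝ × ℝ → ℝ)
    (hΦ : ∀ ρ : ℝ, 0 < ρ → ∀ θ : ℝ, Φ (ρ * Real.cos θ, ρ * Real.sin θ) = ρ * σ θ)
    (n a b : ℝ) (ha : 0 < a) :
    Φ (a * cos n - b * sin n, a * sin n + b * cos n) =
      √(a ^ 2 + b ^ 2) * σ (n + arctan (b / a)) := by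
  obtain ⟨h1, h2⟩ := aux_polar a b ha
  rw [← hΦ _ (by positivity)]
  rw [Real.cos_add, Real.sin_add]
  congr 2
  · linear_combination (-cos n) * h1 + sin n * h2
  · linear_combination (-sin n) * h1 - cos n * h2

lemma aux_len (σ : ℝ → ℝ) (hσs : ContDiff ℝ (⊤ : ℕ∞) σ) (g ν p q : ℝ → ℝ)
    (hgc : Continuous g) (hνc : Continuous ν) (hp : Continuous p) (hq : Continuous q)
    (hg : ∀ u, 0 < g u) :
    ∃ δ > 0, (∀ ε ∈ Set.Icc (-δ) δ, ∀ u ∈ Set.Icc (0:ℝ) 1, 0 < g u + ε * p u) ∧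
    HasDerivAt (fun ε => ∫ u in (0:ℝ)..1,
      √((g u + ε * p u) ^ 2 + (ε * q u) ^ 2) * σ (ν u + arctan (ε * q u / (g u + ε * p u))))
      (∫ u in (0:ℝ)..1, (p u * σ (ν u) + q u * deriv σ (ν u))) 0 := by
  have hσc : Continuous σ := hσs.continuous
  have hσd : Differentiable ℝ σ := hσs.differentiable (by simp)
  have hσ'c : Continuous (deriv σ) := hσs.continuous_deriv (by simp)
  obtain ⟨u0, _, hu0⟩ := isCompact_Icc.exists_isMinOn (Set.nonempty_Icc.2 zero_le_one)
    (hgc.continuousOn (s := Set.Icc (0:ℝ) 1))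
  obtain ⟨M, hM⟩ := isCompact_Icc.exists_bound_of_continuousOn
    (hp.continuousOn (s := Set.Icc (0:ℝ) 1))
  have hM0 : 0 ≤ M := (norm_nonneg _).trans (hM 0 ⟨le_rfl, zero_le_one⟩)
  have hm := hg u0
  set δ := g u0 / (M + 1) with hδdef
  have hδ : 0 < δ := by positivity
  have hδM : δ * (M + 1) = g u0 := by rw [hδdef]; field_simp
  have hpos : ∀ ε ∈ Set.Icc (-δ) δ, ∀ u ∈ Set.Icc (0:ℝ) 1, 0 < g u + ε * p u := by
    intro ε hε u hu
    have h1 : g u0 ≤ g u := hu0 hu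
    have h2 : |p u| ≤ M := hM u hu
    have h3 : |ε| ≤ δ := abs_le.2 hε
    have h4 : |ε * p u| ≤ δ * M := by rw [abs_mul]; gcongr
    have := neg_abs_le (ε * p u)
    nlinarith
  refine ⟨δ, hδ, hpos, ?_⟩
  have key := aux_param
    (fun ε u => √((g u + ε * p u) ^ 2 + (ε * q u) ^ 2) *
      σ (ν u + arctan (ε * q u / (g u + ε * p u))))
    (fun ε u =>
      ((2 * (g u + ε * p u) * p u + 2 * (ε * q u) * q u) /
        (2 * √((g u + ε * p u) ^ 2 + (ε * q u) ^ 2))) *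
        σ (ν u + arctan (ε * q u / (g u + ε * p u))) +
      √((g u + ε * p u) ^ 2 + (ε * q u) ^ 2) *
        (deriv σ (ν u + arctan (ε * q u / (g u + ε * p u))) *
          (1 / (1 + (ε * q u / (g u + ε * p u)) ^ 2) *
            ((q u * (g u + ε * p u) - ε * q u * p u) / (g u + ε * p u) ^ 2)))) δ hδ ?_ ?_ ?_
  · refine key.congr_deriv ?_
    symm
    apply intervalIntegral.integral_congr
    intro u _
    have := hg u
    simp only [zero_mul, add_zero, zero_div, Real.arctan_zero, sub_zero, mul_zero]
    rw [show g u ^ 2 + (0:ℝ) ^ 2 = g u ^ 2 by ring, Real.sqrt_sq this.le]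
    field_simp
    simp
  · intro z hz
    have h1 := hpos z.1 hz.1 z.2 hz.2
    have h1' : g z.2 + z.1 * p z.2 ≠ 0 := h1.ne'
    apply ContinuousAt.continuousWithinAt
    unfold Function.uncurry
    fun_prop (disch := assumption)
  · intro z hz
    have h1 := hpos z.1 hz.1 z.2 hz.2
    have h1' : g z.2 + z.1 * p z.2 ≠ 0 := h1.ne'
    have h2 : (g z.2 + z.1 * p z.2) ^ 2 ≠ 0 := by positivity
    have h3 : 2 * √((g z.2 + z.1 * p z.2) ^ 2 + (z.1 * q z.2) ^ 2) ≠ 0 := by positivity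
    have h4 : 1 + (z.1 * q z.2 / (g z.2 + z.1 * p z.2)) ^ 2 ≠ 0 := by positivity
    apply ContinuousAt.continuousWithinAt
    unfold Function.uncurry
    fun_prop (disch := assumption)
  · intro ε hε u hu
    have h1 := hpos ε hε u hu
    have ha : HasDerivAt (fun e => g u + e * p u) (p u) ε := by
      simpa using ((hasDerivAt_id ε).mul_const (p u)).const_add (g u)
    have hb : HasDerivAt (fun e => e * q u) (q u) ε := by
      simpa using (hasDerivAt_id ε).mul_const (q u)
    have hs : HasDerivAt (fun e => (g u + e * p u) ^ 2 + (e * q u) ^ 2)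
        (2 * (g u + ε * p u) * p u + 2 * (ε * q u) * q u) ε := by
      refine HasDerivAt.congr_deriv (f' := _) ((ha.pow 2).add (hb.pow 2)) ?_
      simp
    have hne : (g u + ε * p u) ^ 2 + (ε * q u) ^ 2 ≠ 0 := by positivity
    have hr := hs.sqrt hne
    have ht := ((hb.div ha h1.ne').arctan).const_add (ν u)
    have hσt := (hσd _).hasDerivAt.comp ε ht
    exact hr.mul hσt

lemma aux_parts (σ : ℝ → ℝ) (hσs : ContDiff ℝ (⊤ : ℕ∞) σ)
    (hσper : ∀ ν, σ (ν + 2 * π) = σ ν) (ν : ℝ → ℝ)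
    (hν : ContDiff ℝ (⊤ : ℕ∞) ν) (hνper : ∀ u, ν (u + 1) = ν u + 2 * π)
    (y1 y2 : ℝ → ℝ) (hy1 : ContDiff ℝ (⊤ : ℕ∞) y1) (hy2 : ContDiff ℝ (⊤ : ℕ∞) y2)
    (hp1 : y1 1 = y1 0) (hp2 : y2 1 = y2 0) :
    (∫ u in (0:ℝ)..1, ((deriv y1 u * cos (ν u) + deriv y2 u * sin (ν u)) * σ (ν u) +
      (-(deriv y1 u * sin (ν u)) + deriv y2 u * cos (ν u)) * deriv σ (ν u))) =
    -∫ u in (0:ℝ)..1, (σ (ν u) + deriv (deriv σ) (ν u)) * deriv ν u *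
      (-sin (ν u) * y1 u + cos (ν u) * y2 u) := by
  have hσ1 : ContDiff ℝ (⊤ : ℕ∞) (deriv σ) := (contDiff_infty_iff_deriv.1 hσs).2
  have hσ2 : ContDiff ℝ (⊤ : ℕ∞) (deriv (deriv σ)) := (contDiff_infty_iff_deriv.1 hσ1).2
  have cσ := hσs.continuous
  have cσ1 := hσ1.continuous
  have cσ2 := hσ2.continuous
  have cν := hν.continuous
  have cν1 := ((contDiff_infty_iff_deriv.1 hν).2).continuous
  have cy1 := hy1.continuous
  have cy2 := hy2.continuous
  have cy1' := ((contDiff_infty_iff_deriv.1 hy1).2).continuous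
  have cy2' := ((contDiff_infty_iff_deriv.1 hy2).2).continuous
  have hσ'per : ∀ n, deriv σ (n + 2 * π) = deriv σ n := by
    intro n
    rw [← deriv_comp_add_const]
    congr 1
    funext m
    exact hσper m
  have hder : ∀ u, HasDerivAt (fun u => (y1 u * cos (ν u) + y2 u * sin (ν u)) * σ (ν u) +
      (-(y1 u * sin (ν u)) + y2 u * cos (ν u)) * deriv σ (ν u))
      (((deriv y1 u * cos (ν u) + deriv y2 u * sin (ν u)) * σ (ν u) +
      (-(deriv y1 u * sin (ν u)) + deriv y2 u * cos (ν u)) * deriv σ (ν u)) +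
      (σ (ν u) + deriv (deriv σ) (ν u)) * deriv ν u *
      (-sin (ν u) * y1 u + cos (ν u) * y2 u)) u := by
    intro u
    have d1 := (hy1.differentiable (by simp) u).hasDerivAt
    have d2 := (hy2.differentiable (by simp) u).hasDerivAt
    have dν := (hν.differentiable (by simp) u).hasDerivAt
    have dσ := (hσs.differentiable (by simp) (ν u)).hasDerivAt.comp u dν
    have dσ1 := (hσ1.differentiable (by simp) (ν u)).hasDerivAt.comp u dν
    have := (((d1.mul dν.cos).add (d2.mul dν.sin)).mul dσ).add
      ((((d1.mul dν.sin).neg).add (d2.mul dν.cos)).mul dσ1)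
    refine HasDerivAt.congr_deriv this ?_
    simp only [Function.comp, Pi.add_apply, Pi.mul_apply, Pi.neg_apply]
    ring
  have h := intervalIntegral.integral_eq_sub_of_hasDerivAt (a := 0) (b := 1)
    (fun u _ => hder u) (Continuous.intervalIntegrable (by fun_prop) _ _)
  have hν1 : ν 1 = ν 0 + 2 * π := by simpa using hνper 0
  rw [intervalIntegral.integral_add (Continuous.intervalIntegrable (by fun_prop) _ _)
    (Continuous.intervalIntegrable (by fun_prop) _ _)] at h
  simp only [hν1, hp1, hp2, hσper, hσ'per, Real.cos_add_two_pi, Real.sin_add_two_pi, sub_self] at h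
  linarith

lemma aux_area (x1 x2 y1 y2 : ℝ → ℝ)
    (hx1 : ContDiff ℝ (⊤ : ℕ∞) x1) (hx2 : ContDiff ℝ (⊤ : ℕ∞) x2)
    (hy1 : ContDiff ℝ (⊤ : ℕ∞) y1) (hy2 : ContDiff ℝ (⊤ : ℕ∞) y2)
    (hpx1 : x1 1 = x1 0) (hpx2 : x2 1 = x2 0)
    (hp1 : y1 1 = y1 0) (hp2 : y2 1 = y2 0) :
    HasDerivAt (fun ε : ℝ => (1 / 2) * ∫ u in (0:ℝ)..1,
      ((x1 u + ε * y1 u) * (deriv x2 u + ε * deriv y2 u) -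
        (x2 u + ε * y2 u) * (deriv x1 u + ε * deriv y1 u)))
      (∫ u in (0:ℝ)..1, (y1 u * deriv x2 u - y2 u * deriv x1 u)) 0 := by
  have cy1 := hy1.continuous
  have cy2 := hy2.continuous
  have cy1' := ((contDiff_infty_iff_deriv.1 hy1).2).continuous
  have cy2' := ((contDiff_infty_iff_deriv.1 hy2).2).continuous
  have cx1 := hx1.continuous
  have cx2 := hx2.continuous
  have cx1' := ((contDiff_infty_iff_deriv.1 hx1).2).continuous
  have cx2' := ((contDiff_infty_iff_deriv.1 hx2).2).continuous
  have key := aux_param (fun ε u => (x1 u + ε * y1 u) * (deriv x2 u + ε * deriv y2 u) -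
        (x2 u + ε * y2 u) * (deriv x1 u + ε * deriv y1 u))
      (fun ε u => y1 u * (deriv x2 u + ε * deriv y2 u) + (x1 u + ε * y1 u) * deriv y2 u -
        (y2 u * (deriv x1 u + ε * deriv y1 u) + (x2 u + ε * y2 u) * deriv y1 u)) 1 one_pos
      (by apply Continuous.continuousOn; unfold Function.uncurry; fun_prop)
      (by apply Continuous.continuousOn; unfold Function.uncurry; fun_prop)
      (by
        intro ε _ u _
        have hl : ∀ a b : ℝ, HasDerivAt (fun e => a + e * b) b ε := fun a b => by
          simpa using ((hasDerivAt_id ε).mul_const b).const_add a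
        exact ((hl _ _).mul (hl _ _)).sub ((hl _ _).mul (hl _ _)))
  refine (key.const_mul (1 / 2)).congr_deriv ?_
  have hder : ∀ u, HasDerivAt (fun u => x1 u * y2 u - x2 u * y1 u)
      ((deriv x1 u * y2 u + x1 u * deriv y2 u) - (deriv x2 u * y1 u + x2 u * deriv y1 u)) u := by
    intro u
    have d1 := (hy1.differentiable (by simp) u).hasDerivAt
    have d2 := (hy2.differentiable (by simp) u).hasDerivAt
    have e1 := (hx1.differentiable (by simp) u).hasDerivAt
    have e2 := (hx2.differentiable (by simp) u).hasDerivAt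
    exact (e1.mul d2).sub (e2.mul d1)
  have h := intervalIntegral.integral_eq_sub_of_hasDerivAt (a := 0) (b := 1)
    (fun u _ => hder u) (Continuous.intervalIntegrable (by fun_prop) _ _)
  simp only [hpx1, hpx2, hp1, hp2, sub_self] at h
  have h2 : (∫ u in (0:ℝ)..1, (y1 u * (deriv x2 u + 0 * deriv y2 u) + (x1 u + 0 * y1 u) * deriv y2 u -
        (y2 u * (deriv x1 u + 0 * deriv y1 u) + (x2 u + 0 * y2 u) * deriv y1 u))) =
      (∫ u in (0:ℝ)..1, 2 * (y1 u * deriv x2 u - y2 u * deriv x1 u)) +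
      ∫ u in (0:ℝ)..1,
      ((deriv x1 u * y2 u + x1 u * deriv y2 u) - (deriv x2 u * y1 u + x2 u * deriv y1 u)) := by
    rw [← intervalIntegral.integral_add (Continuous.intervalIntegrable (by fun_prop) _ _)
      (Continuous.intervalIntegrable (by fun_prop) _ _)]
    apply intervalIntegral.integral_congr
    intro u _
    simp only
    ring
  rw [h2, h, intervalIntegral.integral_const_mul]
  ring

/-- Gradient flow property of the anisoperimetric ratio
`Π_σ(x) = L_σ(x)²/(4|W_σ|·A(x))`: for every smooth 1-periodic variation `y`,
`(d/dε)|₀ Π_σ(x+εy) = −(L_σ/(2|W_σ|A))·∫₀¹ (k_σ − L_σ/(2A))·(N·y)·g du`; in particular,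
if `N·y = k_σ − L_σ/(2A)` then the derivative equals
`−(L_σ/(2|W_σ|A))·∫₀¹ (k_σ − L_σ/(2A))²·g du ≤ 0` with equality iff
`k_σ ≡ L_σ/(2A)` along the curve. -/
theorem anisoperimetric_ratio_gradient_flow
    (σ : ℝ → ℝ)
    (hσs : ContDiff ℝ (⊤ : ℕ∞) σ) (hσper : ∀ ν, σ (ν + 2 * π) = σ ν)
    (hσpos : ∀ ν, 0 < σ ν) (hσconv : ∀ ν, 0 < σ ν + deriv (deriv σ) ν)
    (Φ : ℝ × ℝ → ℝ)
    (hΦ : ∀ ρ : ℝ, 0 < ρ → ∀ θ : ℝ, Φ (ρ * Real.cos θ, ρ * Real.sin θ) = ρ * σ θ)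
    -- a smooth closed curve `x` with speed `g` and smooth tangent-angle lift `ν`
    (x : ℝ → ℝ × ℝ) (g ν : ℝ → ℝ)
    (hx : ContDiff ℝ (⊤ : ℕ∞) x)
    (hxper : ∀ u, x (u + 1) = x u)
    (hg : ∀ u, 0 < g u)
    (htang : ∀ u, HasDerivAt x (g u • ((Real.cos (ν u), Real.sin (ν u)) : ℝ × ℝ)) u)
    (hν : ContDiff ℝ (⊤ : ℕ∞) ν)
    (hνper : ∀ u, ν (u + 1) = ν u + 2 * π)
    (hA : 0 < areaC x g ν) :
    (∀ y : ℝ → ℝ × ℝ, ContDiff ℝ (⊤ : ℕ∞) y → (∀ u, y (u + 1) = y u) →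
      HasDerivAt (fun ε : ℝ =>
          (∫ u in (0:ℝ)..1, Φ (deriv x u + ε • deriv y u)) ^ 2 /
            (4 * wulffArea σ * ((1 / 2) * ∫ u in (0:ℝ)..1,
              ((x u + ε • y u).1 * (deriv x u + ε • deriv y u).2 -
                (x u + ε • y u).2 * (deriv x u + ε • deriv y u).1))))
        (-(aLenC σ g ν / (2 * wulffArea σ * areaC x g ν)) *
          ∫ u in (0:ℝ)..1,
            (anisoCurv σ g ν u - aLenC σ g ν / (2 * areaC x g ν)) *
              ((-Real.sin (ν u)) * (y u).1 + Real.cos (ν u) * (y u).2) * g u) 0) ∧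
    (∀ y : ℝ → ℝ × ℝ, ContDiff ℝ (⊤ : ℕ∞) y → (∀ u, y (u + 1) = y u) →
      (∀ u, (-Real.sin (ν u)) * (y u).1 + Real.cos (ν u) * (y u).2 =
        anisoCurv σ g ν u - aLenC σ g ν / (2 * areaC x g ν)) →
      HasDerivAt (fun ε : ℝ =>
          (∫ u in (0:ℝ)..1, Φ (deriv x u + ε • deriv y u)) ^ 2 /
            (4 * wulffArea σ * ((1 / 2) * ∫ u in (0:ℝ)..1,
              ((x u + ε • y u).1 * (deriv x u + ε • deriv y u).2 -
                (x u + ε • y u).2 * (deriv x u + ε • deriv y u).1))))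
        (-(aLenC σ g ν / (2 * wulffArea σ * areaC x g ν)) *
          ∫ u in (0:ℝ)..1,
            (anisoCurv σ g ν u - aLenC σ g ν / (2 * areaC x g ν)) ^ 2 * g u) 0 ∧
      (-(aLenC σ g ν / (2 * wulffArea σ * areaC x g ν)) *
          ∫ u in (0:ℝ)..1,
            (anisoCurv σ g ν u - aLenC σ g ν / (2 * areaC x g ν)) ^ 2 * g u) ≤ 0 ∧
      ((-(aLenC σ g ν / (2 * wulffArea σ * areaC x g ν)) *
          ∫ u in (0:ℝ)..1,
            (anisoCurv σ g ν u - aLenC σ g ν / (2 * areaC x g ν)) ^ 2 * g u) = 0 ↔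
        ∀ u : ℝ, anisoCurv σ g ν u = aLenC σ g ν / (2 * areaC x g ν))) := by
  have hσ1 : ContDiff ℝ (⊤ : ℕ∞) (deriv σ) := (contDiff_infty_iff_deriv.1 hσs).2
  have hσ2 : ContDiff ℝ (⊤ : ℕ∞) (deriv (deriv σ)) := (contDiff_infty_iff_deriv.1 hσ1).2
  have cσ := hσs.continuous
  have cσ2 := hσ2.continuous
  have cν := hν.continuous
  have cν1 := ((contDiff_infty_iff_deriv.1 hν).2).continuous
  have hdx : ∀ u, deriv x u = (g u * cos (ν u), g u * sin (ν u)) := fun u => by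
    rw [(htang u).deriv]; simp
  have hx1 : ContDiff ℝ (⊤ : ℕ∞) (fun u => (x u).1) := contDiff_fst.comp hx
  have hx2 : ContDiff ℝ (⊤ : ℕ∞) (fun u => (x u).2) := contDiff_snd.comp hx
  have hdx1 : ∀ u, deriv (fun u => (x u).1) u = g u * cos (ν u) := fun u => by
    have h := (htang u).hasFDerivAt.fst.hasDerivAt.deriv
    simpa using h
  have hdx2 : ∀ u, deriv (fun u => (x u).2) u = g u * sin (ν u) := fun u => by
    have h := (htang u).hasFDerivAt.snd.hasDerivAt.deriv
    simpa using h
  have cg : Continuous g := by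
    have h1 := ((contDiff_infty_iff_deriv.1 hx1).2).continuous
    have h2 := ((contDiff_infty_iff_deriv.1 hx2).2).continuous
    have : g = fun u => deriv (fun u => (x u).1) u * cos (ν u) +
        deriv (fun u => (x u).2) u * sin (ν u) := by
      funext u
      rw [hdx1, hdx2]
      linear_combination (-g u) * Real.sin_sq_add_cos_sq (ν u)
    rw [this]
    fun_prop
  have cK : Continuous (anisoCurv σ g ν) := by
    have hne : ∀ u, g u ≠ 0 := fun u => (hg u).ne'
    unfold anisoCurv
    fun_prop (disch := assumption)
  have hW : 0 < wulffArea σ := by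
    unfold wulffArea
    have : 0 < ∫ ν in (0:ℝ)..(2 * π), σ ν * (σ ν + deriv (deriv σ) ν) := by
      apply intervalIntegral.intervalIntegral_pos_of_pos
      · exact Continuous.intervalIntegrable (by fun_prop) _ _
      · intro u; exact mul_pos (hσpos u) (hσconv u)
      · positivity
    positivity
  have hL : 0 < aLenC σ g ν := by
    unfold aLenC
    apply intervalIntegral.intervalIntegral_pos_of_pos
    · exact Continuous.intervalIntegrable (by fun_prop) _ _
    · intro u; exact mul_pos (hσpos _) (hg u)
    · exact one_pos
  have first : ∀ y : ℝ → ℝ × ℝ, ContDiff ℝ (⊤ : ℕ∞) y → (∀ u, y (u + 1) = y u) →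
      HasDerivAt (fun ε : ℝ =>
          (∫ u in (0:ℝ)..1, Φ (deriv x u + ε • deriv y u)) ^ 2 /
            (4 * wulffArea σ * ((1 / 2) * ∫ u in (0:ℝ)..1,
              ((x u + ε • y u).1 * (deriv x u + ε • deriv y u).2 -
                (x u + ε • y u).2 * (deriv x u + ε • deriv y u).1))))
        (-(aLenC σ g ν / (2 * wulffArea σ * areaC x g ν)) *
          ∫ u in (0:ℝ)..1,
            (anisoCurv σ g ν u - aLenC σ g ν / (2 * areaC x g ν)) *
              ((-Real.sin (ν u)) * (y u).1 + Real.cos (ν u) * (y u).2) * g u) 0 := by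
    intro y hy hyper
    have hy1 : ContDiff ℝ (⊤ : ℕ∞) (fun u => (y u).1) := contDiff_fst.comp hy
    have hy2 : ContDiff ℝ (⊤ : ℕ∞) (fun u => (y u).2) := contDiff_snd.comp hy
    have cy1 := hy1.continuous
    have cy2 := hy2.continuous
    have cy1' := ((contDiff_infty_iff_deriv.1 hy1).2).continuous
    have cy2' := ((contDiff_infty_iff_deriv.1 hy2).2).continuous
    have hdy : ∀ u, HasDerivAt y (deriv y u) u := fun u =>
      (hy.differentiable (by simp) u).hasDerivAt
    have hdy1 : ∀ u, deriv (fun u => (y u).1) u = (deriv y u).1 := fun u => by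
      have h := (hdy u).hasFDerivAt.fst.hasDerivAt.deriv
      simpa using h
    have hdy2 : ∀ u, deriv (fun u => (y u).2) u = (deriv y u).2 := fun u => by
      have h := (hdy u).hasFDerivAt.snd.hasDerivAt.deriv
      simpa using h
    have hx10 : x 1 = x 0 := by simpa using hxper 0
    have hy10 : y 1 = y 0 := by simpa using hyper 0
    -- length
    obtain ⟨δ, hδ, hpos, hlen⟩ := aux_len σ hσs g ν
      (fun u => deriv (fun u => (y u).1) u * cos (ν u) + deriv (fun u => (y u).2) u * sin (ν u))
      (fun u => -(deriv (fun u => (y u).1) u * sin (ν u)) + deriv (fun u => (y u).2) u * cos (ν u))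
      cg cν (by fun_prop) (by fun_prop) hg
    rw [aux_parts σ hσs hσper ν hν hνper _ _ hy1 hy2 (by simp only [hy10]) (by simp only [hy10])]
      at hlen
    have hLd : HasDerivAt (fun ε : ℝ => ∫ u in (0:ℝ)..1, Φ (deriv x u + ε • deriv y u))
        (-∫ u in (0:ℝ)..1, (σ (ν u) + deriv (deriv σ) (ν u)) * deriv ν u *
          (-sin (ν u) * (y u).1 + cos (ν u) * (y u).2)) 0 := by
      refine hlen.congr_of_eventuallyEq ?_
      filter_upwards [Icc_mem_nhds (show -δ < 0 by linarith) hδ] with ε hε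
      apply intervalIntegral.integral_congr
      intro u hu
      rw [Set.uIcc_of_le zero_le_one] at hu
      have h := hpos ε hε u hu
      simp only at h ⊢
      rw [← aux_phi σ Φ hΦ _ _ _ h, hdx, hdy1, hdy2]
      congr 1
      ext
      · simp only [Prod.fst_add, Prod.smul_fst, smul_eq_mul]
        linear_combination (-(ε * (deriv y u).1)) * Real.sin_sq_add_cos_sq (ν u)
      · simp only [Prod.snd_add, Prod.smul_snd, smul_eq_mul]
        linear_combination (-(ε * (deriv y u).2)) * Real.sin_sq_add_cos_sq (ν u)
    -- area
    have harea := aux_area _ _ _ _ hx1 hx2 hy1 hy2 (by simp only [hx10]) (by simp only [hx10])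
      (by simp only [hy10]) (by simp only [hy10])
    simp only [hdx1, hdx2, hdy1, hdy2] at harea
    have hAd : HasDerivAt (fun ε : ℝ => (1 / 2) * ∫ u in (0:ℝ)..1,
              ((x u + ε • y u).1 * (deriv x u + ε • deriv y u).2 -
                (x u + ε • y u).2 * (deriv x u + ε • deriv y u).1))
        (∫ u in (0:ℝ)..1, ((y u).1 * (g u * sin (ν u)) - (y u).2 * (g u * cos (ν u)))) 0 := by
      simpa only [hdx, Prod.fst_add, Prod.snd_add, Prod.smul_fst, Prod.smul_snd, smul_eq_mul]
        using harea
    have hL0 : (∫ u in (0:ℝ)..1, Φ (deriv x u + (0:ℝ) • deriv y u)) = aLenC σ g ν := by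
      unfold aLenC
      apply intervalIntegral.integral_congr
      intro u _
      simp only [zero_smul, add_zero, hdx]
      rw [hΦ _ (hg u)]
      ring
    have hA0 : ((1 / 2) * ∫ u in (0:ℝ)..1,
              ((x u + (0:ℝ) • y u).1 * (deriv x u + (0:ℝ) • deriv y u).2 -
                (x u + (0:ℝ) • y u).2 * (deriv x u + (0:ℝ) • deriv y u).1)) = areaC x g ν := by
      unfold areaC
      simp only [zero_smul, add_zero, hdx]
    have hden := hAd.const_mul (4 * wulffArea σ)
    have hq := (hLd.pow 2).div hden (by simp only [hA0]; positivity)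
    refine HasDerivAt.congr_deriv hq ?_
    simp only [Pi.pow_apply, hL0, hA0]
    have hI : (∫ u in (0:ℝ)..1,
            (anisoCurv σ g ν u - aLenC σ g ν / (2 * areaC x g ν)) *
              ((-Real.sin (ν u)) * (y u).1 + Real.cos (ν u) * (y u).2) * g u) =
        (∫ u in (0:ℝ)..1, (σ (ν u) + deriv (deriv σ) (ν u)) * deriv ν u *
          (-sin (ν u) * (y u).1 + cos (ν u) * (y u).2)) +
        aLenC σ g ν / (2 * areaC x g ν) *
        ∫ u in (0:ℝ)..1, ((y u).1 * (g u * sin (ν u)) - (y u).2 * (g u * cos (ν u))) := by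
      rw [← intervalIntegral.integral_const_mul,
        ← intervalIntegral.integral_add (Continuous.intervalIntegrable (by fun_prop) _ _)
        (Continuous.intervalIntegrable (by fun_prop) _ _)]
      apply intervalIntegral.integral_congr
      intro u _
      have := (hg u).ne'
      simp only [anisoCurv]
      have h2 : deriv ν u = deriv ν u / g u * g u := by field_simp
      generalize aLenC σ g ν / (2 * areaC x g ν) = c
      linear_combination (-(σ (ν u) + deriv (deriv σ) (ν u)) *
        (-sin (ν u) * (y u).1 + cos (ν u) * (y u).2)) * h2
    rw [hI]
    have := hA.ne'
    have := hW.ne'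
    field_simp
    push_cast
    ring
  refine ⟨first, ?_⟩
  intro y hy hyper hN
  have hcont : Continuous (fun u =>
      (anisoCurv σ g ν u - aLenC σ g ν / (2 * areaC x g ν)) ^ 2 * g u) := by fun_prop
  have hnn : ∀ u, 0 ≤ (anisoCurv σ g ν u - aLenC σ g ν / (2 * areaC x g ν)) ^ 2 * g u :=
    fun u => mul_nonneg (sq_nonneg _) (hg u).le
  have hcoef : 0 < aLenC σ g ν / (2 * wulffArea σ * areaC x g ν) := by positivity
  have hint : 0 ≤ ∫ u in (0:ℝ)..1,
      (anisoCurv σ g ν u - aLenC σ g ν / (2 * areaC x g ν)) ^ 2 * g u :=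
    intervalIntegral.integral_nonneg zero_le_one fun u _ => hnn u
  refine ⟨?_, ?_, ?_, ?_⟩
  · have h := first y hy hyper
    simp only [hN] at h
    simpa only [sq] using h
  · have := mul_nonneg hcoef.le hint
    linarith
  · intro h
    have h0 : (∫ u in (0:ℝ)..1,
        (anisoCurv σ g ν u - aLenC σ g ν / (2 * areaC x g ν)) ^ 2 * g u) = 0 := by
      rcases mul_eq_zero.1 h with h | h
      · linarith
      · exact h
    have hper : Function.Periodic
        (fun u => anisoCurv σ g ν u - aLenC σ g ν / (2 * areaC x g ν)) 1 := by
      intro u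
      simp only [← hN, hyper, hνper, Real.cos_add_two_pi, Real.sin_add_two_pi]
    intro u
    obtain ⟨v, hv, huv⟩ := hper.exists_mem_Ico₀ one_pos u
    by_contra hne
    have hne' : anisoCurv σ g ν v - aLenC σ g ν / (2 * areaC x g ν) ≠ 0 := by
      rw [← huv]; exact sub_ne_zero.2 hne
    have := intervalIntegral.integral_pos zero_lt_one hcont.continuousOn
      (fun u _ => hnn u) ⟨v, Set.Ico_subset_Icc_self hv, mul_pos (by positivity) (hg v)⟩
    linarith
  · intro h
    simp [h]
end
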